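/- arXiv:1509.04689 — 5 statements merged into one kernel-verified Lean document; each statement's English description precedes it below -/
import Mathlib

section
/- Let k ≥ 1 and let X₁, …, X_k be real random variables forming a centered jointly Gaussian vector, i.e. there exist a matrix A ∈ M_{k×m}(ℝ) and independent standard real Gaussian random variables g₁, …, g_m with X_i = Σ_{j=1}^m A_{ij} g_j for every i. If k is odd then E[X₁ X₂ ⋯ X_k] = 0. If k = 2l is even then E[X₁ X₂ ⋯ X_k] = Σ_p Π_{m=1}^{l} E[X_{i_m} X_{j_m}], where the sum runs over all pairings p = {{i₁,j₁}, …, {i_l,j_l}} of the set {1, …, k} into l disjoint unordered pairs. -/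
open MeasureTheory ProbabilityTheory

/-- Gaussian moments. -/
noncomputable def wickM (n : ℕ) : ℝ := ∫ x : ℝ, x ^ n ∂(gaussianReal 0 1)

lemma wickM_eq (n : ℕ) :
    wickM n = iteratedDeriv n (fun t : ℝ => Real.exp (t ^ 2 / 2)) 0 := by
  have h := iteratedDeriv_mgf_zero (X := id) (μ := gaussianReal 0 1) (by simp) n
  rw [mgf_id_gaussianReal] at h
  simp only [zero_mul, NNReal.coe_one, one_mul, zero_add] at h
  rw [h]
  simp [wickM]

lemma wick_deriv (n : ℕ) (t : ℝ) :
    iteratedDeriv (n + 2) (fun t : ℝ => Real.exp (t ^ 2 / 2)) t =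
      t * iteratedDeriv (n + 1) (fun t : ℝ => Real.exp (t ^ 2 / 2)) t
        + (n + 1) * iteratedDeriv n (fun t : ℝ => Real.exp (t ^ 2 / 2)) t := by
  have hd : ∀ k (t : ℝ), HasDerivAt (iteratedDeriv k (fun t : ℝ => Real.exp (t ^ 2 / 2)))
      (iteratedDeriv (k + 1) (fun t : ℝ => Real.exp (t ^ 2 / 2)) t) t := by
    intro k t
    rw [iteratedDeriv_succ]
    have hc : ContDiff ℝ (⊤ : ℕ∞) (fun t : ℝ => Real.exp (t ^ 2 / 2)) := by fun_prop
    exact ((hc.differentiable_iteratedDeriv k (by exact_mod_cast WithTop.coe_lt_top _)) t).hasDerivAt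
  have h1 : iteratedDeriv 1 (fun t : ℝ => Real.exp (t ^ 2 / 2))
      = fun t => t * Real.exp (t ^ 2 / 2) := by
    funext t
    rw [iteratedDeriv_one]
    have : HasDerivAt (fun t : ℝ => Real.exp (t ^ 2 / 2))
      (Real.exp (t ^ 2 / 2) * ((2 : ℕ) * t ^ (2 - 1) / 2)) t := ((hasDerivAt_pow 2 t).div_const 2).exp
    rw [this.deriv]
    simp
    ring
  induction n generalizing t with
  | zero =>
    have h2 := hd 1 t
    have h3 := (hasDerivAt_id t).mul (hd 0 t)
    have h4 : iteratedDeriv 1 (fun t : ℝ => Real.exp (t ^ 2 / 2))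
        = id * iteratedDeriv 0 (fun t : ℝ => Real.exp (t ^ 2 / 2)) := by
      rw [h1]; funext t; simp
    rw [← h4] at h3
    rw [h2.unique h3]
    simp
    ring
  | succ n ih =>
    have h2 := hd (n + 2) t
    have h3 := ((hasDerivAt_id t).mul (hd (n + 1) t)).add ((hd n t).const_mul ((n : ℝ) + 1))
    have h4 : iteratedDeriv (n + 2) (fun t : ℝ => Real.exp (t ^ 2 / 2)) = _ := funext ih
    rw [h4] at h2
    rw [h2.unique h3]
    push_cast
    simp
    ring

lemma wickM_zero : wickM 0 = 1 := by simp [wickM]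
lemma wickM_one : wickM 1 = 0 := by simp [wickM]
lemma wickM_succ (n : ℕ) : wickM (n + 1) = n * wickM (n - 1) := by
  cases n with
  | zero => simp [wickM_one]
  | succ n => simp [wickM_eq, wick_deriv]

lemma wick_integrable_pow (n : ℕ) : Integrable (fun x : ℝ => x ^ n) (gaussianReal 0 1) := by
  have h := (memLp_id_gaussianReal (μ := 0) (v := 1) n)
  have := h.integrable_norm_pow'
  refine this.mono (by fun_prop) ?_
  simp

/-- The standard Gaussian measure on `ℝ^m`. -/
noncomputable def wickMu (m : ℕ) : Measure (Fin m → ℝ) := Measure.pi fun _ => gaussianReal 0 1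

lemma wick_monomial {m : ℕ} (s : Fin m →₀ ℕ) (c : ℝ) (x : Fin m → ℝ) :
    MvPolynomial.eval x (MvPolynomial.monomial s c) = c * ∏ i, x i ^ s i := by
  rw [MvPolynomial.eval_monomial, Finsupp.prod_fintype _ _ (by simp)]

lemma wick_integrable {m : ℕ} (p : MvPolynomial (Fin m) ℝ) :
    Integrable (fun x => MvPolynomial.eval x p) (wickMu m) := by
  induction p using MvPolynomial.induction_on' with
  | monomial s c =>
    simp only [wick_monomial]
    exact (Integrable.fintype_prod (f := fun i (x : ℝ) => x ^ s i)
      (fun i => wick_integrable_pow _)).const_mul c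
  | add p q hp hq =>
    simp only [map_add]
    exact hp.add hq

/-- Gaussian expectation of a polynomial. -/
noncomputable def wickL (m : ℕ) : MvPolynomial (Fin m) ℝ →ₗ[ℝ] ℝ where
  toFun p := ∫ x, MvPolynomial.eval x p ∂(wickMu m)
  map_add' p q := by
    simp only [map_add]
    exact integral_add (wick_integrable p) (wick_integrable q)
  map_smul' c p := by
    simp [MvPolynomial.smul_eval, integral_const_mul]

lemma wickL_monomial {m : ℕ} (s : Fin m →₀ ℕ) (c : ℝ) :
    wickL m (MvPolynomial.monomial s c) = c * ∏ i, wickM (s i) := by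
  simp only [wickL, LinearMap.coe_mk, AddHom.coe_mk, wick_monomial, integral_const_mul, wickMu]
  rw [integral_fintype_prod_eq_prod (f := fun i (x : ℝ) => x ^ s i)]
  rfl

lemma wickL_one {m : ℕ} : wickL m 1 = 1 := by
  have := wickL_monomial (m := m) 0 1
  simpa [wickM_zero] using this

lemma wick_stein {m : ℕ} (j : Fin m) (p : MvPolynomial (Fin m) ℝ) :
    wickL m (MvPolynomial.X j * p) = wickL m (MvPolynomial.pderiv j p) := by
  induction p using MvPolynomial.induction_on' with
  | monomial s c =>
    rw [MvPolynomial.pderiv_monomial, MvPolynomial.X, MvPolynomial.monomial_mul,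
      wickL_monomial, wickL_monomial, ← Finset.mul_prod_erase _ _ (Finset.mem_univ j),
      ← Finset.mul_prod_erase _ (fun i => wickM ((s - Finsupp.single j 1 : Fin m →₀ ℕ) i)) (Finset.mem_univ j)]
    have h1 : ∏ i ∈ Finset.univ.erase j, wickM ((Finsupp.single j 1 + s : Fin m →₀ ℕ) i)
        = ∏ i ∈ Finset.univ.erase j, wickM (s i) := by
      refine Finset.prod_congr rfl fun i hi => ?_
      rw [Finsupp.add_apply, Finsupp.single_eq_of_ne (Finset.ne_of_mem_erase hi), zero_add]
    have h2 : ∏ i ∈ Finset.univ.erase j, wickM ((s - Finsupp.single j 1 : Fin m →₀ ℕ) i)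
        = ∏ i ∈ Finset.univ.erase j, wickM (s i) := by
      refine Finset.prod_congr rfl fun i hi => ?_
      rw [Finsupp.tsub_apply, Finsupp.single_eq_of_ne (Finset.ne_of_mem_erase hi), tsub_zero]
    rw [h1, h2]
    simp only [Finsupp.add_apply, Finsupp.tsub_apply, Finsupp.single_eq_same]
    rw [add_comm 1, wickM_succ]
    ring
  | add p q hp hq => simp only [mul_add, map_add, hp, hq]

/-- The linear form with the given coefficients. -/
noncomputable def wickForm {m : ℕ} (a : Fin m → ℝ) : MvPolynomial (Fin m) ℝ :=
  ∑ j, a j • MvPolynomial.X j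

lemma wick_pderiv_form {m : ℕ} (a : Fin m → ℝ) (j : Fin m) :
    MvPolynomial.pderiv j (wickForm a) = MvPolynomial.C (a j) := by
  simp only [wickForm, map_sum, Derivation.map_smul, MvPolynomial.pderiv_X]
  rw [Finset.sum_eq_single j]
  · simp [MvPolynomial.smul_eq_C_mul]
  · intro b _ hb
    simp [Pi.single_apply, hb.symm, hb]
  · simp

lemma wick_pderiv_prod {m k : ℕ} (A : Fin k → Fin m → ℝ) (j : Fin m) (S : Finset (Fin k)) :
    MvPolynomial.pderiv j (∏ i ∈ S, wickForm (A i)) =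
      ∑ i ∈ S, A i j • ∏ l ∈ S.erase i, wickForm (A l) := by
  induction S using Finset.induction_on with
  | empty => simp
  | insert a S ha ih =>
    rw [Finset.prod_insert ha, Derivation.leibniz, ih, wick_pderiv_form, Finset.sum_insert ha,
      Finset.erase_insert ha, add_comm]
    congr 1
    · rw [smul_eq_mul, mul_comm, MvPolynomial.smul_eq_C_mul]
    · rw [Finset.smul_sum]
      refine Finset.sum_congr rfl fun i hi => ?_
      have hne : a ≠ i := fun h => ha (h ▸ hi)
      rw [Finset.erase_insert_of_ne hne, Finset.prod_insert (fun h => ha (Finset.mem_of_mem_erase h))]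
      rw [smul_eq_mul, mul_smul_comm]

lemma wick_rec_aux {m k : ℕ} (A : Fin k → Fin m → ℝ) (a : Fin k) (S : Finset (Fin k)) :
    wickL m (wickForm (A a) * ∏ i ∈ S, wickForm (A i)) =
      ∑ i ∈ S, (∑ j, A a j * A i j) * wickL m (∏ l ∈ S.erase i, wickForm (A l)) := by
  conv_lhs => rw [wickForm, Finset.sum_mul, map_sum]
  simp only [smul_mul_assoc, map_smul, wick_stein, wick_pderiv_prod, map_sum, smul_eq_mul,
    Finset.mul_sum, Finset.sum_mul]
  rw [Finset.sum_comm]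
  refine Finset.sum_congr rfl fun i _ => Finset.sum_congr rfl fun j _ => by ring

lemma wick_cov {m k : ℕ} (A : Fin k → Fin m → ℝ) (a b : Fin k) :
    wickL m (wickForm (A a) * wickForm (A b)) = ∑ j, A a j * A b j := by
  have := wick_rec_aux A a {b}
  simpa [wickL_one] using this

lemma wick_rec {m k : ℕ} (A : Fin k → Fin m → ℝ) (a : Fin k) (S : Finset (Fin k)) (ha : a ∈ S) :
    wickL m (∏ i ∈ S, wickForm (A i)) =
      ∑ i ∈ S.erase a, wickL m (wickForm (A a) * wickForm (A i)) *
        wickL m (∏ l ∈ (S.erase a).erase i, wickForm (A l)) := by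
  rw [← Finset.mul_prod_erase _ _ ha, wick_rec_aux]
  simp only [wick_cov]

/-- Involutions with support `S`. -/
def wickInv {k : ℕ} (S : Finset (Fin k)) : Finset (Equiv.Perm (Fin k)) :=
  Finset.univ.filter fun f => f * f = 1 ∧ ∀ i, f i ≠ i ↔ i ∈ S

lemma mem_wickInv {k : ℕ} (S : Finset (Fin k)) (f : Equiv.Perm (Fin k)) :
    f ∈ wickInv S ↔ (∀ i, f (f i) = i) ∧ ∀ i, f i ≠ i ↔ i ∈ S := by
  simp [wickInv, Equiv.ext_iff]

/-- Sum over the pairings of `S`. -/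
noncomputable def wickSum {k : ℕ} (C : Fin k → Fin k → ℝ) (S : Finset (Fin k)) : ℝ :=
  ∑ f ∈ wickInv S, ∏ i ∈ Finset.univ.filter (fun i : Fin k => (i : ℕ) < ((f i : Fin k) : ℕ)), C i (f i)

lemma wickSum_rec {k : ℕ} (C : Fin k → Fin k → ℝ) (a : Fin k) (S : Finset (Fin k)) (ha : a ∈ S)
    (hmin : ∀ i ∈ S, a ≤ i) :
    wickSum C S = ∑ i ∈ S.erase a, C a i * wickSum C ((S.erase a).erase i) := by
  unfold wickSum
  simp only [Finset.mul_sum]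
  rw [Finset.sum_sigma']
  refine Finset.sum_bij' (fun f _ => ⟨f a, Equiv.swap a (f a) * f⟩)
    (fun x _ => Equiv.swap a x.1 * x.2) ?_ ?_ ?_ ?_ ?_
  · intro f hf
    rw [mem_wickInv] at hf
    obtain ⟨h1, h2⟩ := hf
    have hfa : f a ≠ a := (h2 a).2 ha
    simp only [Finset.mem_sigma, Finset.mem_erase, mem_wickInv, Equiv.Perm.coe_mul,
      Function.comp_apply]
    refine ⟨⟨hfa, (h2 _).1 (by rw [h1]; exact hfa.symm)⟩, ?_, ?_⟩
    · intro i
      have := h1 i; have := h1 a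
      by_cases hi : i = a
      · subst hi; simp
      by_cases hi' : i = f a
      · subst hi'; simp [h1]
      have e : Equiv.swap a (f a) (f i) = f i :=
        Equiv.swap_apply_of_ne_of_ne (fun h => hi' (by rw [← h, h1])) (fun h => hi (f.injective h))
      rw [e, h1, Equiv.swap_apply_of_ne_of_ne hi hi']
    · intro i
      by_cases hi : i = a
      · subst hi; simp
      by_cases hi' : i = f a
      · subst hi'; simp [h1]
      have e : Equiv.swap a (f a) (f i) = f i :=
        Equiv.swap_apply_of_ne_of_ne (fun h => hi' (by rw [← h, h1])) (fun h => hi (f.injective h))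
      rw [e, h2]
      simp [hi, hi']
  · rintro ⟨j, f⟩ hf
    simp only [Finset.mem_sigma, Finset.mem_erase, mem_wickInv] at hf
    obtain ⟨⟨hja, hjS⟩, h1, h2⟩ := hf
    have fa : f a = a := by by_contra h; exact (((h2 a).1 h).2.1) rfl
    have fj : f j = j := by by_contra h; exact (((h2 j).1 h).1) rfl
    have key : ∀ i, i ≠ a → i ≠ j → Equiv.swap a j (f i) = f i := fun i hi hi' =>
      Equiv.swap_apply_of_ne_of_ne (fun h => hi (f.injective (h.trans fa.symm)))
        (fun h => hi' (f.injective (h.trans fj.symm)))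
    simp only [mem_wickInv, Equiv.Perm.coe_mul, Function.comp_apply]
    refine ⟨fun i => ?_, fun i => ?_⟩
    · by_cases hi : i = a
      · subst hi; simp [fa, fj]
      by_cases hi' : i = j
      · subst hi'; simp [fa, fj]
      rw [key i hi hi', h1, Equiv.swap_apply_of_ne_of_ne hi hi']
    · by_cases hi : i = a
      · subst hi; simp [fa, hja, ha]
      by_cases hi' : i = j
      · subst hi'; simp [fj, hjS, hja.symm]
      rw [key i hi hi', h2]
      simp [hi, hi']
  · intro f hf
    simp [← mul_assoc]
  · rintro ⟨j, f⟩ hf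
    simp only [Finset.mem_sigma, Finset.mem_erase, mem_wickInv] at hf
    obtain ⟨⟨hja, hjS⟩, h1, h2⟩ := hf
    have fa : f a = a := by by_contra h; exact (((h2 a).1 h).2.1) rfl
    simp [fa, ← mul_assoc]
  · intro f hf
    rw [mem_wickInv] at hf
    obtain ⟨h1, h2⟩ := hf
    have hfa : f a ≠ a := (h2 a).2 ha
    have hlt : a < f a := lt_of_le_of_ne
      (hmin _ ((h2 _).1 (by rw [h1]; exact hfa.symm))) hfa.symm
    have key : ∀ i, i ≠ a → i ≠ f a → Equiv.swap a (f a) (f i) = f i := fun i hi hi' =>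
      Equiv.swap_apply_of_ne_of_ne (fun h => hi' (by rw [← h, h1])) (fun h => hi (f.injective h))
    rw [← Finset.mul_prod_erase _ _ (a := a) (by simpa using hlt)]
    congr 1
    have hset : (Finset.univ.filter (fun i : Fin k => (i : ℕ) < ((f i : Fin k) : ℕ))).erase a
        = Finset.univ.filter (fun i : Fin k =>
          (i : ℕ) < (((Equiv.swap a (f a) * f) i : Fin k) : ℕ)) := by
      ext i
      simp only [Finset.mem_erase, Finset.mem_filter, Finset.mem_univ, true_and,
        Equiv.Perm.coe_mul, Function.comp_apply, Fin.val_fin_lt]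
      by_cases hi : i = a
      · subst hi; simp
      by_cases hi' : i = f a
      · subst hi'; simp [h1, hlt.le]
      rw [key i hi hi']
      simp [hi]
    rw [hset]
    refine Finset.prod_congr rfl fun i hi => ?_
    rw [← hset] at hi
    simp only [Finset.mem_erase, Finset.mem_filter, Finset.mem_univ, true_and,
      Fin.val_fin_lt] at hi
    have hi' : i ≠ f a := by
      rintro rfl
      rw [h1] at hi
      exact absurd hi.2 hlt.le.not_gt
    rw [Equiv.Perm.coe_mul, Function.comp_apply, key i hi.1 hi']

lemma wickSum_empty {k : ℕ} (C : Fin k → Fin k → ℝ) : wickSum C ∅ = 1 := by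
  have : wickInv (∅ : Finset (Fin k)) = {1} := by
    ext f
    simp only [mem_wickInv, Finset.mem_singleton, Finset.notMem_empty, iff_false, not_not]
    constructor
    · rintro ⟨-, h⟩; ext i; simp [h]
    · rintro rfl; simp
  simp [wickSum, this]

lemma wick_main {m k : ℕ} (A : Fin k → Fin m → ℝ) (n : ℕ) : ∀ S : Finset (Fin k), S.card = n →
    (wickL m (∏ i ∈ S, wickForm (A i)) =
      wickSum (fun a b => wickL m (wickForm (A a) * wickForm (A b))) S) ∧
    (Odd n → wickL m (∏ i ∈ S, wickForm (A i)) = 0) := by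
  induction n using Nat.strong_induction_on with
  | _ n ih =>
  intro S hS
  rcases S.eq_empty_or_nonempty with rfl | hne
  · have : n = 0 := by simpa using hS.symm
    subst this
    simp [wickSum_empty, wickL_one]
  · set a := S.min' hne
    have ha : a ∈ S := S.min'_mem hne
    have hc : ∀ i ∈ S.erase a, ((S.erase a).erase i).card = n - 2 ∧ 2 ≤ n := by
      intro i hi
      have h1 := Finset.card_erase_add_one hi
      have h2 := Finset.card_erase_add_one ha
      omega
    rw [wick_rec A a S ha, wickSum_rec _ a S ha (fun i hi => S.min'_le i hi)]
    refine ⟨Finset.sum_congr rfl fun i hi => ?_, fun ho => Finset.sum_eq_zero fun i hi => ?_⟩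
    · obtain ⟨h1, h2⟩ := hc i hi
      rw [(ih (n - 2) (by omega) _ h1).1]
    · obtain ⟨h1, h2⟩ := hc i hi
      rw [(ih (n - 2) (by omega) _ h1).2 (Nat.Odd.sub_even h2 ho (by decide)), mul_zero]

lemma wick_transfer {Ω : Type*} [MeasurableSpace Ω] (P : Measure Ω) [IsProbabilityMeasure P]
    (m : ℕ) (g : Fin m → Ω → ℝ) (hmeas : ∀ j, Measurable (g j)) (hindep : iIndepFun g P)
    (hgauss : ∀ j, Measure.map (g j) P = gaussianReal 0 1) (p : MvPolynomial (Fin m) ℝ) :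
    ∫ ω, MvPolynomial.eval (fun j => g j ω) p ∂P = wickL m p := by
  have h := (iIndepFun_iff_map_fun_eq_pi_map (fun j => (hmeas j).aemeasurable)).1 hindep
  simp only [hgauss] at h
  simp only [wickL, LinearMap.coe_mk, AddHom.coe_mk, wickMu]
  rw [← h, integral_map (measurable_pi_lambda _ hmeas).aemeasurable]
  exact (MvPolynomial.continuous_eval p).aestronglyMeasurable

/-- **Wick's lemma**: if `X₁, …, X_k` form a centered jointly Gaussian vector (i.e. each `X i` is a
linear combination of independent standard real Gaussians), then the expectation of their product
vanishes when `k` is odd, and equals the sum over all pairings of the products of covariances when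
`k` is even.  Pairings of `{1,…,k}` are encoded as fixed-point-free involutions `f` of `Fin k`,
and the product over the pairs `{i, f i}` is taken over the representatives `i < f i`. -/
theorem wick_formula
    {Ω : Type*} [MeasurableSpace Ω] (P : Measure Ω) [IsProbabilityMeasure P]
    (k : ℕ) (hk : 1 ≤ k) (X : Fin k → Ω → ℝ)
    (m : ℕ) (A : Matrix (Fin k) (Fin m) ℝ) (g : Fin m → Ω → ℝ)
    (hmeas : ∀ j, Measurable (g j))
    (hindep : iIndepFun g P)
    (hgauss : ∀ j, Measure.map (g j) P = gaussianReal 0 1)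
    (hX : ∀ i, X i = fun ω => ∑ j, A i j * g j ω) :
    (Odd k → ∫ ω, ∏ i, X i ω ∂P = 0) ∧
    (Even k →
      ∫ ω, ∏ i, X i ω ∂P =
        ∑ f ∈ Finset.univ.filter
            (fun f : Equiv.Perm (Fin k) => f * f = 1 ∧ ∀ i, f i ≠ i),
          ∏ i ∈ Finset.univ.filter (fun i : Fin k => (i : ℕ) < ((f i : Fin k) : ℕ)),
            ∫ ω, X i ω * X (f i) ω ∂P) := by
  have hev : ∀ i ω, X i ω = MvPolynomial.eval (fun j => g j ω) (wickForm (A i)) := by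
    intro i ω
    simp [hX, wickForm, MvPolynomial.smul_eval]
  have hprod : ∫ ω, ∏ i, X i ω ∂P = wickL m (∏ i, wickForm (A i)) := by
    rw [← wick_transfer P m g hmeas hindep hgauss]
    simp only [hev, map_prod]
  have hcov : ∀ a b, ∫ ω, X a ω * X b ω ∂P = wickL m (wickForm (A a) * wickForm (A b)) := by
    intro a b
    rw [← wick_transfer P m g hmeas hindep hgauss]
    simp only [hev, map_mul]
  obtain ⟨h1, h2⟩ := wick_main A k Finset.univ (by simp)
  refine ⟨fun ho => hprod.trans (h2 ho), fun _ => ?_⟩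
  rw [hprod, h1]
  simp only [hcov, wickSum, wickInv, Finset.mem_univ, iff_true]
end

section
/- For all integers p ≥ 1 and n ≥ p, the element Σ_{σ ∈ S_p} n^{#σ} · σ of the complex group algebra ℂ[S_p] of the symmetric group S_p is invertible, where #σ denotes the number of cycles of the permutation σ (fixed points counted as cycles of length one). -/
/-- The number of cycles of a permutation of `Fin p`, counting fixed points as cycles of
length one. -/
def Equiv.Perm.cycleCount {p : ℕ} (σ : Equiv.Perm (Fin p)) : ℕ :=
  (Finset.univ.filter fun x => σ x = x).card + σ.cycleType.card

open Equiv.Perm in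
/-- Colorings fixed by `σ` are counted by `n ^ #σ`. -/
theorem card_fixed_colorings {p : ℕ} (n : ℕ) (σ : Equiv.Perm (Fin p)) :
    (Finset.univ.filter fun f : Fin p → Fin n => ∀ x, f (σ x) = f x).card
      = n ^ σ.cycleCount := by
  classical
  let A := {x : Fin p // σ x = x} ⊕ {c // c ∈ σ.cycleFactorsFinset}
  have hA : Fintype.card A = σ.cycleCount := by
    simp only [A, Fintype.card_sum, Fintype.card_subtype, Equiv.Perm.cycleCount, cycleType_def,
      Multiset.card_map]
    congr 1
    rw [Finset.filter_univ_mem]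
    rfl
  let F : Fin p → A := fun x => if h : σ x = x then Sum.inl ⟨x, h⟩ else
    Sum.inr ⟨σ.cycleOf x, cycleOf_mem_cycleFactorsFinset_iff.2 (mem_support.2 h)⟩
  have hFs : Function.Surjective F := by
    rintro (⟨x, hx⟩ | ⟨c, hc⟩)
    · exact ⟨x, by simp [F, hx]⟩
    · obtain ⟨x, hx⟩ := (mem_cycleFactorsFinset_iff.1 hc).1.nonempty_support
      have h2 : σ x ≠ x := mem_support.1 (mem_cycleFactorsFinset_support_le hc hx)
      refine ⟨x, ?_⟩
      simp only [F, h2, dite_false]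
      congr 2
      exact (cycle_is_cycleOf hx hc).symm
  have hF1 : ∀ x, F (σ x) = F x := by
    intro x
    by_cases h : σ x = x
    · rw [h]
    · have h2 : σ (σ x) ≠ σ x := fun h' => h (σ.injective h')
      simp only [F, h, h2, dite_false]
      congr 2
      exact cycleOf_self_apply σ x
  have hF2 : ∀ x y, F x = F y → σ.SameCycle x y := by
    intro x y hxy
    by_cases h : σ x = x <;> by_cases h2 : σ y = y <;> simp only [F, h, h2, dite_true, dite_false] at hxy
    · exact (congrArg Subtype.val (Sum.inl.inj hxy)).sameCycle σ
    · cases hxy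
    · cases hxy
    · exact (sameCycle_iff_cycleOf_eq_of_mem_support (mem_support.2 h) (mem_support.2 h2)).2
        (congrArg Subtype.val (Sum.inr.inj hxy))
  rw [← hA]
  have : n ^ Fintype.card A = (Finset.univ : Finset (A → Fin n)).card := by simp
  rw [this]
  symm
  refine Finset.card_bij (fun g _ => g ∘ F) ?_ ?_ ?_
  · intro g _
    simp [hF1]
  · intro g _ g' _ h
    exact hFs.injective_comp_right h
  · intro f hf
    have hf : ∀ x, f (σ x) = f x := by simpa using hf
    have hfac : Function.FactorsThrough f F := by
      intro x y hxy
      obtain ⟨i, -, rfl⟩ := (hF2 x y hxy).exists_pow_eq'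
      clear hxy
      induction i with
      | zero => simp
      | succ i ih => rw [pow_succ', Equiv.Perm.mul_apply, hf]; exact ih
    refine ⟨fun a => f (Function.surjInv hFs a), Finset.mem_univ _, ?_⟩
    funext x
    exact hfac (Function.surjInv_eq hFs (F x))

/-- The Gram-matrix form of the coefficients. -/
theorem gram_coeff {p : ℕ} (n : ℕ) (σ τ : Equiv.Perm (Fin p)) :
    ((n : ℂ) ^ (σ⁻¹ * τ).cycleCount) = ∑ h : Fin p → Fin n, ∑ g : Fin p → Fin n,
      (if h ∘ σ = g then 1 else 0) * (if h ∘ τ = g then (1 : ℂ) else 0) := by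
  have h1 : (Finset.univ.filter fun f : Fin p → Fin n => ∀ x, f ((σ⁻¹ * τ) x) = f x).card
      = (Finset.univ.filter fun h : Fin p → Fin n => h ∘ τ = h ∘ σ).card := by
    refine Finset.card_bij (fun f _ => f ∘ ⇑σ⁻¹) ?_ ?_ ?_
    · intro f hf
      have hf : ∀ x, f (σ⁻¹ (τ x)) = f x := (Finset.mem_filter.1 hf).2
      simp only [Finset.mem_filter, Finset.mem_univ, true_and]
      funext x
      show f (σ⁻¹ (τ x)) = f (σ⁻¹ (σ x))
      rw [hf]
      exact congrArg f (σ.symm_apply_apply x).symm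
    · intro f _ f' _ h
      exact (σ⁻¹).surjective.injective_comp_right h
    · intro h hh
      have hh : h ∘ τ = h ∘ σ := by simpa using hh
      refine ⟨h ∘ σ, ?_, ?_⟩
      · simp only [Finset.mem_filter, Finset.mem_univ, true_and]
        intro x
        show h (σ (σ⁻¹ (τ x))) = h (σ x)
        exact (congrArg h (σ.apply_symm_apply (τ x))).trans (congrFun hh x)
      · funext x
        show h (σ (σ⁻¹ x)) = h x
        exact congrArg h (σ.apply_symm_apply x)
  rw [← Nat.cast_pow, ← card_fixed_colorings, h1]
  simp only [eq_comm (a := _ ∘ ⇑τ) (b := _ ∘ ⇑σ)]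
  simp

/-- For `p ≥ 1` and `n ≥ p`, the element `Σ_{σ ∈ S_p} n^{#σ} · σ` of the complex group algebra
`ℂ[S_p]` is invertible, where `#σ` is the number of cycles of `σ` (fixed points included). -/
theorem weingarten_element_invertible (p n : ℕ) (hp : 1 ≤ p) (hn : p ≤ n) :
    IsUnit (∑ σ : Equiv.Perm (Fin p),
      MonoidAlgebra.single (R := ℂ) σ ((n : ℂ) ^ σ.cycleCount)) := by
  classical
  haveI : NeZero (Nat.card (Equiv.Perm (Fin p)) : ℂ) :=
    ⟨Nat.cast_ne_zero.2 Nat.card_pos.ne'⟩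
  rw [IsArtinianRing.isUnit_iff_isRightRegular, isRightRegular_iff_left_eq_zero_of_mul]
  intro a ha
  have hco : ∀ τ : Equiv.Perm (Fin p),
      ∑ σ, a.coeff σ * (n : ℂ) ^ (σ⁻¹ * τ).cycleCount = 0 := by
    intro τ
    have h := congrArg (fun x => MonoidAlgebra.coeff x τ) ha
    rw [MonoidAlgebra.coeff_mul_antidiag _ _ τ
      (Finset.univ.image fun σ : Equiv.Perm (Fin p) => (σ, σ⁻¹ * τ))] at h
    · rw [Finset.sum_image (by intro x _ y _ hxy; exact (Prod.mk.inj hxy).1)] at h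
      simpa [MonoidAlgebra.coeff_sum, Finsupp.finset_sum_apply, Finsupp.single_apply] using h
    · rintro ⟨x, y⟩
      simp only [Finset.mem_image, Finset.mem_univ, true_and, Prod.mk.injEq]
      constructor
      · rintro ⟨σ, rfl, rfl⟩; simp
      · rintro rfl; exact ⟨x, rfl, by simp⟩
  let S : (Fin p → Fin n) → (Fin p → Fin n) → ℂ := fun h g =>
    ∑ σ : Equiv.Perm (Fin p), a.coeff σ * (if h ∘ σ = g then 1 else 0)
  have key : ∑ h, ∑ g, S h g * star (S h g) = 0 := by
    have h0 : ∑ τ, (∑ σ, a.coeff σ * (n : ℂ) ^ (σ⁻¹ * τ).cycleCount) * star (a.coeff τ) = 0 := by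
      simp [hco]
    rw [← h0]
    simp_rw [gram_coeff, S, star_sum, Finset.sum_mul_sum, Finset.mul_sum, Finset.sum_mul]
    have e1 : ∀ F : (Fin p → Fin n) → (Fin p → Fin n) → Equiv.Perm (Fin p) →
        Equiv.Perm (Fin p) → ℂ, ∑ h, ∑ g, ∑ σ, ∑ τ, F h g σ τ = ∑ τ, ∑ σ, ∑ h, ∑ g, F h g σ τ := by
      intro F
      calc _ = ∑ h, ∑ τ, ∑ σ, ∑ g, F h g σ τ := by
            refine Finset.sum_congr rfl fun h _ => ?_
            rw [Finset.sum_comm]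
            refine Eq.trans (Finset.sum_congr rfl fun σ _ => Finset.sum_comm) ?_
            exact Finset.sum_comm
        _ = _ := by
            rw [Finset.sum_comm]
            exact Finset.sum_congr rfl fun τ _ => Finset.sum_comm
    rw [e1]
    refine Finset.sum_congr rfl fun τ _ => Finset.sum_congr rfl fun σ _ =>
      Finset.sum_congr rfl fun h _ => Finset.sum_congr rfl fun g _ => ?_
    rw [star_mul']
    split_ifs <;> simp
  have hS : ∀ h g, S h g = 0 := by
    have key2 : ∑ h, ∑ g, Complex.normSq (S h g) = 0 := by
      have : ((∑ h, ∑ g, Complex.normSq (S h g) : ℝ) : ℂ) = 0 := by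
        rw [← key]; push_cast
        simp_rw [← Complex.mul_conj]; rfl
      exact_mod_cast this
    intro h g
    rw [Finset.sum_eq_zero_iff_of_nonneg
      (fun _ _ => Finset.sum_nonneg fun _ _ => Complex.normSq_nonneg _)] at key2
    have k3 := key2 h (Finset.mem_univ _)
    rw [Finset.sum_eq_zero_iff_of_nonneg (fun _ _ => Complex.normSq_nonneg _)] at k3
    exact Complex.normSq_eq_zero.1 (k3 g (Finset.mem_univ _))
  ext σ₀
  have h := hS (Fin.castLE hn) (Fin.castLE hn ∘ σ₀)
  have hinj : ∀ σ : Equiv.Perm (Fin p),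
      (Fin.castLE hn ∘ ⇑σ = Fin.castLE hn ∘ ⇑σ₀) ↔ σ = σ₀ := by
    intro σ
    rw [(Fin.castLE_injective hn).comp_left.eq_iff, DFunLike.coe_fn_eq]
  simpa [S, hinj] using h
end

section
/- Let p ≥ 1 and n ≥ p be integers, and let Wg(n,·) : S_p → ℂ be the coefficients of the inverse in the group algebra ℂ[S_p] of the element Σ_{σ ∈ S_p} n^{#σ} · σ (which is invertible since n ≥ p). Let dU denote the Haar probability measure on the unitary group U(n). Then for all tuples i, i', j, j' : {1,…,p} → {1,…,n}: ∫_{U(n)} U_{i₁ j₁} ⋯ U_{i_p j_p} · conj(U_{i'₁ j'₁}) ⋯ conj(U_{i'_p j'_p}) dU = Σ_{σ, τ ∈ S_p} (Π_{m=1}^p δ_{i_m, i'_{σ(m)}}) (Π_{m=1}^p δ_{j_m, j'_{τ(m)}}) Wg(n, τσ⁻¹). -/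
open MeasureTheory

namespace WgProof
open Matrix

/-- Tensor power of a matrix, in coordinates. -/
noncomputable def tp (p : ℕ) {n : ℕ} (A : Matrix (Fin n) (Fin n) ℂ) :
    Matrix (Fin p → Fin n) (Fin p → Fin n) ℂ :=
  Matrix.of fun I J => ∏ m, A (I m) (J m)

lemma tp_mul {p n : ℕ} (A B : Matrix (Fin n) (Fin n) ℂ) :
    tp p (A * B) = tp p A * tp p B := by
  ext I J
  simp only [tp, Matrix.of_apply, Matrix.mul_apply, Fintype.prod_sum, Finset.prod_mul_distrib]

lemma tp_one {p n : ℕ} : tp p (1 : Matrix (Fin n) (Fin n) ℂ) = 1 := by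
  ext I J
  simp only [tp, Matrix.of_apply, Matrix.one_apply, Finset.prod_ite_zero, funext_iff]
  simp

lemma tp_diagonal {p n : ℕ} (d : Fin n → ℂ) :
    tp p (Matrix.diagonal d) = Matrix.diagonal (fun I => ∏ m, d (I m)) := by
  ext I J
  simp only [tp, Matrix.of_apply, Matrix.diagonal_apply, Finset.prod_ite_zero, funext_iff]
  simp

lemma tp_conjTranspose {p n : ℕ} (A : Matrix (Fin n) (Fin n) ℂ) :
    tp p Aᴴ = (tp p A)ᴴ := by
  ext I J
  simp [tp, Matrix.conjTranspose_apply]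

lemma circle_infinite : Set.Infinite {z : ℂ | star z * z = 1} := by
  have h : Set.Infinite (Set.range (fun z : Circle => (z : ℂ))) := by
    have : Infinite (Set.Ioc (-Real.pi) Real.pi) :=
      (Set.Ioc_infinite (by linarith [Real.pi_pos])).to_subtype
    have : Infinite Circle := Circle.argEquiv.infinite_iff.2 this
    apply Set.infinite_range_of_injective
    exact Circle.coe_injective
  refine h.mono ?_
  rintro _ ⟨z, rfl⟩
  simp [← Complex.normSq_eq_conj_mul_self]

section comm
lemma comm_diag {p n : ℕ} (T : Matrix (Fin p → Fin n) (Fin p → Fin n) ℂ)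
  (hT : ∀ V ∈ Matrix.unitaryGroup (Fin n) ℂ, tp p V * T = T * tp p V)
    (d : Fin n → ℂ) : tp p (diagonal d) * T = T * tp p (diagonal d) := by
  have key : ∀ I I', T I I' = 0 ∨
      (∏ m, (MvPolynomial.X (I m) : MvPolynomial (Fin n) ℂ)) = ∏ m, MvPolynomial.X (I' m) := by
    intro I I'
    by_cases h0 : T I I' = 0
    · exact Or.inl h0
    right
    apply MvPolynomial.funext_set (fun _ => {z : ℂ | star z * z = 1})
    · intro _; exact circle_infinite
    intro x hx
    have hxu : diagonal x ∈ Matrix.unitaryGroup (Fin n) ℂ := by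
      rw [Matrix.mem_unitaryGroup_iff']
      rw [star_eq_conjTranspose, diagonal_conjTranspose, diagonal_mul_diagonal, ← diagonal_one]
      congr 1
      ext k
      exact hx k trivial
    have := congrFun (congrFun (hT _ hxu) I) I'
    rw [tp_diagonal, diagonal_mul, mul_diagonal, mul_comm] at this
    simpa [h0, map_prod] using this
  ext I I'
  rw [tp_diagonal, diagonal_mul, mul_diagonal, mul_comm]
  rcases key I I' with h | h
  · simp [h]
  · have := congrArg (MvPolynomial.eval d) h
    simp only [map_prod, MvPolynomial.eval_X] at this
    rw [this]

lemma comm_herm {p n : ℕ} (T : Matrix (Fin p → Fin n) (Fin p → Fin n) ℂ)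
  (hT : ∀ V ∈ Matrix.unitaryGroup (Fin n) ℂ, tp p V * T = T * tp p V)
    (A : Matrix (Fin n) (Fin n) ℂ) (hA : A.IsHermitian) :
    tp p A * T = T * tp p A := by
  rw [hA.spectral_theorem, Unitary.conjStarAlgAut_apply]
  simp only [tp_mul]
  have h1 := hT _ hA.eigenvectorUnitary.2
  have h2 := hT _ (star hA.eigenvectorUnitary).2
  have h3 := comm_diag T hT ((RCLike.ofReal : ℝ → ℂ) ∘ hA.eigenvalues)
  exact (Commute.mul_left (Commute.mul_left h1 h3) h2)

lemma comm_all {p n : ℕ} (T : Matrix (Fin p → Fin n) (Fin p → Fin n) ℂ)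
  (hT : ∀ V ∈ Matrix.unitaryGroup (Fin n) ℂ, tp p V * T = T * tp p V)
    (A : Matrix (Fin n) (Fin n) ℂ) : tp p A * T = T * tp p A := by
  set H : Matrix (Fin n) (Fin n) ℂ := (realPart A : Matrix (Fin n) (Fin n) ℂ)
  set K : Matrix (Fin n) (Fin n) ℂ := (imaginaryPart A : Matrix (Fin n) (Fin n) ℂ)
  have hH : H.IsHermitian := (realPart A).2
  have hK : K.IsHermitian := (imaginaryPart A).2
  have hA : A = H + Complex.I • K := (realPart_add_I_smul_imaginaryPart A).symm
  ext I I'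
  let P : (Fin p → Fin n) → (Fin p → Fin n) → Polynomial ℂ := fun I J =>
    ∏ m, (Polynomial.C (H (I m) (J m)) + Polynomial.X * Polynomial.C (K (I m) (J m)))
  have hP : ∀ (z : ℂ) I J, (P I J).eval z = tp p (H + z • K) I J := by
    intro z I J
    simp [P, tp, Polynomial.eval_prod, mul_comm z]
  have hpoly : (∑ L, P I L * Polynomial.C (T L I')) = ∑ L, Polynomial.C (T I L) * P L I' := by
    apply Polynomial.eq_of_infinite_eval_eq
    have h : Set.Infinite (Set.range (fun t : ℝ => (t : ℂ))) :=
      Set.infinite_range_of_injective Complex.ofReal_injective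
    refine h.mono ?_
    rintro _ ⟨t, rfl⟩
    have hh : (H + (t : ℂ) • K).IsHermitian := by
      apply hH.add
      unfold Matrix.IsHermitian
      rw [conjTranspose_smul, hK.eq]
      simp
    have := congrFun (congrFun (comm_herm T hT _ hh) I) I'
    simpa [Polynomial.eval_finsetSum, hP, Matrix.mul_apply] using this
  have := congrArg (Polynomial.eval Complex.I) hpoly
  simpa [Polynomial.eval_finsetSum, hP, Matrix.mul_apply, ← hA] using this

lemma span_perm {p n : ℕ} (T : Matrix (Fin p → Fin n) (Fin p → Fin n) ℂ)
  (hT : ∀ V ∈ Matrix.unitaryGroup (Fin n) ℂ, tp p V * T = T * tp p V)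
    (hn : p ≤ n) : ∃ c : Equiv.Perm (Fin p) → ℂ,
    ∀ I I', T I I' = ∑ σ : Equiv.Perm (Fin p), if I = I' ∘ σ then c σ else 0 := by
  let e : Fin p → Fin n := Fin.castLE hn
  have he : Function.Injective e := Fin.castLE_injective hn
  have hK : ∀ K, T K e ≠ 0 → ∃ σ : Equiv.Perm (Fin p), K = e ∘ σ := by
    intro K hK
    have := congrFun (congrFun (comm_all T hT
      (diagonal (fun a => if a ∈ Set.range K then (1 : ℂ) else 0))) K) e
    rw [tp_diagonal, diagonal_mul, mul_diagonal, mul_comm] at this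
    have h2 := mul_left_cancel₀ hK this
    have h3 : ∀ m, ∃ s, K s = e m := by
      intro m
      by_contra hm
      rw [Finset.prod_eq_one (by intro s _; simp), Finset.prod_eq_zero (Finset.mem_univ m)] at h2
      · exact one_ne_zero h2
      · exact if_neg hm
    choose g hg using h3
    have hgi : Function.Injective g := by
      intro a b hab
      apply he
      rw [← hg, ← hg, hab]
    let s := Equiv.ofBijective g (Finite.injective_iff_bijective.1 hgi)
    refine ⟨s⁻¹, ?_⟩
    ext1 m
    obtain ⟨b, rfl⟩ := s.surjective m
    have : s⁻¹ (s b) = b := s.symm_apply_apply b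
    rw [Function.comp, this]
    exact hg b
  refine ⟨fun σ => T (e ∘ σ) e, fun I I' => ?_⟩
  rcases Nat.eq_zero_or_pos p with rfl | hp
  · have h1 : I = e := Subsingleton.elim _ _
    have h2 : I' = e := Subsingleton.elim _ _
    subst h1 h2
    rw [Fintype.sum_unique]
    rw [if_pos (Subsingleton.elim _ _)]
    exact congrArg (fun L => T L e) (Subsingleton.elim _ _)
  have : Nonempty (Fin p) := ⟨⟨0, hp⟩⟩
  have hinv : ∀ m, Function.invFun e (e m) = m := Function.leftInverse_invFun he
  let f : Fin n → Fin n := fun a => I' (Function.invFun e a)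
  have hfe : f ∘ e = I' := by ext1 m; simp [f, hinv]
  have h := congrFun (congrFun (comm_all T hT (Matrix.of fun a b => if a = f b then 1 else 0)) I) e
  have htp : ∀ I J, tp p (Matrix.of fun a b => if a = f b then (1 : ℂ) else 0) I J
      = if I = f ∘ J then 1 else 0 := by
    intro I J
    simp only [tp, Matrix.of_apply, Finset.prod_ite_zero, funext_iff]
    simp
  simp only [Matrix.mul_apply, htp, hfe, mul_ite, mul_one, mul_zero, ite_mul, one_mul, zero_mul,
    Finset.sum_ite_eq', Finset.mem_univ, if_true] at h
  refine h.symm.trans ?_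
  have hinj : Function.Injective (fun σ : Equiv.Perm (Fin p) => e ∘ σ) := by
    intro a b hab
    ext m
    have := congrFun hab m
    exact congrArg _ (he this)
  rw [← Finset.sum_subset (Finset.subset_univ (Finset.univ.image
    (fun σ : Equiv.Perm (Fin p) => e ∘ σ)))]
  · rw [Finset.sum_image (fun a _ b _ h => hinj h)]
    refine Finset.sum_congr rfl fun σ _ => ?_
    rw [← hfe]; rfl
  · intro K _ hKn
    by_cases h0 : T K e = 0
    · simp [h0]
    · obtain ⟨σ, rfl⟩ := hK K h0
      exact absurd (Finset.mem_image_of_mem _ (Finset.mem_univ _)) hKn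
end comm

lemma card_fix {p n : ℕ} (x : Equiv.Perm (Fin p)) :
    Fintype.card {I : Fin p → Fin n // I ∘ x = I} = n ^ x.cycleCount := by
  let F := {a // x a = a} ⊕ {c // c ∈ x.cycleFactorsFinset}
  let q : Fin p → F := fun m => if h : x m = m then Sum.inl ⟨m, h⟩ else
    Sum.inr ⟨x.cycleOf m, Equiv.Perm.cycleOf_mem_cycleFactorsFinset_iff.2
      (Equiv.Perm.mem_support.2 h)⟩
  have hqx : ∀ m, q (x m) = q m := by
    intro m
    by_cases h : x m = m
    · rw [h]
    · have h' : x (x m) ≠ x m := fun hh => h (x.injective hh)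
      simp [q, h]
  have hqs : Function.Surjective q := by
    rintro (⟨a, ha⟩ | ⟨c, hc⟩)
    · exact ⟨a, by simp [q, ha]⟩
    · obtain ⟨a, ha⟩ := (Equiv.Perm.mem_cycleFactorsFinset_iff.1 hc).1.nonempty_support
      have := Equiv.Perm.cycle_is_cycleOf ha hc
      have hx : x a ≠ a := by
        rw [← Equiv.Perm.mem_support]
        exact Equiv.Perm.mem_cycleFactorsFinset_support_le hc ha
      exact ⟨a, by simp [q, hx, this]⟩
  have hsame : ∀ a b, q a = q b → x.SameCycle a b := by
    intro a b h
    by_cases ha : x a = a <;> by_cases hb : x b = b <;>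
      simp only [q, ha, hb, dif_pos, dif_neg, not_false_iff] at h
    · have := Sum.inl.inj h
      simp at this
      rw [this]
    · cases h
    · cases h
    · have := Sum.inr.inj h
      simp at this
      rw [Equiv.Perm.sameCycle_iff_cycleOf_eq_of_mem_support] <;> simp [ha, hb, this]
  have hconst : ∀ I : Fin p → Fin n, I ∘ x = I → ∀ a b, x.SameCycle a b → I a = I b := by
    rintro I hI a b h
    obtain ⟨k, hk, rfl⟩ := h.exists_pow_eq'
    clear h hk
    induction k with
    | zero => simp
    | succ k ih =>
      rw [pow_succ', Equiv.Perm.mul_apply]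
      exact ih.trans (congrFun hI _).symm
  let E : (F → Fin n) ≃ {I : Fin p → Fin n // I ∘ x = I} :=
    Equiv.ofBijective (fun g => ⟨g ∘ q, by ext1 m; simp [hqx]⟩) (by
      constructor
      · intro g g' h
        have h := congrArg Subtype.val h
        exact hqs.injective_comp_right h
      · rintro ⟨I, hI⟩
        refine ⟨I ∘ Function.surjInv hqs, ?_⟩
        ext1
        ext1 m
        apply hconst I hI
        apply hsame
        exact Function.surjInv_eq hqs _)
  rw [← Fintype.card_congr E, Fintype.card_fun, Fintype.card_fin, Equiv.Perm.cycleCount]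
  congr 1
  rw [Fintype.card_sum, Fintype.card_subtype, Equiv.Perm.cycleType_def]
  simp


lemma sum_fix {p n : ℕ} (σ τ : Equiv.Perm (Fin p)) (c : ℂ) :
    (∑ I : Fin p → Fin n, if I ∘ τ = I ∘ σ then c else 0) =
      (n : ℂ) ^ (τ * σ⁻¹).cycleCount * c := by
  rw [← Finset.sum_filter, Finset.sum_const, nsmul_eq_mul]
  congr 1
  have := card_fix (n := n) (τ * σ⁻¹)
  rw [Fintype.card_subtype] at this
  rw [← Nat.cast_pow, ← this]
  congr 2
  ext I
  simp only [Finset.mem_filter, Finset.mem_univ, true_and]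
  constructor
  · intro h
    ext1 m
    have := congrFun h (σ⁻¹ m)
    simpa using this
  · intro h
    ext1 m
    have := congrFun h (σ m)
    simpa using this

lemma cycleCount_inv {p : ℕ} (x : Equiv.Perm (Fin p)) : x⁻¹.cycleCount = x.cycleCount := by
  unfold Equiv.Perm.cycleCount
  rw [Equiv.Perm.cycleType_inv]
  congr 2
  ext a
  simp only [Finset.mem_filter, Finset.mem_univ, true_and, Equiv.Perm.inv_eq_iff_eq]
  exact eq_comm

lemma invert {p n : ℕ} (w : Equiv.Perm (Fin p) → ℂ)
    (hw : (∑ σ : Equiv.Perm (Fin p), MonoidAlgebra.single (R := ℂ) σ (w σ)) *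
          (∑ σ : Equiv.Perm (Fin p),
            MonoidAlgebra.single (R := ℂ) σ ((n : ℂ) ^ σ.cycleCount)) = 1)
    (ρ σ : Equiv.Perm (Fin p)) :
    ∑ τ : Equiv.Perm (Fin p), (n : ℂ) ^ (τ * ρ⁻¹).cycleCount * w (τ * σ⁻¹) =
      if ρ = σ then 1 else 0 := by
  have : IsArtinianRing (MonoidAlgebra ℂ (Equiv.Perm (Fin p))) := by
    have : Module.Finite ℂ (MonoidAlgebra ℂ (Equiv.Perm (Fin p))) := inferInstance
    exact IsArtinianRing.of_finite ℂ _
  rw [mul_eq_one_comm] at hw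
  have h := congrArg (fun f : MonoidAlgebra ℂ (Equiv.Perm (Fin p)) => f.coeff (ρ * σ⁻¹)) hw
  simp only [Finset.sum_mul_sum, MonoidAlgebra.single_mul_single, MonoidAlgebra.coeff_sum,
    Finsupp.finsetSum_apply, MonoidAlgebra.coeff_single, MonoidAlgebra.one_def,
    Finsupp.single_apply] at h
  rw [Finset.sum_comm] at h
  have h1 : (1 = ρ * σ⁻¹) ↔ ρ = σ := by rw [eq_comm, mul_inv_eq_one]
  simp only [h1] at h
  rw [← h]
  refine Eq.trans ?_ (Equiv.sum_comp (Equiv.mulRight σ⁻¹) _)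
  refine Finset.sum_congr rfl fun τ _ => ?_
  rw [Finset.sum_eq_single (ρ * τ⁻¹)]
  · rw [if_pos (by simp [mul_assoc]), ← cycleCount_inv (τ * ρ⁻¹)]
    simp
  · intro a _ ha
    rw [if_neg]
    intro h2
    apply ha
    rw [eq_mul_inv_iff_mul_eq]
    have h3 : a * (τ * σ⁻¹) = ρ * σ⁻¹ := h2
    rw [← mul_assoc] at h3
    exact mul_right_cancel h3
  · simp

section integral
variable {p n : ℕ}
    [MeasurableSpace (Matrix.unitaryGroup (Fin n) ℂ)]
    [BorelSpace (Matrix.unitaryGroup (Fin n) ℂ)]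
    (μ : Measure (Matrix.unitaryGroup (Fin n) ℂ)) [IsProbabilityMeasure μ]

lemma tp_cont (I J : Fin p → Fin n) : Continuous
    (fun U : Matrix.unitaryGroup (Fin n) ℂ => tp p (U : Matrix (Fin n) (Fin n) ℂ) I J) := by
  unfold tp
  simp only [Matrix.of_apply]
  refine continuous_finsetProd _ fun m _ => ?_
  exact continuous_subtype_val.matrix_elem _ _

lemma tp_norm_le (I J : Fin p → Fin n) (U : Matrix.unitaryGroup (Fin n) ℂ) :
    ‖tp p (U : Matrix (Fin n) (Fin n) ℂ) I J‖ ≤ 1 := by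
  unfold tp
  simp only [Matrix.of_apply, norm_prod]
  exact Finset.prod_le_one (fun _ _ => norm_nonneg _)
    fun m _ => entry_norm_bound_of_unitary U.2 _ _

lemma tp_integrable (I J I' J' : Fin p → Fin n) : Integrable
    (fun U : Matrix.unitaryGroup (Fin n) ℂ => tp p (U : Matrix (Fin n) (Fin n) ℂ) I J *
      star (tp p (U : Matrix (Fin n) (Fin n) ℂ) I' J')) μ := by
  refine Integrable.of_bound (C := 1)
    ((tp_cont I J).mul (tp_cont I' J').star).aestronglyMeasurable ?_
  refine Filter.Eventually.of_forall fun U => ?_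
  rw [norm_mul, norm_star]
  exact mul_le_one₀ (tp_norm_le _ _ _) (norm_nonneg _) (tp_norm_le _ _ _)

/-- The moment matrix for fixed column indices. -/
noncomputable def mom (J J' : Fin p → Fin n) : Matrix (Fin p → Fin n) (Fin p → Fin n) ℂ :=
  Matrix.of fun I I' => ∫ U : Matrix.unitaryGroup (Fin n) ℂ,
    tp p (U : Matrix (Fin n) (Fin n) ℂ) I J *
      star (tp p (U : Matrix (Fin n) (Fin n) ℂ) I' J') ∂μ

lemma mom_conj (hμ : ∀ V : Matrix.unitaryGroup (Fin n) ℂ,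
      Measure.map (fun U => V * U) μ = μ) (J J' : Fin p → Fin n)
    (V : Matrix.unitaryGroup (Fin n) ℂ) :
    mom μ J J' = tp p (V : Matrix (Fin n) (Fin n) ℂ) * mom μ J J' *
      (tp p (V : Matrix (Fin n) (Fin n) ℂ))ᴴ := by
  ext I I'
  have hmeas : Continuous (fun U : Matrix.unitaryGroup (Fin n) ℂ => V * U) :=
    continuous_const.mul continuous_id
  conv_lhs => rw [mom, Matrix.of_apply, ← hμ V]
  have hsm : AEStronglyMeasurable (fun U : Matrix.unitaryGroup (Fin n) ℂ =>
      tp p (U : Matrix (Fin n) (Fin n) ℂ) I J *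
      star (tp p (U : Matrix (Fin n) (Fin n) ℂ) I' J')) (Measure.map (fun U => V * U) μ) :=
    ((tp_cont I J).mul (tp_cont I' J').star).aestronglyMeasurable
  rw [integral_map hmeas.measurable.aemeasurable hsm]
  have : ∀ U : Matrix.unitaryGroup (Fin n) ℂ,
      tp p ((V * U : Matrix.unitaryGroup (Fin n) ℂ) : Matrix (Fin n) (Fin n) ℂ) I J *
      star (tp p ((V * U : Matrix.unitaryGroup (Fin n) ℂ) : Matrix (Fin n) (Fin n) ℂ) I' J') =
      ∑ K', ∑ K, (tp p (V : Matrix (Fin n) (Fin n) ℂ) I K *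
        star (tp p (V : Matrix (Fin n) (Fin n) ℂ) I' K')) *
        (tp p (U : Matrix (Fin n) (Fin n) ℂ) K J *
        star (tp p (U : Matrix (Fin n) (Fin n) ℂ) K' J')) := by
    intro U
    rw [Submonoid.coe_mul, tp_mul, Matrix.mul_apply, Matrix.mul_apply, star_sum,
      Finset.sum_mul_sum, Finset.sum_comm]
    refine Finset.sum_congr rfl fun K' _ => Finset.sum_congr rfl fun K _ => ?_
    rw [star_mul']
    ring
  simp only [this]
  rw [integral_finsetSum]
  swap
  · exact fun K' _ => integrable_finsetSum _ fun K _ => (tp_integrable μ _ _ _ _).const_mul _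
  rw [Matrix.mul_apply]
  refine Finset.sum_congr rfl fun K' _ => ?_
  rw [integral_finsetSum _ fun K _ => (tp_integrable μ _ _ _ _).const_mul _, Matrix.mul_apply,
    Finset.sum_mul]
  refine Finset.sum_congr rfl fun K _ => ?_
  rw [integral_const_mul, mom, Matrix.of_apply, conjTranspose_apply]
  ring

lemma mom_comm (hμ : ∀ V : Matrix.unitaryGroup (Fin n) ℂ,
      Measure.map (fun U => V * U) μ = μ) (J J' : Fin p → Fin n) :
    ∀ V ∈ Matrix.unitaryGroup (Fin n) ℂ, tp p V * mom μ J J' = mom μ J J' * tp p V := by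
  intro V hV
  conv_rhs => rw [mom_conj μ hμ J J' ⟨V, hV⟩]
  have h : (tp p V)ᴴ * tp p V = 1 := by
    rw [← tp_conjTranspose, ← tp_mul, ← star_eq_conjTranspose,
      Matrix.mem_unitaryGroup_iff'.1 hV, tp_one]
  rw [mul_assoc, h, mul_one]

lemma mom_trace (J J' : Fin p → Fin n) (τ : Equiv.Perm (Fin p)) :
    ∑ I : Fin p → Fin n, mom μ J J' (I ∘ τ) I = ∏ m, if J m = J' (τ m) then (1 : ℂ) else 0 := by
  simp only [mom, Matrix.of_apply]
  rw [← integral_finsetSum _ fun K _ => (tp_integrable μ _ _ _ _)]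
  have : ∀ U : Matrix.unitaryGroup (Fin n) ℂ,
      ∑ I : Fin p → Fin n, tp p (U : Matrix (Fin n) (Fin n) ℂ) (I ∘ τ) J *
      star (tp p (U : Matrix (Fin n) (Fin n) ℂ) I J') =
      ∏ m, if J m = J' (τ m) then (1 : ℂ) else 0 := by
    intro U
    have hU := Matrix.mem_unitaryGroup_iff'.1 U.2
    have h1 : ∀ I : Fin p → Fin n, tp p (U : Matrix (Fin n) (Fin n) ℂ) (I ∘ τ) J *
      star (tp p (U : Matrix (Fin n) (Fin n) ℂ) I J') =
        ∏ m, star ((U : Matrix (Fin n) (Fin n) ℂ) ((I ∘ τ) m) (J' (τ m))) *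
          (U : Matrix (Fin n) (Fin n) ℂ) ((I ∘ τ) m) (J m) := by
      intro I
      rw [Finset.prod_mul_distrib, mul_comm]
      simp only [tp, Matrix.of_apply, star_prod]
      congr 1
      exact (Equiv.prod_comp τ (fun m => star ((U : Matrix (Fin n) (Fin n) ℂ) (I m) (J' m)))).symm
    simp only [h1]
    have h2 := Equiv.sum_comp (Equiv.arrowCongr τ.symm (Equiv.refl (Fin n)))
      (fun I => ∏ m, star ((U : Matrix (Fin n) (Fin n) ℂ) (I m) (J' (τ m))) *
          (U : Matrix (Fin n) (Fin n) ℂ) (I m) (J m))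
    refine Eq.trans ?_ (h2.trans ?_)
    · rfl
    · rw [← Fintype.prod_sum (fun m a => star ((U : Matrix (Fin n) (Fin n) ℂ) a (J' (τ m))) *
          (U : Matrix (Fin n) (Fin n) ℂ) a (J m))]
      refine Finset.prod_congr rfl fun m _ => ?_
      have := congrFun (congrFun hU (J' (τ m))) (J m)
      rw [Matrix.mul_apply, Matrix.one_apply] at this
      simp only [eq_comm (a := J m)]
      exact this
  simp only [this]
  simp

end integral

end WgProof

/-- **The Weingarten integration formula** for the unitary group.  Here `w = Wg(n,·)` is the
Weingarten function, characterized by the fact that `Σ_σ w(σ)·σ` is the inverse of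
`Σ_σ n^{#σ}·σ` in the group algebra `ℂ[S_p]` (hypothesis `hw`), and `μ` is the Haar
probability measure on `U(n)`, characterized as a left-invariant Borel probability measure. -/
theorem weingarten_integration_formula
    (p n : ℕ) (hp : 1 ≤ p) (hn : p ≤ n)
    (w : Equiv.Perm (Fin p) → ℂ)
    (hw : (∑ σ : Equiv.Perm (Fin p), MonoidAlgebra.single (R := ℂ) σ (w σ)) *
          (∑ σ : Equiv.Perm (Fin p),
            MonoidAlgebra.single (R := ℂ) σ ((n : ℂ) ^ σ.cycleCount)) = 1)
    [MeasurableSpace (Matrix.unitaryGroup (Fin n) ℂ)]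
    [BorelSpace (Matrix.unitaryGroup (Fin n) ℂ)]
    (μ : Measure (Matrix.unitaryGroup (Fin n) ℂ)) [IsProbabilityMeasure μ]
    (hμ : ∀ V : Matrix.unitaryGroup (Fin n) ℂ,
      Measure.map (fun U => V * U) μ = μ)
    (i i' j j' : Fin p → Fin n) :
    ∫ U : Matrix.unitaryGroup (Fin n) ℂ,
        (∏ m, (U : Matrix (Fin n) (Fin n) ℂ) (i m) (j m)) *
          (∏ m, (starRingEnd ℂ) ((U : Matrix (Fin n) (Fin n) ℂ) (i' m) (j' m))) ∂μ =
      ∑ σ : Equiv.Perm (Fin p), ∑ τ : Equiv.Perm (Fin p),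
        (∏ m, if i m = i' (σ m) then (1 : ℂ) else 0) *
          (∏ m, if j m = j' (τ m) then (1 : ℂ) else 0) * w (τ * σ⁻¹) := by
  have hL : ∫ U : Matrix.unitaryGroup (Fin n) ℂ,
        (∏ m, (U : Matrix (Fin n) (Fin n) ℂ) (i m) (j m)) *
          (∏ m, (starRingEnd ℂ) ((U : Matrix (Fin n) (Fin n) ℂ) (i' m) (j' m))) ∂μ =
      WgProof.mom μ j j' i i' := by
    simp only [WgProof.mom, WgProof.tp, Matrix.of_apply, star_prod]
    rfl
  rw [hL]
  obtain ⟨c, hc⟩ := WgProof.span_perm _ (WgProof.mom_comm μ hμ j j') hn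
  have htr : ∀ τ : Equiv.Perm (Fin p), (∏ m, if j m = j' (τ m) then (1 : ℂ) else 0) =
      ∑ ρ : Equiv.Perm (Fin p), (n : ℂ) ^ (τ * ρ⁻¹).cycleCount * c ρ := by
    intro τ
    rw [← WgProof.mom_trace μ j j' τ]
    simp only [hc]
    rw [Finset.sum_comm]
    exact Finset.sum_congr rfl fun ρ _ => WgProof.sum_fix ρ τ (c ρ)
  have hcs : ∀ σ : Equiv.Perm (Fin p), ∑ τ : Equiv.Perm (Fin p),
      (∏ m, if j m = j' (τ m) then (1 : ℂ) else 0) * w (τ * σ⁻¹) = c σ := by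
    intro σ
    simp only [htr, Finset.sum_mul]
    rw [Finset.sum_comm]
    have : ∀ ρ : Equiv.Perm (Fin p), ∑ τ : Equiv.Perm (Fin p),
        (n : ℂ) ^ (τ * ρ⁻¹).cycleCount * c ρ * w (τ * σ⁻¹) = if ρ = σ then c ρ else 0 := by
      intro ρ
      have h := congrArg (fun z => c ρ * z) (WgProof.invert w hw ρ σ)
      simp only [Finset.mul_sum, mul_ite, mul_one, mul_zero] at h
      rw [← h]
      exact Finset.sum_congr rfl fun τ _ => by ring
    simp only [this, Finset.sum_ite_eq', Finset.mem_univ, if_true]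
  rw [hc]
  refine Finset.sum_congr rfl fun σ _ => ?_
  simp only [mul_assoc]
  rw [← Finset.mul_sum, hcs, Finset.prod_ite_zero]
  simp [funext_iff]
end

section
/- Fix an integer p ≥ 1 and a permutation σ ∈ S_p. For n ≥ p let Wg(n,σ) be the unitary Weingarten function. Then lim_{n→∞} n^{p + |σ|} · Wg(n, σ) = Mob(σ), where |σ| = p − #σ and Mob(σ) = Π_{c ∈ Cycles(σ)} (−1)^{ℓ(c)−1} Cat_{ℓ(c)−1}, the product running over the cycles c of σ, ℓ(c) denoting the length of the cycle c, and Cat_i = (2i)!/((i+1)!·i!) the i-th Catalan number. Equivalently, Wg(n,σ) = n^{−(p+|σ|)}(Mob(σ) + O(n^{−2})) as n → ∞. -/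
open Filter Asymptotics

/-- The Möbius function `Mob(σ) = Π_{c ∈ Cycles(σ)} (−1)^{ℓ(c)−1} Cat_{ℓ(c)−1}`.  Cycles of
length one (fixed points) contribute a factor `Cat₀ = 1`, so it suffices to take the product
over the cycle type of `σ` (the multiset of lengths of the nontrivial cycles). -/
noncomputable def Equiv.Perm.mob {p : ℕ} (σ : Equiv.Perm (Fin p)) : ℂ :=
  (σ.cycleType.map fun ℓ => (-1 : ℂ) ^ (ℓ - 1) * (catalan (ℓ - 1) : ℂ)).prod


namespace WgAux

open Equiv Equiv.Perm

/-- A cycle length as a cycle-type multiset (trivial cycles are dropped). -/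
def cyc (k : ℕ) : Multiset ℕ := if 2 ≤ k then {k} else 0

theorem formPerm_append {α : Type*} [DecidableEq α] (y : α) (l₂ : List α) :
    ∀ (l₁ : List α) (x : α), (x :: l₁ ++ y :: l₂).Nodup →
      List.formPerm (x :: l₁ ++ y :: l₂)
        = swap x y * (List.formPerm (x :: l₁) * List.formPerm (y :: l₂)) := by
  intro l₁
  induction l₁ with
  | nil => intro x _; simp [List.formPerm_cons_cons]
  | cons x' l₁ ih =>
    intro x h
    have h' := ih x' (by simp only [List.cons_append, List.nodup_cons] at h ⊢; exact h.2)
    have e1 : List.formPerm (x :: x' :: l₁ ++ y :: l₂)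
        = swap x x' * List.formPerm (x' :: l₁ ++ y :: l₂) := by
      simp [List.formPerm_cons_cons]
    rw [e1, h', List.formPerm_cons_cons]
    simp only [← mul_assoc]
    congr 2
    have hxx' : x ≠ x' := by rintro rfl; simp at h
    have hxy : x ≠ y := by rintro rfl; simp at h
    have hx'y : x' ≠ y := by rintro rfl; simp at h
    have HS : swap x x' * swap x' y * swap x x' = swap y x := by
      have := swap_mul_swap_mul_swap (x := y) (y := x') (z := x) hx'y.symm hxy.symm
      rw [swap_comm x' x, swap_comm y x'] at this
      rw [this, swap_comm]
    calc swap x x' * swap x' y = swap x x' * swap x' y * (swap x x' * swap x x') := by simp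
      _ = (swap x x' * swap x' y * swap x x') * swap x x' := by simp only [mul_assoc]
      _ = swap x y * swap x x' := by rw [HS, swap_comm y x]

theorem cycleType_formPerm' {α : Type*} [DecidableEq α] [Fintype α] (l : List α) (hl : l.Nodup) :
    (List.formPerm l).cycleType = cyc l.length := by
  unfold cyc
  split_ifs with h
  · rw [(List.isCycle_formPerm hl h).cycleType, List.support_formPerm_of_nodup l hl,
      List.toFinset_card_of_nodup hl]
    rintro x rfl
    simp at h
  · rw [cycleType_eq_zero]
    match l, h with
    | [], _ => simp
    | [x], _ => simp
    | _ :: _ :: _, h => simp at h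

theorem disjoint_formPerm {α : Type*} [DecidableEq α] [Fintype α] (l₁ l₂ : List α)
    (h : (l₁ ++ l₂).Nodup) : Disjoint (List.formPerm l₁) (List.formPerm l₂) := by
  rw [disjoint_iff_disjoint_support]
  refine Finset.disjoint_of_subset_left (List.support_formPerm_le l₁)
    (Finset.disjoint_of_subset_right (List.support_formPerm_le l₂) ?_)
  rw [List.disjoint_toFinset_iff_disjoint]
  exact List.disjoint_of_nodup_append h

theorem exists_split {α : Type*} [DecidableEq α] [Fintype α] (σ : Perm α) (x : α) (hx : σ x ≠ x) :
    ∃ T : Multiset ℕ, σ.cycleType = {(σ.cycleOf x).support.card} + T ∧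
      ∀ a, 0 < a → a < (σ.cycleOf x).support.card →
        (swap x ((σ ^ a) x) * σ).cycleType
          = cyc a + cyc ((σ.cycleOf x).support.card - a) + T := by
  set c := σ.cycleOf x with hc
  have hmem : c ∈ σ.cycleFactorsFinset := cycleOf_mem_cycleFactorsFinset_iff.2 (mem_support.2 hx)
  have hdis : Disjoint (σ * c⁻¹) c := disjoint_mul_inv_of_mem_cycleFactorsFinset hmem
  have hcyc : c.IsCycle := isCycle_cycleOf σ hx
  have hσ : σ = c * (σ * c⁻¹) := by
    rw [← hdis.commute.eq]; group
  refine ⟨(σ * c⁻¹).cycleType, ?_, ?_⟩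
  · conv_lhs => rw [hσ]
    rw [hdis.symm.cycleType_mul, hcyc.cycleType]
  · intro a ha hak
    set L := σ.toList x with hL
    have hlen : L.length = c.support.card := length_toList σ x
    have hnd : L.Nodup := nodup_toList σ x
    have hform : List.formPerm L = c := formPerm_toList σ x
    have h1 : L.take a = x :: (L.take a).tail := by
      have h0 : 0 < (L.take a).length := by rw [List.length_take]; omega
      rw [← List.cons_head_tail (List.ne_nil_of_length_pos h0)]
      congr 1
      rw [List.head_take, List.head_eq_getElem]
      simp [hL, getElem_toList]
    have h2 : L.drop a = (σ ^ a) x :: L.drop (a + 1) := by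
      rw [List.drop_eq_getElem_cons (by omega)]
      simp [hL, getElem_toList]
    have h12 : L = x :: (L.take a).tail ++ (σ ^ a) x :: L.drop (a + 1) := by
      rw [← h1, ← h2, List.take_append_drop]
    have key := formPerm_append ((σ ^ a) x) (L.drop (a + 1)) (L.take a).tail x (h12 ▸ hnd)
    rw [← h12, ← h1, ← h2, hform] at key
    have hd12 : Disjoint (List.formPerm (L.take a)) (List.formPerm (L.drop a)) :=
      disjoint_formPerm _ _ (by rw [List.take_append_drop]; exact hnd)
    have hsw : swap x ((σ ^ a) x) * σ
        = List.formPerm (L.take a) * List.formPerm (L.drop a) * (σ * c⁻¹) := by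
      have hk : swap x ((σ ^ a) x) * c
          = List.formPerm (L.take a) * List.formPerm (L.drop a) := by
        conv_lhs => rw [key]
        exact swap_mul_self_mul _ _ _
      calc swap x ((σ ^ a) x) * σ = swap x ((σ ^ a) x) * (c * (σ * c⁻¹)) := by rw [← hσ]
        _ = _ := by rw [← mul_assoc, hk]
    have hdr : ∀ l : List α, l ⊆ L → Disjoint (List.formPerm l) (σ * c⁻¹) := by
      intro l hl
      rw [disjoint_iff_disjoint_support] at hdis ⊢
      refine Finset.disjoint_of_subset_left ?_ hdis.symm
      intro y hy
      have := hl (List.mem_toFinset.1 (List.support_formPerm_le l hy))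
      rw [hL, mem_toList_iff] at this
      rw [hc, mem_support_cycleOf_iff]
      exact this
    have hd : Disjoint (List.formPerm (L.take a) * List.formPerm (L.drop a)) (σ * c⁻¹) :=
      Disjoint.mul_left (hdr _ (List.take_subset _ _)) (hdr _ (List.drop_subset _ _))
    rw [hsw, hd.cycleType_mul, hd12.cycleType_mul,
      cycleType_formPerm' _ (hnd.sublist (List.take_sublist _ _)),
      cycleType_formPerm' _ (hnd.sublist (List.drop_sublist _ _)), List.length_take,
      List.length_drop, hlen, min_eq_left hak.le]

/-- The length `|σ|` of a permutation. -/
def len {α : Type*} [DecidableEq α] [Fintype α] (σ : Perm α) : ℕ :=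
  (σ.cycleType.map fun l => l - 1).sum

theorem len_inv {α : Type*} [DecidableEq α] [Fintype α] (σ : Perm α) : len σ⁻¹ = len σ := by
  simp [len]

theorem cyc_len (a : ℕ) : ((cyc a).map fun l => l - 1).sum = a - 1 := by
  unfold cyc; split_ifs
  · simp
  · simp; omega

theorem sameCycle_swap {α : Type*} [DecidableEq α] [Fintype α] (σ : Perm α) (x y : α)
    (h : ¬ SameCycle σ x y) : SameCycle (swap x y * σ) x y := by
  set τ := swap x y * σ
  have hper : 0 < Function.minimalPeriod σ y :=
    Function.minimalPeriod_pos_of_mem_periodicPts (by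
      exact Function.Injective.mem_periodicPts σ.injective y)
  have hx : ∀ m : ℕ, (σ ^ m) y ≠ x := fun m hm => h (SameCycle.symm ⟨m, by simpa using hm⟩)
  have key : ∀ j, j < Function.minimalPeriod σ y → (τ ^ j) y = (σ ^ j) y := by
    intro j
    induction j with
    | zero => simp
    | succ j ih =>
      intro hj
      rw [pow_succ', pow_succ', Perm.mul_apply, ih (by omega)]
      simp only [τ, Perm.mul_apply]
      apply swap_apply_of_ne_of_ne
      · have := hx (j + 1)
        rwa [pow_succ', Perm.mul_apply] at this
      · intro hh
        have : Function.IsPeriodicPt σ (j + 1) y := by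
          rw [Function.IsPeriodicPt, Function.IsFixedPt, ← Equiv.Perm.coe_pow, pow_succ']
          exact hh
        exact Nat.not_dvd_of_pos_of_lt (by omega) hj this.minimalPeriod_dvd
  refine SameCycle.symm ⟨(Function.minimalPeriod σ y : ℕ), ?_⟩
  obtain ⟨m, hm⟩ : ∃ m, Function.minimalPeriod σ y = m + 1 := ⟨_, (Nat.succ_pred_eq_of_pos hper).symm⟩
  have h2 : (σ ^ (m + 1)) y = y := by
    have := Function.isPeriodicPt_minimalPeriod σ y
    rw [hm, Function.IsPeriodicPt, Function.IsFixedPt, ← Equiv.Perm.coe_pow] at this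
    exact this
  rw [zpow_natCast, hm, pow_succ', Perm.mul_apply, key m (by omega)]
  rw [pow_succ', Perm.mul_apply] at h2
  simp [τ, h2]

theorem apply_ne {α : Type*} {σ : Perm α} {x y : α} (h : SameCycle σ x y) (hxy : x ≠ y) :
    σ x ≠ x := fun hx => hxy (h.eq_of_left hx)

theorem exists_pow {α : Type*} [DecidableEq α] [Fintype α] {σ : Perm α} {x y : α}
    (h : SameCycle σ x y) (hxy : x ≠ y) :
    ∃ a, 0 < a ∧ a < (σ.cycleOf x).support.card ∧ (σ ^ a) x = y := by
  obtain ⟨a, ha, hay⟩ := h.exists_pow_eq_of_mem_support (mem_support.2 (apply_ne h hxy))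
  refine ⟨a, Nat.pos_of_ne_zero ?_, ha, hay⟩
  rintro rfl
  exact hxy (by simpa using hay)

theorem len_swap_of_sameCycle {α : Type*} [DecidableEq α] [Fintype α] {σ : Perm α} {x y : α}
    (h : SameCycle σ x y) (hxy : x ≠ y) : len (swap x y * σ) + 1 = len σ := by
  obtain ⟨a, ha, hak, rfl⟩ := exists_pow h hxy
  obtain ⟨T, hT, hT'⟩ := exists_split σ x (apply_ne h hxy)
  simp only [len]
  rw [hT, hT' a ha hak]
  simp only [Multiset.map_add, Multiset.sum_add, cyc_len, Multiset.map_singleton,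
    Multiset.sum_singleton]
  omega

theorem len_swap_of_not {α : Type*} [DecidableEq α] [Fintype α] {σ : Perm α} {x y : α}
    (h : ¬ SameCycle σ x y) : len (swap x y * σ) = len σ + 1 := by
  have hxy : x ≠ y := by rintro rfl; exact h (SameCycle.refl _ _)
  have := len_swap_of_sameCycle (sameCycle_swap σ x y h) hxy
  rw [← mul_assoc, swap_mul_self, one_mul] at this
  exact this.symm

theorem cycleCount_add_len {p : ℕ} (σ : Perm (Fin p)) : σ.cycleCount + len σ = p := by
  have h1 : len σ + Multiset.card σ.cycleType = σ.support.card := by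
    rw [← sum_cycleType, len]
    have : ∀ s : Multiset ℕ, (∀ l ∈ s, 2 ≤ l) →
        (s.map fun l => l - 1).sum + Multiset.card s = s.sum := by
      intro s
      induction s using Multiset.induction_on with
      | empty => simp
      | cons a s ih =>
        intro h
        have h1 := ih fun l hl => h l (Multiset.mem_cons_of_mem hl)
        have h2 := h a (Multiset.mem_cons_self a s)
        simp
        omega
    exact this _ fun l hl => two_le_of_mem_cycleType hl
  have h2 : (Finset.univ.filter fun x => σ x = x).card + σ.support.card = p := by
    have := Finset.card_filter_add_card_filter_not (s := (Finset.univ : Finset (Fin p)))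
      (fun x => σ x = x)
    simpa [Equiv.Perm.support] using this
  unfold Equiv.Perm.cycleCount
  omega

/-- the local factor -/
noncomputable def fac (l : ℕ) : ℂ := (-1 : ℂ) ^ (l - 1) * (catalan (l - 1) : ℂ)

theorem cyc_fac (a : ℕ) : ((cyc a).map fac).prod = fac a := by
  unfold cyc; split_ifs with h
  · simp
  · have : a - 1 = 0 := by omega
    simp [fac, this]

theorem sum_fac (k : ℕ) :
    ∑ a ∈ Finset.range (k + 1), fac (a + 1) * fac (k + 2 - (a + 1)) = - fac (k + 2) := by
  have : fac (k + 2) = (-1) ^ (k + 1) * ∑ a ∈ Finset.range (k + 1),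
      (catalan a : ℂ) * catalan (k - a) := by
    rw [fac, show k + 2 - 1 = k + 1 by omega, catalan_succ, Finset.sum_range]
    push_cast
    rfl
  rw [this, Finset.mul_sum, ← Finset.sum_neg_distrib]
  refine Finset.sum_congr rfl fun a ha => ?_
  have ha : a ≤ k := by simpa [Nat.lt_succ_iff] using ha
  rw [fac, fac, show a + 1 - 1 = a by omega, show k + 2 - (a + 1) - 1 = k - a by omega]
  have : (-1 : ℂ) ^ k = (-1) ^ a * (-1) ^ (k - a) := by rw [← pow_add]; congr 1; omega
  rw [pow_succ, this]; ring

theorem mob_rec {p : ℕ} (σ : Perm (Fin p)) (x : Fin p) (hx : σ x ≠ x) :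
    σ.mob + ∑ y ∈ Finset.univ.filter (fun y => y ≠ x ∧ SameCycle σ x y), (swap x y * σ).mob
      = 0 := by
  classical
  obtain ⟨T, hT, hT'⟩ := exists_split σ x hx
  set k := (σ.cycleOf x).support.card with hk
  have hk2 : 2 ≤ k := (isCycle_cycleOf σ hx).two_le_card_support
  obtain ⟨m, hm⟩ : ∃ m, k = m + 2 := ⟨k - 2, by omega⟩
  have h1 : σ.mob = fac k * (T.map fac).prod := by
    change (σ.cycleType.map fac).prod = _
    rw [hT]; simp
  have h2 : ∑ y ∈ Finset.univ.filter (fun y => y ≠ x ∧ SameCycle σ x y), (swap x y * σ).mob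
      = ∑ a ∈ Finset.range (m + 1), fac (a + 1) * fac (m + 2 - (a + 1)) * (T.map fac).prod := by
    have hinj : ∀ a b, a < k → b < k → (σ ^ a) x = (σ ^ b) x → a = b := by
      intro a b ha hb hab
      have hlen : (σ.toList x).length = k := length_toList σ x
      refine (List.Nodup.getElem_inj_iff (nodup_toList σ x) (hi := hlen ▸ ha)
        (hj := hlen ▸ hb)).1 ?_
      rw [getElem_toList, getElem_toList]; exact hab
    symm
    refine Finset.sum_bij (fun a _ => (σ ^ (a + 1)) x) ?_ ?_ ?_ ?_
    · intro a ha
      rw [Finset.mem_range] at ha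
      simp only [Finset.mem_filter, Finset.mem_univ, true_and]
      refine ⟨fun h => ?_, ⟨((a + 1 : ℕ) : ℤ), by rw [zpow_natCast]⟩⟩
      have := hinj (a + 1) 0 (by omega) (by omega) (by simpa using h)
      omega
    · intro a ha b hb hab
      rw [Finset.mem_range] at ha hb
      have := hinj (a + 1) (b + 1) (by omega) (by omega) hab
      omega
    · intro y hy
      simp only [Finset.mem_filter, Finset.mem_univ, true_and] at hy
      obtain ⟨a, ha, hak, hay⟩ := exists_pow hy.2 hy.1.symm
      refine ⟨a - 1, ?_, ?_⟩
      · rw [Finset.mem_range]; omega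
      · rw [Nat.sub_add_cancel ha]; exact hay
    · intro a ha
      rw [Finset.mem_range] at ha
      change _ = ((swap x ((σ ^ (a + 1)) x) * σ).cycleType.map fac).prod
      rw [hT' (a + 1) (by omega) (by omega), hm]
      simp [cyc_fac]
  rw [h1, h2, ← Finset.sum_mul, sum_fac, hm]; ring

/-- extend a permutation by fixing `0` -/
def ext {p : ℕ} (e : Perm (Fin p)) : Perm (Fin (p + 1)) := decomposeFin.symm (0, e)

theorem ext_zero {p : ℕ} (e : Perm (Fin p)) : ext e 0 = 0 := by simp [ext]

theorem ext_succ {p : ℕ} (e : Perm (Fin p)) (x : Fin p) : ext e x.succ = (e x).succ := by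
  simp [ext]

theorem ext_mul {p : ℕ} (e f : Perm (Fin p)) : ext (e * f) = ext e * ext f := by
  refine Equiv.ext fun x => ?_
  refine Fin.cases ?_ (fun x => ?_) x
  · simp [ext_zero]
  · simp [ext_succ]

theorem ext_one {p : ℕ} : ext (1 : Perm (Fin p)) = 1 := by
  simp [ext]; rfl

/-- `ext` as a hom. -/
def extHom (p : ℕ) : Perm (Fin p) →* Perm (Fin (p + 1)) where
  toFun := ext
  map_one' := ext_one
  map_mul' := ext_mul

theorem ext_inj {p : ℕ} {e f : Perm (Fin p)} : ext e = ext f ↔ e = f := by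
  simp [ext]

theorem exists_ext {p : ℕ} (σ : Perm (Fin (p + 1))) (h : σ 0 = 0) : ∃ e, σ = ext e := by
  refine ⟨(decomposeFin σ).2, ?_⟩
  have : decomposeFin σ = (0, (decomposeFin σ).2) := by
    refine Prod.ext ?_ rfl
    have h1 := decomposeFin_symm_apply_zero (decomposeFin σ).1 (decomposeFin σ).2
    rw [Prod.mk.eta, Equiv.symm_apply_apply] at h1
    rw [← h1, h]
  rw [ext, ← this, Equiv.symm_apply_apply]

theorem decompose_eq {p : ℕ} (i : Fin (p + 1)) (e : Perm (Fin p)) :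
    decomposeFin.symm (i, e) = swap 0 i * ext e := by
  refine Equiv.ext fun x => ?_
  refine Fin.cases ?_ (fun x => ?_) x
  · simp [ext_zero]
  · simp [ext_succ]

theorem cycleType_ext {p : ℕ} (e : Perm (Fin p)) : (ext e).cycleType = e.cycleType := by
  have : ext e = e.extendDomain (finSuccAboveEquiv (0 : Fin (p + 1))) := by
    refine Equiv.ext fun x => ?_
    refine Fin.cases ?_ (fun x => ?_) x
    · rw [ext_zero, extendDomain_apply_not_subtype]; simp
    · have := extendDomain_apply_image e (finSuccAboveEquiv (0 : Fin (p + 1))) x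
      simp only [finSuccAboveEquiv_apply, Fin.zero_succAbove] at this
      rw [ext_succ, this]
  rw [this, cycleType_extendDomain]

theorem len_ext {p : ℕ} (e : Perm (Fin p)) : len (ext e) = len e := by simp [len, cycleType_ext]

theorem mob_ext {p : ℕ} (e : Perm (Fin p)) : (ext e).mob = e.mob := by
  simp [Equiv.Perm.mob, cycleType_ext]

theorem cycleCount_ext {p : ℕ} (e : Perm (Fin p)) : (ext e).cycleCount = e.cycleCount + 1 := by
  have h1 := cycleCount_add_len e
  have h2 := cycleCount_add_len (ext e)
  rw [len_ext] at h2
  omega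

theorem cycleCount_swap_ext {p : ℕ} (i : Fin p) (e : Perm (Fin p)) :
    (swap 0 i.succ * ext e).cycleCount = e.cycleCount := by
  have h1 := cycleCount_add_len e
  have h2 := cycleCount_add_len (swap 0 i.succ * ext e)
  rw [len_swap_of_not, len_ext] at h2
  · omega
  · intro h
    exact (Fin.succ_ne_zero i).symm (h.eq_of_left (ext_zero e))

/-- Gram element. -/
noncomputable def gram (p : ℕ) (n : ℕ) : MonoidAlgebra ℂ (Perm (Fin p)) :=
  ∑ τ : Perm (Fin p), MonoidAlgebra.single (R := ℂ) τ ((n : ℂ) ^ τ.cycleCount)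

/-- shifted Jucys-Murphy element. -/
noncomputable def jm (p : ℕ) (n : ℕ) : MonoidAlgebra ℂ (Perm (Fin (p + 1))) :=
  MonoidAlgebra.single 1 (n : ℂ) + ∑ i : Fin p, MonoidAlgebra.single (swap 0 i.succ) 1

theorem gram_succ (p n : ℕ) :
    gram (p + 1) n = jm p n * ∑ e : Perm (Fin p),
      MonoidAlgebra.single (R := ℂ) (ext e) ((n : ℂ) ^ e.cycleCount) := by
  rw [gram, ← Equiv.sum_comp decomposeFin.symm, Fintype.sum_prod_type, Fin.sum_univ_succ, jm,
    add_mul, Finset.sum_mul]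
  congr 1
  · rw [Finset.mul_sum]
    refine Finset.sum_congr rfl fun e _ => ?_
    rw [MonoidAlgebra.single_mul_single, decompose_eq, swap_self]
    change MonoidAlgebra.single (ext e) ((n : ℂ) ^ (ext e).cycleCount) = _
    rw [cycleCount_ext, one_mul, pow_succ']
  · refine Finset.sum_congr rfl fun i _ => ?_
    rw [Finset.mul_sum]
    refine Finset.sum_congr rfl fun e _ => ?_
    rw [MonoidAlgebra.single_mul_single, decompose_eq, cycleCount_swap_ext, one_mul]

theorem coeff_sum_apply' {ι G : Type*} (s : Finset ι) (f : ι → MonoidAlgebra ℂ G) (g : G) :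
    (∑ i ∈ s, f i).coeff g = ∑ i ∈ s, (f i).coeff g := by
  rw [MonoidAlgebra.coeff_sum, Finsupp.finsetSum_apply]

theorem sum_single_apply' {G : Type*} [Fintype G] (w : G → ℂ) (g : G) :
    (∑ τ : G, MonoidAlgebra.single (R := ℂ) τ (w τ)).coeff g = w g := by
  classical
  rw [coeff_sum_apply']
  simp [Finsupp.single_apply]

theorem jm_mul_apply {p : ℕ} (n : ℕ) (W : MonoidAlgebra ℂ (Perm (Fin (p + 1)))) (σ) :
    (W * jm p n).coeff σ = n * W.coeff σ + ∑ i : Fin p, W.coeff (σ * swap 0 i.succ) := by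
  rw [jm, mul_add, Finset.mul_sum, MonoidAlgebra.coeff_add, Finsupp.add_apply, coeff_sum_apply']
  simp [MonoidAlgebra.coeff_mul_single_apply, mul_comm]

theorem alg_rec {p n : ℕ} (w : Perm (Fin (p + 1)) → ℂ)
    (hw : (∑ τ, MonoidAlgebra.single (R := ℂ) τ (w τ)) * gram (p + 1) n = 1) :
    (∑ e : Perm (Fin p), MonoidAlgebra.single (R := ℂ) e
      (n * w (ext e) + ∑ i : Fin p, w (ext e * swap 0 i.succ))) * gram p n = 1 ∧
    ∀ σ : Perm (Fin (p + 1)), σ 0 ≠ 0 → n * w σ + ∑ i : Fin p, w (σ * swap 0 i.succ) = 0 := by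
  classical
  set X := (∑ τ, MonoidAlgebra.single (R := ℂ) τ (w τ)) * jm p n with hX
  set Y : MonoidAlgebra ℂ (Perm (Fin p)) := ∑ e : Perm (Fin p), MonoidAlgebra.single (R := ℂ) e
      (n * w (ext e) + ∑ i : Fin p, w (ext e * swap 0 i.succ)) with hY
  have hXa : ∀ σ, X.coeff σ = n * w σ + ∑ i : Fin p, w (σ * swap 0 i.succ) := by
    intro σ
    rw [hX, jm_mul_apply]
    simp only [sum_single_apply']
  have hYa : ∀ e, Y.coeff e = X.coeff (ext e) := by
    intro e
    rw [hXa, hY, sum_single_apply']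
  set G' := ∑ e : Perm (Fin p),
      MonoidAlgebra.single (R := ℂ) (ext e) ((n : ℂ) ^ e.cycleCount) with hG'
  have hXG : X * G' = 1 := by
    rw [hX, mul_assoc, ← gram_succ, hw]
  have hYG : Y * gram p n = 1 := by
    refine MonoidAlgebra.coeff_injective <| Finsupp.ext fun e => ?_
    have h1 : (Y * gram p n).coeff e = (X * G').coeff (ext e) := by
      rw [gram, hG', Finset.mul_sum, Finset.mul_sum, coeff_sum_apply',
        coeff_sum_apply']
      refine Finset.sum_congr rfl fun f _ => ?_
      rw [MonoidAlgebra.coeff_mul_single_apply, MonoidAlgebra.coeff_mul_single_apply, hYa, ext_mul]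
      congr 3
      exact (map_inv (extHom p) f)
    rw [h1, hXG, MonoidAlgebra.one_def, MonoidAlgebra.one_def, MonoidAlgebra.coeff_single, Finsupp.single_apply,
      MonoidAlgebra.coeff_single, Finsupp.single_apply]
    simp only [← ext_one (p := p), ext_inj]
  refine ⟨hYG, fun σ hσ => ?_⟩
  rw [← hXa]
  let ι := MonoidAlgebra.mapDomainRingHom ℂ (extHom p)
  have hι : ∀ u : Perm (Fin p) → ℂ, ι (∑ e, MonoidAlgebra.single (R := ℂ) e (u e))
      = ∑ e, MonoidAlgebra.single (R := ℂ) (ext e) (u e) := by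
    intro u
    rw [map_sum]
    refine Finset.sum_congr rfl fun e _ => ?_
    simp [ι, extHom]
  have hιG : ι (gram p n) = G' := hι _
  have h1 : ι Y * G' = 1 := by rw [← hιG, ← map_mul, hYG, map_one]
  have : IsArtinianRing (MonoidAlgebra ℂ (Perm (Fin (p + 1)))) := IsArtinianRing.of_finite ℂ _
  have h2 : G' * X = 1 := mul_eq_one_symm hXG
  have h3 : X = ι Y := by
    calc X = (ι Y * G') * X := by rw [h1, one_mul]
      _ = ι Y := by rw [mul_assoc, h2, mul_one]
  rw [h3, hY, hι, coeff_sum_apply']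
  refine Finset.sum_eq_zero fun e _ => ?_
  rw [MonoidAlgebra.coeff_single, Finsupp.single_apply, if_neg]
  rintro rfl
  exact hσ (ext_zero e)

theorem len_mul_swap_of_sameCycle {p : ℕ} {σ : Perm (Fin p)} {x y : Fin p}
    (h : SameCycle σ x y) (hxy : x ≠ y) : len (σ * swap x y) + 1 = len σ := by
  have := len_swap_of_sameCycle (sameCycle_inv.2 h) hxy
  rw [len_inv, ← len_inv (swap x y * σ⁻¹)] at this
  simpa using this

theorem len_mul_swap_of_not {p : ℕ} {σ : Perm (Fin p)} {x y : Fin p}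
    (h : ¬ SameCycle σ x y) : len (σ * swap x y) = len σ + 1 := by
  have := len_swap_of_not (fun h' => h (sameCycle_inv.1 h'))
  rw [len_inv, ← len_inv (swap x y * σ⁻¹)] at this
  simpa using this

theorem mob_inv {p : ℕ} (σ : Perm (Fin p)) : σ⁻¹.mob = σ.mob := by
  simp [Equiv.Perm.mob]

open Classical in
theorem mob_rec' {p : ℕ} (σ : Perm (Fin (p + 1))) (h : σ 0 ≠ 0) :
    σ.mob + ∑ i : Fin p, (if SameCycle σ 0 i.succ then (σ * swap 0 i.succ).mob else 0) = 0 := by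
  have := mob_rec σ⁻¹ 0 (fun h' => h (by rw [inv_eq_iff_eq] at h'; exact h'.symm))
  rw [mob_inv, Finset.sum_filter, Fin.sum_univ_succ] at this
  simp only [ne_eq, not_true_eq_false, false_and, if_false, zero_add, Fin.succ_ne_zero,
    not_false_eq_true, true_and, sameCycle_inv] at this
  refine Eq.trans ?_ this
  congr 1
  refine Finset.sum_congr rfl fun i _ => ?_
  rw [← mob_inv (σ * swap 0 i.succ)]
  simp

theorem not_same {p : ℕ} (σ : Perm (Fin (p + 1))) (h : σ 0 = 0) (i : Fin p) :
    ¬ SameCycle σ 0 i.succ := fun h' => (Fin.succ_ne_zero i).symm (h'.eq_of_left h)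

open Classical in
theorem d_rec {p n : ℕ} (hn : n ≠ 0) (w : Perm (Fin (p + 1)) → ℂ)
    (hz : ∀ σ : Perm (Fin (p + 1)), σ 0 ≠ 0 →
      n * w σ + ∑ i : Fin p, w (σ * swap 0 i.succ) = 0) (σ : Perm (Fin (p + 1))) :
    (n : ℂ) ^ (p + 1 + len σ) * w σ - σ.mob =
      (if σ 0 = 0 then (n : ℂ) ^ (p + len σ) * (n * w σ + ∑ i : Fin p, w (σ * swap 0 i.succ))
        - σ.mob else 0)
      - ∑ i : Fin p, (if SameCycle σ 0 i.succ then
          (n : ℂ) ^ (p + 1 + len (σ * swap 0 i.succ)) * w (σ * swap 0 i.succ)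
            - (σ * swap 0 i.succ).mob
        else ((n : ℂ) ^ 2)⁻¹ *
          ((n : ℂ) ^ (p + 1 + len (σ * swap 0 i.succ)) * w (σ * swap 0 i.succ))) := by
  have hn' : (n : ℂ) ≠ 0 := Nat.cast_ne_zero.2 hn
  have hterm : ∀ i : Fin p, (if SameCycle σ 0 i.succ then
          (n : ℂ) ^ (p + 1 + len (σ * swap 0 i.succ)) * w (σ * swap 0 i.succ)
            - (σ * swap 0 i.succ).mob
        else ((n : ℂ) ^ 2)⁻¹ *
          ((n : ℂ) ^ (p + 1 + len (σ * swap 0 i.succ)) * w (σ * swap 0 i.succ)))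
      = (n : ℂ) ^ (p + len σ) * w (σ * swap 0 i.succ)
        - (if SameCycle σ 0 i.succ then (σ * swap 0 i.succ).mob else 0) := by
    intro i
    split_ifs with h
    · rw [← len_mul_swap_of_sameCycle h (Fin.succ_ne_zero i).symm]
      congr 3; omega
    · rw [len_mul_swap_of_not h]
      field_simp
      ring
  rw [Finset.sum_congr rfl fun i _ => hterm i, Finset.sum_sub_distrib, ← Finset.mul_sum]
  have hpow : (n : ℂ) ^ (p + 1 + len σ) = (n : ℂ) ^ (p + len σ) * n := by
    rw [← pow_succ]; congr 1; omega
  rw [hpow]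
  split_ifs with h
  · have : ∑ i : Fin p, (if SameCycle σ 0 i.succ then (σ * swap 0 i.succ).mob else 0) = 0 :=
      Finset.sum_eq_zero fun i _ => if_neg (not_same σ h i)
    rw [this]; ring
  · linear_combination (n : ℂ) ^ (p + len σ) * hz σ h - mob_rec' σ h

open Classical in
theorem main_bigO (p : ℕ) : ∀ (w : ℕ → Perm (Fin p) → ℂ),
    (∀ᶠ n : ℕ in atTop, (∑ τ, MonoidAlgebra.single (R := ℂ) τ (w n τ)) * gram p n = 1) →
    ∀ σ : Perm (Fin p), (fun n : ℕ => (n : ℂ) ^ (p + len σ) * w n σ - σ.mob)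
      =O[atTop] fun n : ℕ => ((n : ℝ) ^ 2)⁻¹ := by
  induction p with
  | zero =>
    intro w hw σ
    refine IsBigO.congr' (isBigO_zero _ atTop) ?_ EventuallyEq.rfl
    filter_upwards [hw] with n hn
    obtain rfl : σ = 1 := Subsingleton.elim _ _
    have hl : len (1 : Perm (Fin 0)) = 0 := by simp [len]
    have hc : (1 : Perm (Fin 0)).cycleCount = 0 := by
      have := cycleCount_add_len (1 : Perm (Fin 0)); omega
    rw [gram] at hn
    simp only [Finset.univ_unique, Finset.sum_singleton, Perm.default_eq] at hn
    rw [MonoidAlgebra.single_mul_single, MonoidAlgebra.one_def] at hn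
    have h1 := congrArg (fun z => z.coeff 1) hn
    simp only [hc, MonoidAlgebra.coeff_single] at h1
    simp at h1
    simp [hl, h1, Equiv.Perm.mob]
  | succ p ih =>
    intro w hw
    set w' : ℕ → Perm (Fin p) → ℂ := fun n e =>
      n * w n (ext e) + ∑ i : Fin p, w n (ext e * swap 0 i.succ) with hw'
    have hIH := ih w' (by filter_upwards [hw] with n hn using (alg_rec (w n) hn).1)
    set u : ℕ → Perm (Fin (p + 1)) → ℂ := fun n σ => (n : ℂ) ^ (p + 1 + len σ) * w n σ with hu
    set U : ℕ → ℝ := fun n => ∑ σ, ‖u n σ‖ with hU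
    have hU0 : ∀ n, 0 ≤ U n := fun n => Finset.sum_nonneg fun _ _ => norm_nonneg _
    set g : ℕ → ℝ := fun n => ((n : ℝ) ^ 2)⁻¹ * (U n + 1) with hg
    have hεg : (fun n : ℕ => ((n : ℝ) ^ 2)⁻¹) =O[atTop] g := by
      refine IsBigO.of_bound 1 (Eventually.of_forall fun n => ?_)
      have h1 : 0 ≤ ((n : ℝ) ^ 2)⁻¹ := by positivity
      have := hU0 n
      rw [hg, one_mul, Real.norm_of_nonneg h1, Real.norm_of_nonneg (by positivity)]
      nlinarith
    have hug : ∀ σ, (fun n : ℕ => ((n : ℂ) ^ 2)⁻¹ * u n σ) =O[atTop] g := by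
      intro σ
      refine IsBigO.of_bound 1 (Eventually.of_forall fun n => ?_)
      have h1 : 0 ≤ ((n : ℝ) ^ 2)⁻¹ := by positivity
      have := hU0 n
      have h2 : ‖u n σ‖ ≤ U n :=
        Finset.single_le_sum (f := fun σ => ‖u n σ‖) (fun _ _ => norm_nonneg _) (Finset.mem_univ σ)
      rw [hg, one_mul, Real.norm_of_nonneg (by positivity), norm_mul, norm_inv, norm_pow,
        Complex.norm_natCast]
      exact mul_le_mul_of_nonneg_left (by linarith) h1
    have hd : ∀ k, ∀ σ, len σ = k → (fun n => u n σ - σ.mob) =O[atTop] g := by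
      intro k
      induction k using Nat.strong_induction_on with
      | _ k ihk =>
        intro σ hσ
        have hD : (fun n : ℕ => if σ 0 = 0 then (n : ℂ) ^ (p + len σ) *
            (n * w n σ + ∑ i : Fin p, w n (σ * swap 0 i.succ)) - σ.mob else 0) =O[atTop] g := by
          split_ifs with h
          · obtain ⟨e, rfl⟩ := exists_ext σ h
            have := (hIH e).trans hεg
            simpa only [len_ext, mob_ext] using this
          · exact isBigO_zero _ _
        have hS : ∀ i ∈ (Finset.univ : Finset (Fin p)),
            (fun n : ℕ => if SameCycle σ 0 i.succ then
              u n (σ * swap 0 i.succ) - (σ * swap 0 i.succ).mob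
              else ((n : ℂ) ^ 2)⁻¹ * u n (σ * swap 0 i.succ)) =O[atTop] g := by
          intro i _
          split_ifs with h
          · have hl := len_mul_swap_of_sameCycle h (Fin.succ_ne_zero i).symm
            exact ihk (len (σ * swap 0 i.succ)) (by omega) _ rfl
          · exact hug _
        refine (hD.sub (IsBigO.sum hS)).congr' ?_ EventuallyEq.rfl
        filter_upwards [hw, eventually_ne_atTop 0] with n hn hn0
        have := d_rec hn0 (w n) (alg_rec (w n) hn).2 σ
        simp only [hu, Finset.sum_apply]
        exact this.symm
    have hF : (fun n => ∑ σ, ‖u n σ - σ.mob‖) =O[atTop] g := by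
      have := IsBigO.sum (s := Finset.univ) fun σ _ => (hd _ σ rfl).norm_left
      refine this.congr_left fun n => ?_
      simp only [Finset.sum_apply]
    obtain ⟨C, hCpos, hC⟩ := hF.exists_pos
    rw [IsBigOWith] at hC
    have hε0 : Tendsto (fun n : ℕ => ((n : ℝ) ^ 2)⁻¹) atTop (nhds 0) :=
      tendsto_inv_atTop_zero.comp
        ((tendsto_pow_atTop two_ne_zero).comp tendsto_natCast_atTop_atTop)
    have hsmall : ∀ᶠ n : ℕ in atTop, ((n : ℝ) ^ 2)⁻¹ < 1 / (2 * C) :=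
      hε0.eventually_lt_const (by positivity)
    set M : ℝ := ∑ σ : Perm (Fin (p + 1)), ‖σ.mob‖ with hM
    have hgε : g =O[atTop] fun n : ℕ => ((n : ℝ) ^ 2)⁻¹ := by
      refine IsBigO.of_bound (2 * M + 2) ?_
      filter_upwards [hC, hsmall] with n h1 h2
      have h0 : 0 ≤ ((n : ℝ) ^ 2)⁻¹ := by positivity
      have hUn := hU0 n
      have h3 : U n ≤ M + ∑ σ, ‖u n σ - σ.mob‖ := by
        rw [hM, ← Finset.sum_add_distrib]
        refine Finset.sum_le_sum fun σ _ => ?_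
        have := norm_add_le (σ.mob) (u n σ - σ.mob)
        simpa using this
      rw [Real.norm_of_nonneg (Finset.sum_nonneg fun _ _ => norm_nonneg _), hg,
        Real.norm_of_nonneg (by positivity)] at h1
      have h4 : C * ((n : ℝ) ^ 2)⁻¹ ≤ 1 / 2 := by
        have := mul_le_mul_of_nonneg_left h2.le hCpos.le
        refine this.trans (le_of_eq ?_)
        field_simp
      have h5 : U n ≤ 2 * M + 1 := by nlinarith
      rw [hg, Real.norm_of_nonneg (by positivity), Real.norm_of_nonneg h0]
      change ((n : ℝ) ^ 2)⁻¹ * (U n + 1) ≤ (2 * M + 2) * ((n : ℝ) ^ 2)⁻¹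
      nlinarith
    intro σ
    exact (hd _ σ rfl).trans hgε

end WgAux

/-- **First-order asymptotics of the Weingarten function**: for a fixed permutation `σ ∈ S_p`,
`n^{p+|σ|}·Wg(n,σ) → Mob(σ)` as `n → ∞`, and moreover
`Wg(n,σ) = n^{−(p+|σ|)}(Mob(σ) + O(n^{−2}))`.  Here `|σ| = p − #σ`, and `Wg(n,·)` is
characterized (for `n ≥ p`) by the fact that `Σ_τ Wg(n,τ)·τ` is the inverse of
`Σ_τ n^{#τ}·τ` in the group algebra `ℂ[S_p]` (hypothesis `hw`). -/
theorem weingarten_asymptotics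
    (p : ℕ) (hp : 1 ≤ p) (σ : Equiv.Perm (Fin p))
    (w : ℕ → Equiv.Perm (Fin p) → ℂ)
    (hw : ∀ n : ℕ, p ≤ n →
      (∑ τ : Equiv.Perm (Fin p), MonoidAlgebra.single (R := ℂ) τ (w n τ)) *
        (∑ τ : Equiv.Perm (Fin p),
          MonoidAlgebra.single (R := ℂ) τ ((n : ℂ) ^ τ.cycleCount)) = 1) :
    Tendsto (fun n : ℕ => (n : ℂ) ^ (p + (p - σ.cycleCount)) * w n σ)
        atTop (nhds σ.mob) ∧
      (fun n : ℕ => (n : ℂ) ^ (p + (p - σ.cycleCount)) * w n σ - σ.mob)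
        =O[atTop] fun n : ℕ => ((n : ℝ) ^ 2)⁻¹ := by
  have hlen : p - σ.cycleCount = WgAux.len σ := by
    have := WgAux.cycleCount_add_len σ
    omega
  rw [hlen]
  have hO := WgAux.main_bigO p w (eventually_atTop.2 ⟨p, fun n hn => hw n hn⟩) σ
  refine ⟨?_, hO⟩
  have hε0 : Tendsto (fun n : ℕ => ((n : ℝ) ^ 2)⁻¹) atTop (nhds 0) :=
    tendsto_inv_atTop_zero.comp
      ((tendsto_pow_atTop two_ne_zero).comp tendsto_natCast_atTop_atTop)
  exact tendsto_sub_nhds_zero_iff.1 (hO.trans_tendsto hε0)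
end

section
/- Let c ∈ (0,∞) and let (s_d)_{d≥1} be positive integers with s_d/d → c as d → ∞. On a common probability space, let (X_d)_{d≥1} be independent random matrices, where X_d ∈ M_{d×s_d}(ℂ) has i.i.d. standard complex Gaussian entries, and set W_d = X_d X_d*. Then almost surely, the empirical eigenvalue distribution of W_d/d converges weakly to the Marčenko–Pastur distribution π_c: for every bounded continuous f : ℝ → ℝ, (1/d) Σ_{i=1}^d f(λ_i(W_d/d)) → ∫ f dπ_c almost surely, where λ₁,…,λ_d are the eigenvalues of the positive-semidefinite matrix W_d/d and π_c = max(1−c,0)·δ₀ + [√((b−x)(x−a))/(2πx)]·1_{(a,b)}(x) dx with a = (1−√c)² and b = (1+√c)². -/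
open MeasureTheory ProbabilityTheory Filter

/-- The standard complex Gaussian distribution: the law of `(g₁ + i·g₂)/√2` where `g₁, g₂` are
independent real `N(0,1)` variables; it satisfies `E|z|² = 1`. -/
noncomputable def stdComplexGaussian : Measure ℂ :=
  Measure.map (fun p : ℝ × ℝ => (p.1 + p.2 * Complex.I) / (Real.sqrt 2 : ℝ))
    ((gaussianReal 0 1).prod (gaussianReal 0 1))

/-- The Marčenko–Pastur distribution `π_c = max(1−c,0)·δ₀ + √((b−x)(x−a))/(2πx)·1_{(a,b)} dx`
with `a = (1−√c)²`, `b = (1+√c)²`. -/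
noncomputable def marchenkoPastur (c : ℝ) : Measure ℝ :=
  ENNReal.ofReal (max (1 - c) 0) • Measure.dirac 0 +
    volume.withDensity fun x =>
      ENNReal.ofReal
        (if (1 - Real.sqrt c) ^ 2 < x ∧ x < (1 + Real.sqrt c) ^ 2 then
          Real.sqrt (((1 + Real.sqrt c) ^ 2 - x) * (x - (1 - Real.sqrt c) ^ 2)) /
            (2 * Real.pi * x)
        else 0)

set_option linter.unusedSectionVars false
set_option linter.unusedVariables false

section LinAlg
open Matrix ComplexOrder

variable {n : Type*} [Fintype n] [DecidableEq n]

/-- the resolvent `(B + t)⁻¹` -/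
noncomputable def mpRes (t : ℝ) (B : Matrix n n ℂ) : Matrix n n ℂ := (B + (t : ℂ) • 1)⁻¹

lemma mp_posDef {t : ℝ} (ht : 0 < t) {B : Matrix n n ℂ} (hB : B.PosSemidef) :
    (B + (t : ℂ) • 1).PosDef := by
  refine Matrix.PosDef.posSemidef_add hB ?_
  exact Matrix.PosDef.smul Matrix.PosDef.one (by exact_mod_cast ht)

lemma mpRes_posDef {t : ℝ} (ht : 0 < t) {B : Matrix n n ℂ} (hB : B.PosSemidef) :
    (mpRes t B).PosDef := (mp_posDef ht hB).inv

lemma mpRes_mul {t : ℝ} (ht : 0 < t) {B : Matrix n n ℂ} (hB : B.PosSemidef) :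
    mpRes t B * (B + (t : ℂ) • 1) = 1 :=
  Matrix.nonsing_inv_mul _ ((Matrix.isUnit_iff_isUnit_det _).1 (mp_posDef ht hB).isUnit)

lemma mul_mpRes {t : ℝ} (ht : 0 < t) {B : Matrix n n ℂ} (hB : B.PosSemidef) :
    (B + (t : ℂ) • 1) * mpRes t B = 1 :=
  Matrix.mul_nonsing_inv _ ((Matrix.isUnit_iff_isUnit_det _).1 (mp_posDef ht hB).isUnit)

lemma mp_quad_real {M : Matrix n n ℂ} (hM : M.PosSemidef) (x : n → ℂ) :
    ((star x ⬝ᵥ (M *ᵥ x)).re : ℂ) = star x ⬝ᵥ (M *ᵥ x) := by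
  have h := hM.dotProduct_mulVec_nonneg x
  rw [Complex.nonneg_iff] at h
  apply Complex.ext <;> simp [← h.2]

lemma mp_quad_nonneg {M : Matrix n n ℂ} (hM : M.PosSemidef) (x : n → ℂ) :
    0 ≤ (star x ⬝ᵥ (M *ᵥ x)).re := hM.re_dotProduct_nonneg x

/-- rank one update -/
lemma mp_rank_one {t : ℝ} (ht : 0 < t) {B : Matrix n n ℂ} (hB : B.PosSemidef) (x : n → ℂ) (q : ℝ)
    (hq : q = (star x ⬝ᵥ (mpRes t B *ᵥ x)).re) :
    (star x ⬝ᵥ (mpRes t (B + vecMulVec x (star x)) *ᵥ x)).re = q / (1 + q) ∧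
    |(mpRes t (B + vecMulVec x (star x))).trace.re - (mpRes t B).trace.re| ≤ 1 / t := by
  set A := B + vecMulVec x (star x) with hA
  have hAp : A.PosSemidef := hB.add (posSemidef_vecMulVec_self_star x)
  have hq0 : 0 ≤ q := hq ▸ mp_quad_nonneg (mpRes_posDef ht hB).posSemidef x
  have hqc : (q : ℂ) = star x ⬝ᵥ (mpRes t B *ᵥ x) := by
    rw [hq]; exact mp_quad_real (mpRes_posDef ht hB).posSemidef x
  have hne : (1 + q : ℂ) ≠ 0 := by
    have : (0:ℝ) < 1 + q := by linarith
    exact_mod_cast this.ne'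
  set y := mpRes t B *ᵥ x with hy
  have hBy : (B + (t : ℂ) • 1) *ᵥ y = x := by
    rw [hy, mulVec_mulVec, mul_mpRes ht hB, one_mulVec]
  have hAy : (A + (t : ℂ) • 1) *ᵥ y = (1 + q : ℂ) • x := by
    have : A + (t : ℂ) • 1 = (B + (t : ℂ) • 1) + vecMulVec x (star x) := by rw [hA]; abel
    rw [this, add_mulVec, hBy, vecMulVec_mulVec, ← hqc, add_smul, one_smul, op_smul_eq_smul]
  have hGx : mpRes t A *ᵥ x = (1 + q : ℂ)⁻¹ • y := by
    have h1 : mpRes t A *ᵥ ((A + (t : ℂ) • 1) *ᵥ y) = y := by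
      rw [mulVec_mulVec, mpRes_mul ht hAp, one_mulVec]
    rw [hAy, mulVec_smul] at h1
    rw [← h1, smul_smul, inv_mul_cancel₀ hne, one_smul]
  constructor
  · rw [hGx, dotProduct_smul, ← hqc, smul_eq_mul]
    have : ((1 + q : ℂ)⁻¹ * q) = ((q / (1 + q) : ℝ) : ℂ) := by push_cast; field_simp
    rw [this, Complex.ofReal_re]
  · have hres : mpRes t B - mpRes t A = (1 + q : ℂ)⁻¹ • vecMulVec y (star y) := by
      have h1 : mpRes t B - mpRes t A = mpRes t A * (vecMulVec x (star x)) * mpRes t B := by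
        have : vecMulVec x (star x) = (A + (t : ℂ) • 1) - (B + (t : ℂ) • 1) := by rw [hA]; abel
        rw [this, mul_sub, sub_mul, mpRes_mul ht hAp, mul_assoc, mul_mpRes ht hB, one_mul, mul_one]
      rw [h1, mul_vecMulVec, vecMulVec_mul, hGx, smul_vecMulVec]
      congr 2
      rw [hy, star_mulVec, (mpRes_posDef ht hB).1]
    have htr : (mpRes t B).trace - (mpRes t A).trace = (1 + q : ℂ)⁻¹ * (star y ⬝ᵥ y) := by
      rw [← trace_sub, hres, trace_smul, trace_vecMulVec, dotProduct_comm, smul_eq_mul]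
    have hyy : t * (star y ⬝ᵥ y).re ≤ q := by
      have h2 : (star y ⬝ᵥ ((B + (t : ℂ) • 1) *ᵥ y)) = q := by
        rw [hBy, hqc]
        nth_rw 1 [hy]
        rw [star_mulVec, (mpRes_posDef ht hB).1, ← dotProduct_mulVec]
      have h3 := mp_quad_nonneg hB y
      rw [add_mulVec, dotProduct_add, smul_mulVec, one_mulVec, dotProduct_smul, smul_eq_mul] at h2
      have h4 := congrArg Complex.re h2
      simp at h4
      linarith
    have hyr : ((star y ⬝ᵥ y).re : ℂ) = star y ⬝ᵥ y := by
      have := mp_quad_real (M := (1 : Matrix n n ℂ)) PosSemidef.one y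
      simpa using this
    have hy0 : 0 ≤ (star y ⬝ᵥ y).re := by
      have := mp_quad_nonneg (M := (1 : Matrix n n ℂ)) PosSemidef.one y
      simpa using this
    have h5 : (mpRes t B).trace.re - (mpRes t A).trace.re = (star y ⬝ᵥ y).re / (1 + q) := by
      rw [← Complex.sub_re, htr, ← hyr]
      have : ((1 + q : ℂ)⁻¹ * ((star y ⬝ᵥ y).re : ℂ)) = (((star y ⬝ᵥ y).re / (1 + q) : ℝ) : ℂ) := by
        push_cast; field_simp
      rw [this, Complex.ofReal_re, Complex.ofReal_re]
    rw [abs_sub_comm, h5, abs_of_nonneg (by positivity), div_le_div_iff₀ (by positivity) ht]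
    nlinarith

lemma mp_trace_re_nonneg {t : ℝ} (ht : 0 < t) {B : Matrix n n ℂ} (hB : B.PosSemidef) :
    0 ≤ (mpRes t B).trace.re := by
  have := (mpRes_posDef ht hB).posSemidef.trace_nonneg
  exact (Complex.nonneg_iff.1 this).1

/-- column decomposition -/
lemma mp_colsum {m : Type*} [Fintype m] [DecidableEq m] (Y : Matrix n m ℂ) :
    Y * Yᴴ = ∑ k, vecMulVec (Y.col k) (star (Y.col k)) := by
  ext i j
  simp [Matrix.mul_apply, Matrix.sum_apply, vecMulVec_apply]

lemma mp_updateCol {m : Type*} [Fintype m] [DecidableEq m] (Y : Matrix n m ℂ) (k : m) :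
    Y * Yᴴ = (Y.updateCol k 0) * (Y.updateCol k 0)ᴴ + vecMulVec (Y.col k) (star (Y.col k)) := by
  ext i j
  simp only [Matrix.mul_apply, Matrix.add_apply, vecMulVec_apply, conjTranspose_apply]
  rw [← Finset.add_sum_erase _ _ (Finset.mem_univ k),
    ← Finset.add_sum_erase Finset.univ (fun x => Y.updateCol k 0 i x * _) (Finset.mem_univ k)]
  rw [add_comm]
  simp only [updateCol_self]
  have : ∀ x ∈ Finset.univ.erase k, Y.updateCol k 0 i x * star (Y.updateCol k 0 j x)
      = Y i x * star (Y j x) := by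
    intro x hx
    rw [updateCol_ne (Finset.ne_of_mem_erase hx), updateCol_ne (Finset.ne_of_mem_erase hx)]
  rw [Finset.sum_congr rfl this]
  simp

lemma mp_trace_identity {m : Type*} [Fintype m] [DecidableEq m] {t : ℝ} (ht : 0 < t)
    (Y : Matrix n m ℂ) :
    (Fintype.card n : ℝ) = t * (mpRes t (Y * Yᴴ)).trace.re +
      ∑ k, (star (Y.col k) ⬝ᵥ (mpRes t (Y * Yᴴ) *ᵥ (Y.col k))).re := by
  have h := mpRes_mul ht (posSemidef_self_mul_conjTranspose Y)
  have h1 := congrArg (fun M => (Matrix.trace M).re) h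
  simp only [mul_add, trace_add, trace_one, Matrix.mul_smul, mul_one, trace_smul, smul_eq_mul,
    Complex.add_re, Complex.re_ofReal_mul, Complex.natCast_re] at h1
  rw [← h1, add_comm]
  congr 1
  nth_rw 2 [mp_colsum Y]
  rw [Finset.mul_sum, trace_sum, Complex.re_sum]
  refine Finset.sum_congr rfl fun k _ => ?_
  rw [mul_vecMulVec, trace_vecMulVec, dotProduct_comm]

/-- the deterministic inequality, in normalized form -/
lemma mp_det_bound {m : Type*} [Fintype m] [DecidableEq m] {t : ℝ} (ht : 0 < t)
    (Y : Matrix n m ℂ) (D : ℝ) (hD : 0 < D) (hDn : D = Fintype.card n) (μ : ℝ)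
    (hμ : μ = (mpRes t (Y * Yᴴ)).trace.re / D) :
    |1 - t * μ - (Fintype.card m / D) * (μ / (1 + μ))| ≤
      (1 / D) * ∑ k, |(star (Y.col k) ⬝ᵥ
        (mpRes t ((Y.updateCol k 0) * (Y.updateCol k 0)ᴴ) *ᵥ (Y.col k))).re -
          (mpRes t ((Y.updateCol k 0) * (Y.updateCol k 0)ᴴ)).trace.re / D|
      + (Fintype.card m / D) * (1 / (D * t)) := by
  have hμ0 : 0 ≤ μ := by
    rw [hμ]
    exact div_nonneg (mp_trace_re_nonneg ht (posSemidef_self_mul_conjTranspose Y)) hD.le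
  have hid := mp_trace_identity ht Y
  rw [← hDn] at hid
  set q : m → ℝ := fun k => (star (Y.col k) ⬝ᵥ
        (mpRes t ((Y.updateCol k 0) * (Y.updateCol k 0)ᴴ) *ᵥ (Y.col k))).re with hq
  set τ : m → ℝ := fun k => (mpRes t ((Y.updateCol k 0) * (Y.updateCol k 0)ᴴ)).trace.re / D with hτ
  have hr := fun k => mp_rank_one ht (posSemidef_self_mul_conjTranspose (Y.updateCol k 0))
    (Y.col k) (q k) rfl
  have hq0 : ∀ k, 0 ≤ q k := fun k => mp_quad_nonneg
    (mpRes_posDef ht (posSemidef_self_mul_conjTranspose (Y.updateCol k 0))).posSemidef _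
  simp_rw [← mp_updateCol] at hr
  have h1 : 1 - t * μ - (Fintype.card m / D) * (μ / (1 + μ)) =
      (1 / D) * ∑ k, (q k / (1 + q k) - μ / (1 + μ)) := by
    rw [Finset.sum_sub_distrib, Finset.sum_const, Finset.card_univ, nsmul_eq_mul]
    have : ∑ k, q k / (1 + q k) = D - t * (D * μ) := by
      rw [hμ, mul_div_cancel₀ _ hD.ne', Finset.sum_congr rfl (fun k _ => (hr k).1.symm)]
      linarith
    rw [this]
    field_simp
  have h2 : ∀ k, |q k / (1 + q k) - μ / (1 + μ)| ≤ |q k - τ k| + 1 / (D * t) := by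
    intro k
    have a1 : q k / (1 + q k) - μ / (1 + μ) = (q k - μ) / ((1 + q k) * (1 + μ)) := by
      have := hq0 k
      field_simp
      ring
    have a2 : |q k / (1 + q k) - μ / (1 + μ)| ≤ |q k - μ| := by
      have := hq0 k
      rw [a1, abs_div, abs_of_pos (by positivity : 0 < (1 + q k) * (1 + μ))]
      apply div_le_self (abs_nonneg _)
      nlinarith
    have a3 : |τ k - μ| ≤ 1 / (D * t) := by
      rw [hτ, hμ]
      simp only
      rw [← sub_div, abs_div, abs_of_pos hD, abs_sub_comm, mul_comm D t, ← div_div]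
      exact div_le_div_of_nonneg_right (hr k).2 hD.le
    calc _ ≤ |q k - μ| := a2
      _ ≤ |q k - τ k| + |τ k - μ| := abs_sub_le _ _ _
      _ ≤ _ := by linarith
  rw [h1, abs_mul, abs_of_pos (by positivity : 0 < 1 / D)]
  calc (1 / D) * |∑ k, (q k / (1 + q k) - μ / (1 + μ))|
      ≤ (1 / D) * ∑ k, (|q k - τ k| + 1 / (D * t)) := by
        gcongr
        exact (Finset.abs_sum_le_sum_abs _ _).trans (Finset.sum_le_sum fun k _ => h2 k)
    _ = _ := by
        rw [Finset.sum_add_distrib, Finset.sum_const, Finset.card_univ, nsmul_eq_mul]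
        ring

end LinAlg

section Moments

lemma mp_int_pow {Ω : Type*} [MeasurableSpace Ω] {μ : Measure Ω} [IsProbabilityMeasure μ]
    {f : Ω → ℝ} (hf : MemLp f 4 μ) (k : ℕ) (hk : k ≤ 4) : Integrable (fun ω => f ω ^ k) μ := by
  have h1 : MemLp f k μ := hf.mono_exponent (by exact_mod_cast hk)
  have h2 := h1.integrable_norm_pow'
  refine (integrable_norm_iff (hf.1.pow k)).1 ?_
  simpa using h2

lemma mp_fourth_moment {Ω ι : Type*} [MeasurableSpace Ω] {μ : Measure Ω} [IsProbabilityMeasure μ]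
    [DecidableEq ι]
    (ξ : ι → Ω → ℝ) (hm : ∀ i, Measurable (ξ i)) (hind : iIndepFun ξ μ)
    (h4 : ∀ i, MemLp (ξ i) 4 μ) (h0 : ∀ i, ∫ ω, ξ i ω ∂μ = 0) (v κ : ℝ)
    (hv : ∀ i, ∫ ω, ξ i ω ^ 2 ∂μ = v) (hκ : ∀ i, ∫ ω, ξ i ω ^ 4 ∂μ = κ) (a : ι → ℝ)
    (T : Finset ι) :
    MemLp (fun ω => ∑ i ∈ T, a i * ξ i ω) 4 μ ∧ ∫ ω, (∑ i ∈ T, a i * ξ i ω) ∂μ = 0 ∧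
    ∫ ω, (∑ i ∈ T, a i * ξ i ω) ^ 2 ∂μ = v * ∑ i ∈ T, a i ^ 2 ∧
    ∫ ω, (∑ i ∈ T, a i * ξ i ω) ^ 4 ∂μ ≤ (3 * v ^ 2 + κ) * (∑ i ∈ T, a i ^ 2) ^ 2 := by
  induction T using Finset.induction_on with
  | empty => simp
  | insert j T hj ih =>
    obtain ⟨i1, i2, i3, i4⟩ := ih
    set S : Ω → ℝ := fun ω => ∑ i ∈ T, a i * ξ i ω with hS
    set A := ∑ i ∈ T, a i ^ 2 with hA
    change ∫ ω, S ω ^ 2 ∂μ = v * A at i3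
    change ∫ ω, S ω ^ 4 ∂μ ≤ (3 * v ^ 2 + κ) * A ^ 2 at i4
    have hκ0 : 0 ≤ κ := by rw [← hκ j]; exact integral_nonneg fun ω => by positivity
    have hA0 : 0 ≤ A := Finset.sum_nonneg fun i _ => sq_nonneg _
    have hI : IndepFun S (ξ j) μ := by
      have := (hind.comp (fun i x => a i * x) (fun i => by fun_prop)).indepFun_finsetSum_of_notMem
        (fun i => by exact (hm i).const_mul _) hj
      have hI2 : IndepFun S (fun ω => a j * ξ j ω) μ := by
        convert! this using 1
        ext ω; simp [hS]
      have h2 : iIndepFun (fun i ω => ξ i ω) μ := hind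
      have h3 := (hind.indepFun_finset T {j} (by simpa using hj) hm)
      have hpm : Measurable (fun x : ({j} : Finset ι) → ℝ => x ⟨j, by simp⟩) :=
        measurable_pi_apply _
      have h4 := h3.comp (φ := fun x : T → ℝ => ∑ i : T, a i * x i)
        (ψ := fun x : ({j} : Finset ι) → ℝ => x ⟨j, by simp⟩) (by fun_prop) hpm
      convert! h4 using 1
      ext ω; simp only [hS, Function.comp]
      rw [← Finset.sum_coe_sort]
    have hIp : ∀ k l : ℕ, IndepFun (fun ω => S ω ^ k) (fun ω => ξ j ω ^ l) μ := fun k l =>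
      hI.comp (φ := fun x => x ^ k) (ψ := fun x => x ^ l) (by fun_prop) (by fun_prop)
    have hIntg : ∀ k l : ℕ, k ≤ 4 → l ≤ 4 → Integrable (fun ω => S ω ^ k * ξ j ω ^ l) μ :=
      fun k l hk hl => (hIp k l).integrable_mul (mp_int_pow i1 k hk) (mp_int_pow (h4 j) l hl)
    have heq : ∀ k l : ℕ, k ≤ 4 → l ≤ 4 → ∫ ω, S ω ^ k * ξ j ω ^ l ∂μ =
        (∫ ω, S ω ^ k ∂μ) * ∫ ω, ξ j ω ^ l ∂μ := fun k l hk hl =>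
      (hIp k l).integral_fun_mul_eq_mul_integral (mp_int_pow i1 k hk).1 (mp_int_pow (h4 j) l hl).1
    have hSm : ∀ k : ℕ, k ≤ 4 → Integrable (fun ω => S ω ^ k) μ := fun k hk => mp_int_pow i1 k hk
    have hxm : ∀ k : ℕ, k ≤ 4 → Integrable (fun ω => ξ j ω ^ k) μ := fun k hk => mp_int_pow (h4 j) k hk
    simp only [Finset.sum_insert hj]
    have e11 := heq 1 1 (by norm_num) (by norm_num)
    have e22 := heq 2 2 (by norm_num) (by norm_num)
    have e31 := heq 3 1 (by norm_num) (by norm_num)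
    have e13 := heq 1 3 (by norm_num) (by norm_num)
    simp only [pow_one, h0 j, i2, mul_zero, zero_mul, hv j, i3] at e11 e22 e31 e13
    refine ⟨?_, ?_, ?_, ?_⟩
    · exact ((h4 j).const_mul (a j)).add i1
    · have h1 := hSm 1 (by norm_num)
      have h2 := hxm 1 (by norm_num)
      simp only [pow_one] at h1 h2
      change ∫ ω, (a j * ξ j ω + S ω) ∂μ = 0
      rw [integral_add (h2.const_mul _) h1, integral_const_mul, h0 j, i2]; simp
    · have h1 := hIntg 1 1 (by norm_num) (by norm_num)
      simp only [pow_one] at h1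
      have : ∀ ω, (a j * ξ j ω + S ω) ^ 2 = a j ^ 2 * ξ j ω ^ 2 + (2 * a j) * (S ω * ξ j ω) + S ω ^ 2 :=
        fun ω => by ring
      change ∫ ω, (a j * ξ j ω + S ω) ^ 2 ∂μ = _
      simp_rw [this]
      rw [integral_add (((hxm 2 (by norm_num)).const_mul _).fun_add (h1.const_mul _)) (hSm 2 (by norm_num)),
        integral_add ((hxm 2 (by norm_num)).const_mul _) (h1.const_mul _),
        integral_const_mul, integral_const_mul, e11, hv j, i3]
      ring
    · have h31 := hIntg 3 1 (by norm_num) (by norm_num)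
      have h13 := hIntg 1 3 (by norm_num) (by norm_num)
      have h22 := hIntg 2 2 (by norm_num) (by norm_num)
      simp only [pow_one] at h31 h13
      have : ∀ ω, (a j * ξ j ω + S ω) ^ 4 = a j ^ 4 * ξ j ω ^ 4 + (4 * a j ^ 3) * (S ω * ξ j ω ^ 3)
          + (6 * a j ^ 2) * (S ω ^ 2 * ξ j ω ^ 2) + (4 * a j) * (S ω ^ 3 * ξ j ω) + S ω ^ 4 :=
        fun ω => by ring
      change ∫ ω, (a j * ξ j ω + S ω) ^ 4 ∂μ ≤ _
      simp_rw [this]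
      have j1 := (hxm 4 le_rfl).const_mul (a j ^ 4)
      have j2 := h13.const_mul (4 * a j ^ 3)
      have j3 := h22.const_mul (6 * a j ^ 2)
      have j4 := h31.const_mul (4 * a j)
      have j5 := hSm 4 le_rfl
      rw [integral_add (((j1.fun_add j2).fun_add j3).fun_add j4) j5, integral_add ((j1.fun_add j2).fun_add j3) j4,
        integral_add (j1.fun_add j2) j3, integral_add j1 j2]
      simp only [integral_const_mul, e13, e22, e31, hκ j]
      have : (a j)^4 = (a j ^ 2)^2 := by ring
      rw [this]
      have hb : 0 ≤ a j ^ 2 := sq_nonneg _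
      nlinarith [mul_nonneg hκ0 (mul_nonneg hA0 hb), mul_nonneg (sq_nonneg v) (sq_nonneg (a j ^ 2))]

end Moments

section CG

instance stdCG_prob : IsProbabilityMeasure stdComplexGaussian := by
  unfold stdComplexGaussian
  exact Measure.isProbabilityMeasure_map (by fun_prop)

/-- the real linear map defining the complex Gaussian -/
noncomputable def cgMap : ℝ × ℝ →L[ℝ] ℂ :=
  (ContinuousLinearMap.fst ℝ ℝ ℝ).smulRight ((1 : ℂ) / (Real.sqrt 2 : ℝ)) +
  (ContinuousLinearMap.snd ℝ ℝ ℝ).smulRight (Complex.I / (Real.sqrt 2 : ℝ))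

lemma stdCG_eq : stdComplexGaussian = Measure.map cgMap ((gaussianReal 0 1).prod (gaussianReal 0 1)) := by
  unfold stdComplexGaussian
  congr 1
  ext p
  simp [cgMap]
  ring

instance stdCG_gauss : IsGaussian stdComplexGaussian := by
  rw [stdCG_eq]; infer_instance

lemma stdCG_charFunDual (L : StrongDual ℝ ℂ) :
    charFunDual stdComplexGaussian L =
      Complex.exp (-((L 1) ^ 2 + (L Complex.I) ^ 2 : ℝ) / 4) := by
  have hL : ∀ p : ℝ × ℝ, L (cgMap p) = p.1 * (L 1 / Real.sqrt 2) + p.2 * (L Complex.I / Real.sqrt 2) := by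
    intro p
    have : cgMap p = (p.1 / Real.sqrt 2) • (1:ℂ) + (p.2 / Real.sqrt 2) • Complex.I := by
      simp [cgMap]; ring
    rw [this, map_add, map_smul, map_smul]
    simp; ring
  rw [stdCG_eq, charFunDual_map, charFunDual_apply]
  simp only [ContinuousLinearMap.comp_apply, hL]
  have : ∀ p : ℝ × ℝ, Complex.exp ((p.1 * (L 1 / Real.sqrt 2) + p.2 * (L Complex.I / Real.sqrt 2) : ℝ) * Complex.I)
      = Complex.exp (((L 1 / Real.sqrt 2 : ℝ) : ℂ) * p.1 * Complex.I) *
        Complex.exp (((L Complex.I / Real.sqrt 2 : ℝ) : ℂ) * p.2 * Complex.I) := by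
    intro p
    rw [← Complex.exp_add]
    push_cast
    ring_nf
  simp_rw [this]
  rw [integral_prod_mul (fun x : ℝ => Complex.exp (((L 1 / Real.sqrt 2 : ℝ) : ℂ) * x * Complex.I))
    (fun x : ℝ => Complex.exp (((L Complex.I / Real.sqrt 2 : ℝ) : ℂ) * x * Complex.I)),
    ← charFun_apply_real, ← charFun_apply_real, charFun_gaussianReal, charFun_gaussianReal,
    ← Complex.exp_add]
  congr 1
  have h2 : ((Real.sqrt 2 : ℝ) : ℂ) ^ 2 = 2 := by
    rw [← Complex.ofReal_pow, Real.sq_sqrt (by norm_num)]; norm_num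
  push_cast
  simp only [div_pow, h2]
  ring

lemma stdCG_memLp (p : ENNReal) (hp : p ≠ ⊤) : MemLp id p stdComplexGaussian :=
  IsGaussian.memLp_id _ p hp

lemma stdCG_memLp_sq : MemLp (fun z : ℂ => ‖z‖ ^ 2 - 1) 4 stdComplexGaussian := by
  refine MemLp.sub ?_ (memLp_const 1)
  have h : MemLp (fun z : ℂ => ‖z‖) 8 stdComplexGaussian := (stdCG_memLp 8 (by simp)).norm
  have := h.norm_rpow_div 2
  have e : (8 : ENNReal) / 2 = 4 := by
    symm
    rw [ENNReal.eq_div_iff (by simp) (by simp)]; norm_num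
  rw [e] at this
  simpa using this

lemma stdCG_mean : ∫ z : ℂ, (‖z‖ ^ 2 - 1) ∂stdComplexGaussian = 0 := by
  have h1 : Integrable (fun x : ℝ => x ^ 2) (gaussianReal 0 1) := by
    have := (memLp_id_gaussianReal (μ := 0) (v := 1) 2).integrable_sq
    simpa using this
  have h2 : ∫ x, x ^ 2 ∂(gaussianReal 0 1) = 1 := by
    have := variance_id_gaussianReal (μ := 0) (v := 1)
    rw [variance_of_integral_eq_zero (by fun_prop) (by simp)] at this
    simpa using this
  unfold stdComplexGaussian
  rw [integral_map (by fun_prop) (by fun_prop)]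
  have : ∀ p : ℝ × ℝ, ‖((p.1 : ℂ) + p.2 * Complex.I) / (Real.sqrt 2 : ℝ)‖ ^ 2 - 1 =
      p.1 ^ 2 / 2 + p.2 ^ 2 / 2 - 1 := by
    intro p
    rw [norm_div, div_pow, Complex.sq_norm, Complex.normSq_add_mul_I]
    simp
    ring
  simp_rw [this]
  have i1 : Integrable (fun p : ℝ × ℝ => p.1 ^ 2 / 2) ((gaussianReal 0 1).prod (gaussianReal 0 1)) :=
    (h1.comp_fst _).div_const 2
  have i2 : Integrable (fun p : ℝ × ℝ => p.2 ^ 2 / 2) ((gaussianReal 0 1).prod (gaussianReal 0 1)) :=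
    (h1.comp_snd _).div_const 2
  rw [integral_sub (i1.fun_add i2) (integrable_const 1), integral_add i1 i2]
  rw [integral_fun_fst (fun x : ℝ => x ^ 2 / 2), integral_fun_snd (fun x : ℝ => x ^ 2 / 2)]
  simp [integral_div, h2]
  norm_num

end CG

section Inv
open Matrix ComplexOrder
variable {n : Type*} [Fintype n] [DecidableEq n]

/-- law of a standard complex Gaussian vector -/
noncomputable def cgVec (n : Type*) [Fintype n] : Measure (n → ℂ) :=
  Measure.pi (fun _ => stdComplexGaussian)

instance : IsProbabilityMeasure (cgVec n) := by unfold cgVec; infer_instance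

/-- complex coefficients of a real functional -/
noncomputable def cgCoef (L : StrongDual ℝ (n → ℂ)) (i : n) : ℂ :=
  L (Pi.single i 1) - Complex.I * L (Pi.single i Complex.I)

lemma cgVec_charFunDual (L : StrongDual ℝ (n → ℂ)) :
    charFunDual (cgVec n) L = Complex.exp (-((∑ i, ‖cgCoef L i‖ ^ 2 : ℝ) : ℂ) / 4) := by
  unfold cgVec
  rw [charFunDual_pi]
  simp only [stdCG_charFunDual]
  rw [← Complex.exp_sum]
  congr 1
  push_cast
  rw [← Finset.sum_neg_distrib, Finset.sum_div]
  refine Finset.sum_congr rfl fun i _ => ?_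
  congr 2
  rw [← Complex.ofReal_pow ‖_‖, Complex.sq_norm, cgCoef, Complex.normSq_apply]
  simp
  ring

lemma cgCoef_apply (L : StrongDual ℝ (n → ℂ)) (x : n → ℂ) :
    (L x : ℂ) - Complex.I * L (Complex.I • x) = ∑ i, x i * cgCoef L i := by
  have hx : x = ∑ i, ((x i).re • (Pi.single i (1:ℂ) : n → ℂ) + (x i).im • (Pi.single i Complex.I : n → ℂ)) := by
    ext j
    simp [Finset.sum_apply, Pi.single_apply, Finset.sum_add_distrib, Complex.re_add_im]
  have hx2 : Complex.I • x = ∑ i, ((x i).re • (Pi.single i Complex.I : n → ℂ) - (x i).im • (Pi.single i (1:ℂ) : n → ℂ)) := by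
    ext j
    simp [Finset.sum_apply, Pi.single_apply, Finset.sum_sub_distrib]
    apply Complex.ext <;> simp
  have e1 : L x = ∑ i, ((x i).re * L (Pi.single i (1:ℂ)) + (x i).im * L (Pi.single i Complex.I)) := by
    conv_lhs => rw [hx]
    simp [map_sum]
  have e2 : L (Complex.I • x) = ∑ i, ((x i).re * L (Pi.single i Complex.I) - (x i).im * L (Pi.single i (1:ℂ))) := by
    conv_lhs => rw [hx2]
    simp [map_sum]
  rw [e1, e2]
  push_cast
  rw [Finset.mul_sum, ← Finset.sum_sub_distrib]
  refine Finset.sum_congr rfl fun i _ => ?_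
  rw [cgCoef]
  apply Complex.ext <;> simp <;> ring

/-- real-linear map of a matrix -/
noncomputable def cgMulVec (U : Matrix n n ℂ) : (n → ℂ) →L[ℝ] (n → ℂ) :=
  (LinearMap.toContinuousLinearMap (Matrix.mulVecLin U)).restrictScalars ℝ

lemma cgMulVec_apply (U : Matrix n n ℂ) (x : n → ℂ) : cgMulVec U x = U *ᵥ x := rfl

lemma cgCoef_comp (U : Matrix n n ℂ) (L : StrongDual ℝ (n → ℂ)) :
    cgCoef (L.comp (cgMulVec U)) = cgCoef L ᵥ* U := by
  ext j
  have h := cgCoef_apply L (U *ᵥ Pi.single j 1)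
  have : Complex.I • (U *ᵥ Pi.single j 1) = U *ᵥ Pi.single j Complex.I := by
    rw [← mulVec_smul]
    congr 1
    ext i; simp [Pi.single_apply]
  rw [this] at h
  rw [cgCoef, ContinuousLinearMap.comp_apply, ContinuousLinearMap.comp_apply, cgMulVec_apply,
    cgMulVec_apply, h, vecMul, dotProduct]
  refine Finset.sum_congr rfl fun i _ => ?_
  rw [mulVec_single_one]
  simp [mul_comm]

lemma cg_normsq (a : n → ℂ) : ((∑ i, ‖a i‖ ^ 2 : ℝ) : ℂ) = a ⬝ᵥ star a := by
  simp only [dotProduct, Pi.star_apply]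
  push_cast
  refine Finset.sum_congr rfl fun i _ => ?_
  rw [← Complex.mul_conj']; rfl

lemma cgVec_map (U : Matrix n n ℂ) (hU : U * Uᴴ = 1) :
    Measure.map (fun x => U *ᵥ x) (cgVec n) = cgVec n := by
  have : IsProbabilityMeasure (Measure.map (cgMulVec U) (cgVec n)) :=
    Measure.isProbabilityMeasure_map (by fun_prop)
  change Measure.map (cgMulVec U) (cgVec n) = cgVec n
  apply Measure.ext_of_charFunDual
  ext L
  rw [charFunDual_map, cgVec_charFunDual, cgVec_charFunDual, cg_normsq, cg_normsq, cgCoef_comp,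
    star_vecMul, ← dotProduct_mulVec, mulVec_mulVec, hU, one_mulVec]

/-- the constant in the fourth moment bound -/
noncomputable def cgK : ℝ := 3 * (∫ z : ℂ, (‖z‖ ^ 2 - 1) ^ 2 ∂stdComplexGaussian) ^ 2 +
  ∫ z : ℂ, (‖z‖ ^ 2 - 1) ^ 4 ∂stdComplexGaussian

lemma cgK_nonneg : 0 ≤ cgK := by
  unfold cgK
  have : 0 ≤ ∫ z : ℂ, (‖z‖ ^ 2 - 1) ^ 4 ∂stdComplexGaussian := integral_nonneg fun z => by positivity
  positivity

lemma cgVec_fourth_diag (a : n → ℝ) :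
    ∫⁻ x, ENNReal.ofReal ((∑ i, a i * (‖x i‖ ^ 2 - 1)) ^ 4) ∂(cgVec n) ≤
      ENNReal.ofReal (cgK * (∑ i, a i ^ 2) ^ 2) := by
  have hmp : ∀ i : n, MeasurePreserving (fun x : n → ℂ => x i) (cgVec n) stdComplexGaussian :=
    fun i => measurePreserving_eval (fun _ : n => stdComplexGaussian) i
  have hIntg : ∀ (i : n) (g : ℂ → ℝ), Continuous g →
      ∫ x, g (x i) ∂(cgVec n) = ∫ z, g z ∂stdComplexGaussian := by
    intro i g hg
    rw [← (hmp i).map_eq, integral_map (hmp i).measurable.aemeasurable hg.aestronglyMeasurable]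
  have key := mp_fourth_moment (μ := cgVec n) (fun (i : n) (x : n → ℂ) => ‖x i‖ ^ 2 - 1)
    (fun i => by fun_prop)
    (iIndepFun_pi (μ := fun _ : n => stdComplexGaussian) (X := fun _ z => ‖z‖ ^ 2 - 1)
      (fun i => by fun_prop))
    (fun i => stdCG_memLp_sq.comp_measurePreserving (hmp i))
    (fun i => by rw [hIntg i (fun z => ‖z‖ ^ 2 - 1) (by fun_prop)]; exact stdCG_mean)
    (∫ z : ℂ, (‖z‖ ^ 2 - 1) ^ 2 ∂stdComplexGaussian) (∫ z : ℂ, (‖z‖ ^ 2 - 1) ^ 4 ∂stdComplexGaussian)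
    (fun i => hIntg i (fun z => (‖z‖ ^ 2 - 1) ^ 2) (by fun_prop))
    (fun i => hIntg i (fun z => (‖z‖ ^ 2 - 1) ^ 4) (by fun_prop)) a Finset.univ
  rw [← ofReal_integral_eq_lintegral_ofReal (mp_int_pow key.1 4 le_rfl)
    (Eventually.of_forall fun x => by positivity)]
  exact ENNReal.ofReal_le_ofReal key.2.2.2

lemma cgVec_fourth (U : Matrix n n ℂ) (hU : U * Uᴴ = 1) (hU' : Uᴴ * U = 1) (a : n → ℝ)
    (M : Matrix n n ℂ) (hM : M = U * diagonal (fun i => (a i : ℂ)) * Uᴴ) :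
    ∫⁻ x, ENNReal.ofReal (((star x ⬝ᵥ (M *ᵥ x)).re - M.trace.re) ^ 4) ∂(cgVec n) ≤
      ENNReal.ofReal (cgK * (∑ i, a i ^ 2) ^ 2) := by
  have htr : M.trace.re = ∑ i, a i := by
    rw [hM, trace_mul_cycle, hU', one_mul, trace_diagonal, Complex.re_sum]
    simp
  have hq : ∀ x : n → ℂ, (star x ⬝ᵥ (M *ᵥ x)).re - M.trace.re =
      ∑ i, a i * (‖(Uᴴ *ᵥ x) i‖ ^ 2 - 1) := by
    intro x
    have : star x ⬝ᵥ (M *ᵥ x) = star (Uᴴ *ᵥ x) ⬝ᵥ (diagonal (fun i => (a i : ℂ)) *ᵥ (Uᴴ *ᵥ x)) := by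
      rw [star_mulVec, conjTranspose_conjTranspose, ← dotProduct_mulVec, mulVec_mulVec, mulVec_mulVec, hM,
        mul_assoc]
    rw [this, htr, dotProduct, Complex.re_sum]
    simp only [mul_sub, Finset.sum_sub_distrib, mul_one]
    congr 1
    refine Finset.sum_congr rfl fun i _ => ?_
    rw [mulVec_diagonal, Complex.sq_norm, Complex.normSq_apply, Pi.star_apply]
    simp
    ring
  simp_rw [hq]
  have h := cgVec_map Uᴴ (by rw [conjTranspose_conjTranspose]; exact hU')
  calc _ = ∫⁻ x, ENNReal.ofReal ((∑ i, a i * (‖x i‖ ^ 2 - 1)) ^ 4)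
        ∂(Measure.map (fun x => Uᴴ *ᵥ x) (cgVec n)) := by
        have hm : Measurable (fun x : n → ℂ => Uᴴ *ᵥ x) := (cgMulVec Uᴴ).continuous.measurable
        rw [lintegral_map (by fun_prop) hm]
    _ ≤ _ := by rw [h]; exact cgVec_fourth_diag a

lemma mpRes_spectral {t : ℝ} (ht : 0 < t) {B : Matrix n n ℂ} (hB : B.PosSemidef) :
    mpRes t B = (hB.1.eigenvectorUnitary : Matrix n n ℂ) *
      diagonal (fun i => ((1 / (hB.1.eigenvalues i + t) : ℝ) : ℂ)) *
      (hB.1.eigenvectorUnitary : Matrix n n ℂ)ᴴ := by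
  set U : Matrix n n ℂ := hB.1.eigenvectorUnitary.1 with hU
  have h1 : Uᴴ * U = 1 := (Matrix.mem_unitaryGroup_iff'.1 hB.1.eigenvectorUnitary.2)
  have h2 : U * Uᴴ = 1 := (Matrix.mem_unitaryGroup_iff.1 hB.1.eigenvectorUnitary.2)
  have hs : B = U * diagonal (fun i => ((hB.1.eigenvalues i : ℝ) : ℂ)) * Uᴴ := by
    conv_lhs => rw [hB.1.spectral_theorem]
    rfl
  have hs2 : B + (t : ℂ) • 1 = U * diagonal (fun i => ((hB.1.eigenvalues i + t : ℝ) : ℂ)) * Uᴴ := by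
    have : diagonal (fun i => ((hB.1.eigenvalues i + t : ℝ) : ℂ)) =
      diagonal (fun i => ((hB.1.eigenvalues i : ℝ) : ℂ)) + (t : ℂ) • 1 := by
      ext i j
      by_cases h : i = j <;> simp [h, diagonal_apply, one_apply]
    rw [this, mul_add, add_mul, ← hs, Matrix.mul_smul, Matrix.smul_mul, mul_one, h2]
  unfold mpRes
  apply Matrix.inv_eq_right_inv
  rw [hs2]
  calc _ = U * (diagonal (fun i => ((hB.1.eigenvalues i + t : ℝ) : ℂ)) * (Uᴴ * U) *
        diagonal (fun i => ((1 / (hB.1.eigenvalues i + t) : ℝ) : ℂ))) * Uᴴ := by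
          simp only [Matrix.mul_assoc]
    _ = 1 := by
      rw [h1, mul_one, diagonal_mul_diagonal]
      have : (fun i => ((hB.1.eigenvalues i + t : ℝ) : ℂ) * ((1 / (hB.1.eigenvalues i + t) : ℝ) : ℂ)) = fun _ => 1 := by
        ext i
        have := hB.eigenvalues_nonneg i
        rw [← Complex.ofReal_mul, mul_one_div_cancel (by positivity)]; simp
      rw [this, diagonal_one, mul_one, h2]

lemma mpRes_trace {t : ℝ} (ht : 0 < t) {B : Matrix n n ℂ} (hB : B.PosSemidef) :
    (mpRes t B).trace.re = ∑ i, 1 / (hB.1.eigenvalues i + t) := by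
  have h1 := (Matrix.mem_unitaryGroup_iff'.1 hB.1.eigenvectorUnitary.2)
  rw [star_eq_conjTranspose] at h1
  rw [mpRes_spectral ht hB, trace_mul_cycle, h1, one_mul, trace_diagonal, Complex.re_sum]
  simp only [Complex.ofReal_re]

lemma mpRes_fourth {t : ℝ} (ht : 0 < t) {B : Matrix n n ℂ} (hB : B.PosSemidef) :
    ∫⁻ x, ENNReal.ofReal (((star x ⬝ᵥ (mpRes t B *ᵥ x)).re - (mpRes t B).trace.re) ^ 4) ∂(cgVec n) ≤
      ENNReal.ofReal (cgK * (Fintype.card n / t ^ 2) ^ 2) := by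
  have h1 := (Matrix.mem_unitaryGroup_iff'.1 hB.1.eigenvectorUnitary.2)
  have h2 := (Matrix.mem_unitaryGroup_iff.1 hB.1.eigenvectorUnitary.2)
  refine (cgVec_fourth _ h2 h1 _ _ (mpRes_spectral ht hB)).trans ?_
  apply ENNReal.ofReal_le_ofReal
  apply mul_le_mul_of_nonneg_left _ cgK_nonneg
  have : ∑ i, (1 / (hB.1.eigenvalues i + t)) ^ 2 ≤ Fintype.card n / t ^ 2 := by
    calc _ ≤ ∑ i : n, 1 / t ^ 2 := by
          refine Finset.sum_le_sum fun i _ => ?_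
          have := hB.eigenvalues_nonneg i
          rw [div_pow, one_pow]
          gcongr
          linarith
      _ = _ := by simp [div_eq_mul_inv]
  gcongr

end Inv

section RandomMatrix
open Matrix ComplexOrder
variable {n m : Type*} [Fintype n] [DecidableEq n] [Fintype m] [DecidableEq m]

/-- resolvent of the normalized Wishart matrix -/
noncomputable def mpR (t D : ℝ) (V : Matrix n m ℂ) : Matrix n n ℂ :=
  mpRes t ((((1 / Real.sqrt D : ℝ) : ℂ) • V) * (((1 / Real.sqrt D : ℝ) : ℂ) • V)ᴴ)

lemma mpR_cont {t : ℝ} (ht : 0 < t) (D : ℝ) : Continuous (fun V : Matrix n m ℂ => mpR t D V) := by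
  have h0 : ∀ V : Matrix n m ℂ, ((((1 / Real.sqrt D : ℝ) : ℂ) • V) *
      (((1 / Real.sqrt D : ℝ) : ℂ) • V)ᴴ + (t : ℂ) • 1).det ≠ 0 := fun V =>
    (mp_posDef ht (posSemidef_self_mul_conjTranspose _)).det_pos.ne'
  unfold mpR mpRes
  simp only [Matrix.inv_def, Ring.inverse_eq_inv']
  have hc : Continuous (fun V : Matrix n m ℂ => (((1 / Real.sqrt D : ℝ) : ℂ) • V) *
      (((1 / Real.sqrt D : ℝ) : ℂ) • V)ᴴ + (t : ℂ) • (1 : Matrix n n ℂ)) := by fun_prop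
  exact (hc.matrix_det.inv₀ h0).smul hc.matrix_adjugate

/-- fluctuation of a quadratic form -/
noncomputable def mpG (t D : ℝ) (p : (n → ℂ) × (n → m → ℂ)) : ℝ :=
  ((star p.1 ⬝ᵥ (mpR t D (Matrix.of p.2) *ᵥ p.1)).re - (mpR t D (Matrix.of p.2)).trace.re) / D

lemma mpG_cont {t : ℝ} (ht : 0 < t) (D : ℝ) :
    Continuous (mpG t D : (n → ℂ) × (n → m → ℂ) → ℝ) := by
  have h1 : Continuous (fun p : (n → ℂ) × (n → m → ℂ) => mpR t D (Matrix.of p.2)) :=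
    (mpR_cont ht D).comp continuous_snd
  unfold mpG
  have h2 : Continuous (fun p : (n → ℂ) × (n → m → ℂ) =>
      (star p.1 ⬝ᵥ (mpR t D (Matrix.of p.2) *ᵥ p.1))) :=
    Continuous.dotProduct (continuous_star.comp continuous_fst) (h1.matrix_mulVec continuous_fst)
  have h3 := h1.matrix_trace
  exact ((Complex.continuous_re.comp h2).sub (Complex.continuous_re.comp h3)).div_const D

lemma mp_det_bound' {t : ℝ} (ht : 0 < t) (V : Matrix n m ℂ) (D : ℝ) (hD : 0 < D)
    (hDn : D = Fintype.card n) (μ : ℝ) (hμ : μ = (mpR t D V).trace.re / D) :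
    |1 - t * μ - (Fintype.card m / D) * (μ / (1 + μ))| ≤
      (1 / D) * ∑ k, |mpG t D (V.col k, V.updateCol k 0)|
      + (Fintype.card m / D) * (1 / (D * t)) := by
  have h := mp_det_bound ht (((1 / Real.sqrt D : ℝ) : ℂ) • V) D hD hDn μ hμ
  convert! h using 5 with k
  set c : ℝ := 1 / Real.sqrt D with hc
  have hcc : c * c = 1 / D := by
    rw [hc, div_mul_div_comm, one_mul, Real.mul_self_sqrt hD.le]
  have e1 : ((c : ℂ) • V).updateCol k 0 = (c : ℂ) • V.updateCol k 0 := by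
    ext i j
    by_cases h : j = k
    · subst h; simp
    · simp [updateCol_ne h]
  have e2 : ((c : ℂ) • V).col k = (c : ℂ) • V.col k := by ext i; simp
  rw [e1, e2, mpG, sub_div]
  congr 1
  rw [mulVec_smul, star_smul, smul_dotProduct, dotProduct_smul, smul_smul, smul_eq_mul]
  have : (star (c : ℂ) * c) = ((1 / D : ℝ) : ℂ) := by
    rw [← hcc]; simp
  rw [this, Complex.re_ofReal_mul, one_div_mul_eq_div]
  rfl

variable {Ω : Type*} [MeasurableSpace Ω] {P : Measure Ω} [IsProbabilityMeasure P]

lemma mp_entries_aemeas {Z : Ω → ℂ} (hg : Measure.map Z P = stdComplexGaussian) :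
    AEMeasurable Z P := by
  apply AEMeasurable.of_map_ne_zero
  rw [hg]
  exact IsProbabilityMeasure.ne_zero _

lemma mp_pair_aemeas (Z : Ω → Matrix n m ℂ)
    (hg : ∀ p : n × m, Measure.map (fun ω => Z ω p.1 p.2) P = stdComplexGaussian) (k : m) :
    AEMeasurable (fun ω => (((Z ω).col k, (Z ω).updateCol k 0) : (n → ℂ) × (n → m → ℂ))) P := by
  refine AEMeasurable.prodMk ?_ ?_
  · exact aemeasurable_pi_lambda _ fun i => mp_entries_aemeas (hg (i, k))
  · refine aemeasurable_pi_lambda _ fun i => aemeasurable_pi_lambda _ fun j => ?_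
    by_cases h : j = k
    · subst h; simp
    · simpa [updateCol_ne h] using mp_entries_aemeas (hg (i, j))

lemma mp_col_bound {t : ℝ} (ht : 0 < t) (D : ℝ) (hD : 0 < D) (Z : Ω → Matrix n m ℂ)
    (hi : iIndepFun (fun (p : n × m) ω => Z ω p.1 p.2) P)
    (hg : ∀ p : n × m, Measure.map (fun ω => Z ω p.1 p.2) P = stdComplexGaussian) (k : m) :
    ∫⁻ ω, ENNReal.ofReal ((mpG t D ((Z ω).col k, (Z ω).updateCol k 0)) ^ 4) ∂P ≤
      ENNReal.ofReal (cgK * (Fintype.card n / t ^ 2) ^ 2 / D ^ 4) := by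
  have hm : ∀ p : n × m, AEMeasurable (fun ω => Z ω p.1 p.2) P := fun p => mp_entries_aemeas (hg p)
  have hpair := mp_pair_aemeas Z hg k
  have hcol : Measure.map (fun ω => ((Z ω).col k : n → ℂ)) P = cgVec n := by
    have h1 : iIndepFun (fun (i : n) ω => Z ω i k) P :=
      hi.precomp (g := fun i : n => (i, k)) (fun a b h => by simpa using h)
    have h2 := (iIndepFun_iff_map_fun_eq_pi_map (fun i => hm (i, k))).1 h1
    change Measure.map (fun ω i => Z ω i k) P = _
    rw [h2, cgVec]
    congr 1
    ext i : 1
    exact hg (i, k)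
  have hind : IndepFun (fun ω => ((Z ω).col k : n → ℂ))
      (fun ω => show n → m → ℂ from (Z ω).updateCol k 0) P := by
    let S : Finset (n × m) := Finset.univ.filter (fun p => p.2 = k)
    let T : Finset (n × m) := Finset.univ.filter (fun p => p.2 ≠ k)
    have hST : Disjoint S T := Finset.disjoint_filter_filter_not _ _ _
    have h1 := hi.indepFun_finset₀ S T hST hm
    have m1 : Measurable (fun (x : S → ℂ) (i : n) => x ⟨(i, k), by simp [S]⟩) :=
      measurable_pi_lambda _ fun i => measurable_pi_apply _
    have m2 : Measurable (fun (x : T → ℂ) (i : n) (j : m) =>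
        if h : j ≠ k then x ⟨(i, j), by simp [T, h]⟩ else 0) := by
      refine measurable_pi_lambda _ fun i => measurable_pi_lambda _ fun j => ?_
      by_cases h : j ≠ k
      · simp only [h, ne_eq, not_false_eq_true, dite_true]; exact measurable_pi_apply _
      · simp only [h, dite_false]; exact measurable_const
    have h2 := h1.comp m1 m2
    convert! h2 using 1
    ext ω i j
    by_cases h : j = k
    · subst h; simp
    · simp [updateCol_ne h, h]
  have hmap : Measure.map (fun ω => (((Z ω).col k, (Z ω).updateCol k 0) : (n → ℂ) × (n → m → ℂ))) P
      = (cgVec n).prod (Measure.map (fun ω => show n → m → ℂ from (Z ω).updateCol k 0) P) := by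
    rw [← hcol]
    exact (indepFun_iff_map_prod_eq_prod_map_map (measurable_fst.comp_aemeasurable hpair)
      (measurable_snd.comp_aemeasurable hpair)).1 hind
  have hmeas : Measurable (fun p : (n → ℂ) × (n → m → ℂ) => ENNReal.ofReal ((mpG t D p) ^ 4)) :=
    ((mpG_cont ht D).measurable.pow_const 4).ennreal_ofReal
  have hprob : IsProbabilityMeasure (Measure.map (fun ω => show n → m → ℂ from (Z ω).updateCol k 0) P) :=
    Measure.isProbabilityMeasure_map (measurable_snd.comp_aemeasurable hpair)
  rw [← lintegral_map' (f := fun p => ENNReal.ofReal ((mpG t D p) ^ 4)) hmeas.aemeasurable hpair, hmap,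
    lintegral_prod_symm' _ hmeas]
  calc _ ≤ ∫⁻ V, ENNReal.ofReal (cgK * (Fintype.card n / t ^ 2) ^ 2 / D ^ 4)
        ∂(Measure.map (fun ω => show n → m → ℂ from (Z ω).updateCol k 0) P) := by
        refine lintegral_mono fun V => ?_
        simp only [mpG, div_pow]
        simp_rw [ENNReal.ofReal_div_of_pos (pow_pos hD 4), div_eq_mul_inv]
        rw [lintegral_mul_const']
        · gcongr
          have := mpRes_fourth ht (posSemidef_self_mul_conjTranspose
            (((1 / Real.sqrt D : ℝ) : ℂ) • (Matrix.of V : Matrix n m ℂ)))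
          refine this.trans (le_of_eq ?_)
          congr 1
          simp only [div_eq_mul_inv, mul_pow, inv_pow]
        · simp [ENNReal.inv_ne_top, pow_pos hD 4, hD]
    _ = _ := by simp

lemma mp_avg_bound {t : ℝ} (ht : 0 < t) (D : ℝ) (hD : 0 < D) (Z : Ω → Matrix n m ℂ)
    (hi : iIndepFun (fun (p : n × m) ω => Z ω p.1 p.2) P)
    (hg : ∀ p : n × m, Measure.map (fun ω => Z ω p.1 p.2) P = stdComplexGaussian) :
    ∫⁻ ω, ENNReal.ofReal (((1 / D) * ∑ k, |mpG t D ((Z ω).col k, (Z ω).updateCol k 0)|) ^ 4) ∂P ≤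
      ENNReal.ofReal ((Fintype.card m / D) ^ 4 * (cgK * (Fintype.card n / t ^ 2) ^ 2 / D ^ 4)) := by
  have hb : ∀ ω, ENNReal.ofReal (((1 / D) * ∑ k, |mpG t D ((Z ω).col k, (Z ω).updateCol k 0)|) ^ 4) ≤
      ENNReal.ofReal ((1 / D) ^ 4 * (Fintype.card m : ℝ) ^ 3) *
      ∑ k, ENNReal.ofReal ((mpG t D ((Z ω).col k, (Z ω).updateCol k 0)) ^ 4) := by
    intro ω
    rw [← ENNReal.ofReal_sum_of_nonneg (fun k _ => by positivity), ← ENNReal.ofReal_mul (by positivity)]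
    apply ENNReal.ofReal_le_ofReal
    rw [mul_pow, mul_assoc]
    gcongr
    have := pow_sum_le_card_mul_sum_pow (s := Finset.univ)
      (f := fun k => |mpG t D ((Z ω).col k, (Z ω).updateCol k 0)|) (fun k _ => abs_nonneg _) 3
    simpa [Even.pow_abs (show Even 4 by decide)] using this
  refine (lintegral_mono hb).trans ?_
  rw [lintegral_const_mul' _ _ ENNReal.ofReal_ne_top, lintegral_finsetSum']
  · calc _ ≤ ENNReal.ofReal ((1 / D) ^ 4 * (Fintype.card m : ℝ) ^ 3) *
        ∑ k : m, ENNReal.ofReal (cgK * (Fintype.card n / t ^ 2) ^ 2 / D ^ 4) := by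
          gcongr with k
          exact mp_col_bound ht D hD Z hi hg k
      _ = _ := by
        rw [Finset.sum_const, Finset.card_univ, nsmul_eq_mul, ← mul_assoc,
          ← ENNReal.ofReal_natCast, ← ENNReal.ofReal_mul (by positivity), ← ENNReal.ofReal_mul (by positivity)]
        congr 1
        ring
  · intro k _
    exact (((mpG_cont ht D).measurable.comp_aemeasurable (mp_pair_aemeas Z hg k)).pow_const 4).ennreal_ofReal

end RandomMatrix

section AS

/-- abstract Borel–Cantelli step -/
lemma mp_ae_tendsto {Ω : Type*} [MeasurableSpace Ω] {P : Measure Ω} (E : ℕ → Ω → ℝ)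
    (hE : ∀ d, AEMeasurable (E d) P) (hb : ∑' d, ∫⁻ ω, ENNReal.ofReal (E d ω ^ 4) ∂P ≠ ⊤) :
    ∀ᵐ ω ∂P, Tendsto (fun d => E d ω) atTop (nhds 0) := by
  have hm : ∀ d, AEMeasurable (fun ω => ENNReal.ofReal (E d ω ^ 4)) P := fun d =>
    ((hE d).pow_const 4).ennreal_ofReal
  rw [← lintegral_tsum hm] at hb
  filter_upwards [ae_lt_top' (AEMeasurable.tsum hm) hb] with ω hω
  have h1 := ENNReal.tendsto_atTop_zero_of_tsum_ne_top hω.ne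
  have h2 : Tendsto (fun d => E d ω ^ 4) atTop (nhds 0) := by
    have := (ENNReal.tendsto_toReal ENNReal.zero_ne_top).comp h1
    refine (this.congr fun d => ?_)
    simp only [Function.comp]
    rw [ENNReal.toReal_ofReal (by positivity)]
  have h3 := (h2.abs).rpow_const (p := 1 / 4) (Or.inr (by norm_num))
  have h4 : Tendsto (fun d => |E d ω|) atTop (nhds 0) := by
    convert! h3 using 1
    · ext d
      rw [abs_pow, ← Real.rpow_natCast, ← Real.rpow_mul (abs_nonneg _)]
      norm_num
    · norm_num
  exact (tendsto_zero_iff_abs_tendsto_zero _).2 h4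

open Matrix ComplexOrder in
lemma mp_stieltjes_ae
    {Ω : Type*} [MeasurableSpace Ω] (P : Measure Ω) [IsProbabilityMeasure P]
    (c : ℝ) (hc : 0 < c) (s : ℕ → ℕ)
    (hsc : Tendsto (fun d : ℕ => (s d : ℝ) / d) atTop (nhds c))
    (X : ∀ d : ℕ, Ω → Matrix (Fin d) (Fin (s d)) ℂ)
    (hindep : iIndepFun
      (fun (q : Σ d : ℕ, Fin d × Fin (s d)) ω => X q.1 ω q.2.1 q.2.2) P)
    (hgauss : ∀ q : Σ d : ℕ, Fin d × Fin (s d),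
      Measure.map (fun ω => X q.1 ω q.2.1 q.2.2) P = stdComplexGaussian)
    (t : ℝ) (ht : 0 < t) (M : ℝ) (hM0 : 0 ≤ M) (hM : 1 - t * M - c * (M / (1 + M)) = 0) :
    ∀ᵐ ω ∂P, Tendsto (fun d : ℕ => (mpR t d (X d ω)).trace.re / d) atTop (nhds M) := by
  have hi : ∀ d, iIndepFun (fun (p : Fin d × Fin (s d)) ω => X d ω p.1 p.2) P := fun d =>
    hindep.precomp (g := fun p : Fin d × Fin (s d) => (⟨d, p⟩ : Σ d : ℕ, Fin d × Fin (s d)))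
      (fun a b h => by simpa using h)
  have hg : ∀ d, ∀ p : Fin d × Fin (s d), Measure.map (fun ω => X d ω p.1 p.2) P = stdComplexGaussian :=
    fun d p => hgauss ⟨d, p⟩
  let E : ℕ → Ω → ℝ := fun d ω =>
    (1 / (d : ℝ)) * ∑ k, |mpG t d ((X d ω).col k, (X d ω).updateCol k 0)|
  have hEm : ∀ d, AEMeasurable (E d) P := by
    intro d
    refine AEMeasurable.const_mul (Finset.aemeasurable_fun_sum _ fun k _ => ?_) _
    exact continuous_abs.measurable.comp_aemeasurable
      ((mpG_cont ht d).measurable.comp_aemeasurable (mp_pair_aemeas (X d) (hg d) k))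
  obtain ⟨C, hC⟩ : ∃ C, ∀ d, |(s d : ℝ) / d| ≤ C := by
    obtain ⟨C, hC⟩ := hsc.abs.bddAbove_range
    exact ⟨C, fun d => hC ⟨d, rfl⟩⟩
  have hbd : ∀ d, ∫⁻ ω, ENNReal.ofReal (E d ω ^ 4) ∂P ≤
      ENNReal.ofReal (C ^ 4 * (cgK / t ^ 4) * (1 / (d : ℝ) ^ 2)) := by
    intro d
    rcases Nat.eq_zero_or_pos d with rfl | hd
    · simp [E]
    have hd' : (0:ℝ) < d := by exact_mod_cast hd
    refine (mp_avg_bound ht d hd' (X d) (hi d) (hg d)).trans ?_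
    apply ENNReal.ofReal_le_ofReal
    simp only [Fintype.card_fin]
    have e : cgK * ((d:ℝ) / t ^ 2) ^ 2 / (d:ℝ) ^ 4 = cgK / t ^ 4 * (1 / (d:ℝ) ^ 2) := by
      field_simp
    rw [e, ← mul_assoc]
    have h1 := hC d
    rw [abs_of_nonneg (by positivity)] at h1
    have := cgK_nonneg
    gcongr
  have hsum : ∑' d, ∫⁻ ω, ENNReal.ofReal (E d ω ^ 4) ∂P ≠ ⊤ := by
    refine ne_top_of_le_ne_top ?_ (ENNReal.tsum_le_tsum hbd)
    have hs : Summable (fun d : ℕ => C ^ 4 * (cgK / t ^ 4) * (1 / (d : ℝ) ^ 2)) :=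
      (Real.summable_one_div_nat_pow.2 (by norm_num)).mul_left _
    exact hs.tsum_ofReal_ne_top
  filter_upwards [mp_ae_tendsto E hEm hsum] with ω hω
  have hlim : Tendsto (fun d : ℕ => E d ω + ((s d : ℝ) / d) * (1 / (d * t)) + |(s d : ℝ) / d - c|)
      atTop (nhds 0) := by
    have h1 : Tendsto (fun d : ℕ => (1 / (d * t) : ℝ)) atTop (nhds 0) := by
      have := (tendsto_natCast_atTop_atTop (R := ℝ)).atTop_mul_const ht
      exact tendsto_const_nhds.div_atTop this
    have h2 := (hω.add (hsc.mul h1)).add ((hsc.sub_const c).abs)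
    simpa using h2
  have hfin : Tendsto (fun d : ℕ => (mpR t d (X d ω)).trace.re / d - M) atTop (nhds 0) := by
    have h3 := hlim.div_const t
    rw [zero_div] at h3
    refine squeeze_zero_norm' ?_ h3
    filter_upwards [eventually_gt_atTop 0] with d hd
    have hd' : (0:ℝ) < d := by exact_mod_cast hd
    set μ := (mpR t d (X d ω)).trace.re / d with hμ
    have hμ0 : 0 ≤ μ := div_nonneg
      (mp_trace_re_nonneg ht (posSemidef_self_mul_conjTranspose _)) hd'.le
    have hb := mp_det_bound' ht (X d ω) d hd' (by simp) μ hμ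
    simp only [Fintype.card_fin] at hb
    change _ ≤ E d ω + _ at hb
    rw [Real.norm_eq_abs, le_div_iff₀ ht]
    have k1 : |1 - t * μ - c * (μ / (1 + μ))| ≤
        |1 - t * μ - (s d : ℝ) / d * (μ / (1 + μ))| + |(s d : ℝ) / d - c| := by
      have : 1 - t * μ - c * (μ / (1 + μ)) = (1 - t * μ - (s d : ℝ) / d * (μ / (1 + μ))) +
        ((s d : ℝ) / d - c) * (μ / (1 + μ)) := by ring
      rw [this]
      refine (abs_add_le _ _).trans ?_
      refine add_le_add le_rfl ?_
      rw [abs_mul]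
      apply mul_le_of_le_one_right (abs_nonneg _)
      rw [abs_of_nonneg (by positivity), div_le_one (by positivity)]
      linarith
    have k2 : |μ - M| * t ≤ |1 - t * μ - c * (μ / (1 + μ))| := by
      have e : 1 - t * μ - c * (μ / (1 + μ)) = -((μ - M) * (t + c / ((1 + μ) * (1 + M)))) := by
        have : 1 - t * μ - c * (μ / (1 + μ)) =
          (1 - t * μ - c * (μ / (1 + μ))) - (1 - t * M - c * (M / (1 + M))) := by rw [hM]; ring
        rw [this]
        field_simp
        ring
      rw [e, abs_neg, abs_mul]
      gcongr
      rw [abs_of_nonneg (by positivity)]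
      have : 0 ≤ c / ((1 + μ) * (1 + M)) := by positivity
      linarith
    linarith
  simpa using hfin.add_const M

end AS

section MPLaw

lemma mp_trig_cont {w : ℝ} (hw : 0 < w) (hw1 : w ≤ 1) :
    ∫ θ in (0:ℝ)..Real.pi, Real.sin θ ^ 2 / (1 + 2 * w * Real.cos θ + w ^ 2) = Real.pi / 2 := by
  rcases hw1.lt_or_eq with h1 | rfl
  · have hD : ∀ θ, 0 < 1 + 2 * w * Real.cos θ + w ^ 2 := by
      intro θ
      have h2 := Real.neg_one_le_cos θ
      nlinarith [sq_nonneg (1 - w), mul_le_mul_of_nonneg_left h2 hw.le, sq_pos_of_pos (sub_pos.2 h1)]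
    have hE : ∀ θ, 0 < 1 + w * Real.cos θ := by
      intro θ
      have h2 := Real.neg_one_le_cos θ
      nlinarith
    have hw2 : 0 < 1 - w ^ 2 := by nlinarith
    have hder : ∀ θ ∈ Set.uIcc 0 Real.pi, HasDerivAt (fun θ : ℝ => (1 + w ^ 2) / (4 * w ^ 2) * θ
        - 1 / (2 * w) * Real.sin θ - (1 - w ^ 2) / (4 * w ^ 2) *
          (θ - 2 * Real.arctan (w * Real.sin θ / (1 + w * Real.cos θ))))
        (Real.sin θ ^ 2 / (1 + 2 * w * Real.cos θ + w ^ 2)) θ := by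
      intro θ _
      have d1 := ((Real.hasDerivAt_sin θ).const_mul w).div
        (((Real.hasDerivAt_cos θ).const_mul w).const_add 1) (hE θ).ne'
      have d2 := d1.arctan
      have d3 := (((hasDerivAt_id θ).const_mul ((1 + w ^ 2) / (4 * w ^ 2))).sub
        ((Real.hasDerivAt_sin θ).const_mul (1 / (2 * w)))).sub
        (((hasDerivAt_id θ).sub (d2.const_mul 2)).const_mul ((1 - w ^ 2) / (4 * w ^ 2)))
      refine d3.congr_deriv ?_
      have e0 := Real.sin_sq_add_cos_sq θ
      have hDθ := (hD θ).ne'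
      have hEθ := (hE θ).ne'
      simp only [Pi.div_apply]
      have e1 : 1 + (w * Real.sin θ / (1 + w * Real.cos θ)) ^ 2 =
          (1 + 2 * w * Real.cos θ + w ^ 2) / (1 + w * Real.cos θ) ^ 2 := by
        field_simp
        linear_combination w ^ 2 * e0
      have e2 : (1 / (1 + (w * Real.sin θ / (1 + w * Real.cos θ)) ^ 2) *
          ((w * Real.cos θ * (1 + w * Real.cos θ) - w * Real.sin θ * (w * -Real.sin θ)) /
            (1 + w * Real.cos θ) ^ 2)) = (w * Real.cos θ + w ^ 2) / (1 + 2 * w * Real.cos θ + w ^ 2) := by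
        rw [e1]
        field_simp
        linear_combination w * e0
      rw [e2]
      have e3 : Real.sin θ ^ 2 = 1 - Real.cos θ ^ 2 := by linarith
      rw [e3, eq_div_iff hDθ]
      have hq : (w * Real.cos θ + w ^ 2) / (1 + 2 * w * Real.cos θ + w ^ 2) *
        (1 + 2 * w * Real.cos θ + w ^ 2) = w * Real.cos θ + w ^ 2 := div_mul_cancel₀ _ hDθ
      have hrest : ((1 + w ^ 2) / (4 * w ^ 2) - 1 / (2 * w) * Real.cos θ - (1 - w ^ 2) / (4 * w ^ 2)) *
        (1 + 2 * w * Real.cos θ + w ^ 2) + (1 - w ^ 2) / (4 * w ^ 2) * 2 * (w * Real.cos θ + w ^ 2)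
        = 1 - Real.cos θ ^ 2 := by
        field_simp
        ring
      linear_combination (1 - w ^ 2) / (4 * w ^ 2) * 2 * hq + hrest
    rw [intervalIntegral.integral_eq_sub_of_hasDerivAt hder]
    · simp
      field_simp
      ring
    · apply Continuous.intervalIntegrable
      exact (by fun_prop : Continuous fun θ => Real.sin θ ^ 2).div (by fun_prop) (fun θ => (hD θ).ne')
  · have : ∫ θ in (0:ℝ)..Real.pi, Real.sin θ ^ 2 / (1 + 2 * 1 * Real.cos θ + 1 ^ 2) =
      ∫ θ in (0:ℝ)..Real.pi, (1 - Real.cos θ) / 2 := by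
      rw [intervalIntegral.integral_of_le Real.pi_pos.le, intervalIntegral.integral_of_le Real.pi_pos.le,
        integral_Ioc_eq_integral_Ioo, integral_Ioc_eq_integral_Ioo]
      refine setIntegral_congr_fun measurableSet_Ioo fun θ hθ => ?_
      have : -1 < Real.cos θ := by
        have := Real.cos_lt_cos_of_nonneg_of_le_pi hθ.1.le le_rfl hθ.2
        simpa using this
      have e0 := Real.sin_sq_add_cos_sq θ
      have h2 : (1 + 2 * 1 * Real.cos θ + 1 ^ 2) ≠ 0 := by nlinarith
      rw [div_eq_div_iff h2 (by norm_num)]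
      linear_combination 2 * e0
    rw [this, intervalIntegral.integral_div, intervalIntegral.integral_sub (by simp) (by simp)]
    simp

lemma mp_J {m r w u : ℝ} (hr : 0 < r) (hw : 0 < w) (hw1 : w ≤ 1)
    (hp : m + u = r / 2 * (w + 1 / w)) :
    ∫ x in Set.Ioo (m - r) (m + r), Real.sqrt ((m + r - x) * (x - (m - r))) / (x + u)
      = Real.pi * r * w := by
  have himg : (fun θ => m + r * Real.cos θ) '' Set.Ioo 0 Real.pi = Set.Ioo (m - r) (m + r) := by
    ext x
    constructor
    · rintro ⟨θ, hθ, rfl⟩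
      have h1 : -1 < Real.cos θ := by
        have := Real.cos_lt_cos_of_nonneg_of_le_pi hθ.1.le le_rfl hθ.2
        simpa using this
      have h2 : Real.cos θ < 1 := by
        have := Real.cos_lt_cos_of_nonneg_of_le_pi le_rfl hθ.2.le hθ.1
        simpa using this
      constructor <;> simp only <;> nlinarith
    · rintro ⟨h1, h2⟩
      have k1 : -1 < (x - m) / r := by rw [lt_div_iff₀ hr]; linarith
      have k2 : (x - m) / r < 1 := by rw [div_lt_iff₀ hr]; linarith
      refine ⟨Real.arccos ((x - m) / r), ⟨Real.arccos_pos.2 k2, ?_⟩, ?_⟩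
      · refine lt_of_le_of_ne (Real.arccos_le_pi _) fun h => ?_
        rw [Real.arccos_eq_pi] at h
        linarith
      · simp only
        rw [Real.cos_arccos k1.le k2.le]
        field_simp
        ring
  have hinj : Set.InjOn (fun θ => m + r * Real.cos θ) (Set.Ioo 0 Real.pi) := by
    intro x hx y hy h
    have : Real.cos x = Real.cos y := by
      have : r * Real.cos x = r * Real.cos y := by simpa using h
      exact mul_left_cancel₀ hr.ne' this
    exact Real.injOn_cos ⟨hx.1.le, hx.2.le⟩ ⟨hy.1.le, hy.2.le⟩ this
  rw [← himg, integral_image_eq_integral_abs_deriv_smul (f' := fun θ => r * -Real.sin θ) measurableSet_Ioo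
    (fun θ _ => (((Real.hasDerivAt_cos θ).const_mul r).const_add m).hasDerivWithinAt) hinj]
  have : ∀ θ ∈ Set.Ioo 0 Real.pi, |r * -Real.sin θ| • (Real.sqrt ((m + r - (m + r * Real.cos θ)) *
      (m + r * Real.cos θ - (m - r))) / (m + r * Real.cos θ + u)) =
      2 * w * r * (Real.sin θ ^ 2 / (1 + 2 * w * Real.cos θ + w ^ 2)) := by
    intro θ hθ
    have hs := Real.sin_pos_of_pos_of_lt_pi hθ.1 hθ.2
    have e1 : (m + r - (m + r * Real.cos θ)) * (m + r * Real.cos θ - (m - r)) = (r * Real.sin θ) ^ 2 := by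
      linear_combination (-r ^ 2) * Real.sin_sq_add_cos_sq θ
    have e2 : m + r * Real.cos θ + u = r / (2 * w) * (1 + 2 * w * Real.cos θ + w ^ 2) := by
      have : m + r * Real.cos θ + u = (m + u) + r * Real.cos θ := by ring
      rw [this, hp]
      field_simp
      ring
    rw [e1, e2, Real.sqrt_sq (by positivity), mul_neg, abs_neg, abs_of_pos (by positivity), smul_eq_mul]
    by_cases h : 1 + 2 * w * Real.cos θ + w ^ 2 = 0
    · simp [h]
    · field_simp
  rw [setIntegral_congr_fun measurableSet_Ioo this, integral_const_mul, ← integral_Ioc_eq_integral_Ioo,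
    ← intervalIntegral.integral_of_le Real.pi_pos.le, mp_trig_cont hw hw1]
  ring

lemma mp_J_int {m r w u : ℝ} (hr : 0 < r) (hw : 0 < w) (hw1 : w ≤ 1)
    (hp : m + u = r / 2 * (w + 1 / w)) :
    IntegrableOn (fun x => Real.sqrt ((m + r - x) * (x - (m - r))) / (x + u))
      (Set.Ioo (m - r) (m + r)) := by
  by_contra h
  have h1 := mp_J hr hw hw1 hp
  rw [integral_undef h] at h1
  have : 0 < Real.pi * r * w := by positivity
  linarith

/-- the density of the Marchenko-Pastur law -/
noncomputable def mpDens (c x : ℝ) : ℝ :=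
  if (1 - Real.sqrt c) ^ 2 < x ∧ x < (1 + Real.sqrt c) ^ 2 then
          Real.sqrt (((1 + Real.sqrt c) ^ 2 - x) * (x - (1 - Real.sqrt c) ^ 2)) /
            (2 * Real.pi * x)
        else 0

lemma mpDens_eq {c : ℝ} (hc : 0 < c) : mpDens c = Set.indicator
    (Set.Ioo (1 + c - 2 * Real.sqrt c) (1 + c + 2 * Real.sqrt c))
    (fun x => 1 / (2 * Real.pi) * (Real.sqrt ((1 + c + 2 * Real.sqrt c - x) *
      (x - (1 + c - 2 * Real.sqrt c))) / (x + 0))) := by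
  have hs := Real.sq_sqrt hc.le
  have ha : (1 - Real.sqrt c) ^ 2 = 1 + c - 2 * Real.sqrt c := by linear_combination hs
  have hb : (1 + Real.sqrt c) ^ 2 = 1 + c + 2 * Real.sqrt c := by linear_combination hs
  ext x
  unfold mpDens
  rw [ha, hb, Set.indicator_apply]
  simp only [Set.mem_Ioo]
  split_ifs
  · rw [add_zero, div_mul_div_comm, one_mul]
  · rfl

lemma mp_exists_w {r p : ℝ} (hr : 0 < r) (hp : r ≤ p) :
    ∃ w, 0 < w ∧ w ≤ 1 ∧ p = r / 2 * (w + 1 / w) := by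
  have h0 : 0 ≤ p ^ 2 - r ^ 2 := by nlinarith
  have hs := Real.sq_sqrt h0
  have hs0 := Real.sqrt_nonneg (p ^ 2 - r ^ 2)
  set q := Real.sqrt (p ^ 2 - r ^ 2)
  have hq : q < p := by nlinarith
  have h1 : p - q ≤ r := by nlinarith
  have h2 : 0 < p - q := by linarith
  refine ⟨(p - q) / r, by positivity, by rw [div_le_one hr]; exact h1, ?_⟩
  field_simp
  nlinarith

lemma mp_w0 {c : ℝ} (hc : 0 < c) : ∃ w, 0 < w ∧ w ≤ 1 ∧ 1 + c + 0 = 2 * Real.sqrt c / 2 * (w + 1 / w) ∧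
    Real.sqrt c * w = min c 1 := by
  have hs := Real.mul_self_sqrt hc.le
  have hs0 := Real.sqrt_pos.2 hc
  set q := Real.sqrt c
  rcases le_total c 1 with h | h
  · refine ⟨q, hs0, Real.sqrt_le_one.2 h, ?_, by rw [min_eq_left h, hs]⟩
    field_simp
    nlinarith
  · refine ⟨1 / q, by positivity, ?_, ?_, ?_⟩
    · rw [div_le_one hs0]; exact Real.one_le_sqrt.2 h
    · field_simp
      nlinarith
    · rw [min_eq_right h]; field_simp

lemma mpDens_meas {c : ℝ} (hc : 0 < c) : Measurable (mpDens c) := by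
  rw [mpDens_eq hc]
  exact Measurable.indicator (by fun_prop) measurableSet_Ioo

lemma mpDens_nonneg (c x : ℝ) : 0 ≤ mpDens c x := by
  unfold mpDens
  split_ifs with h
  · have : 0 < x := lt_of_le_of_lt (sq_nonneg _) h.1
    positivity
  · exact le_rfl

lemma mpDens_integrable {c : ℝ} (hc : 0 < c) : Integrable (mpDens c) := by
  obtain ⟨w, h1, h2, h3, h4⟩ := mp_w0 hc
  rw [mpDens_eq hc, integrable_indicator_iff measurableSet_Ioo]
  exact (mp_J_int (by positivity) h1 h2 h3).const_mul _

lemma mpDens_integral {c : ℝ} (hc : 0 < c) : ∫ x, mpDens c x = min c 1 := by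
  obtain ⟨w, h1, h2, h3, h4⟩ := mp_w0 hc
  rw [mpDens_eq hc, integral_indicator measurableSet_Ioo, integral_const_mul,
    mp_J (by positivity) h1 h2 h3, ← h4]
  field_simp

lemma marchenkoPastur_eq (c : ℝ) : marchenkoPastur c =
    ENNReal.ofReal (max (1 - c) 0) • Measure.dirac 0 +
    volume.withDensity fun x => ENNReal.ofReal (mpDens c x) := rfl

lemma mp_isProb {c : ℝ} (hc : 0 < c) : IsProbabilityMeasure (marchenkoPastur c) := by
  constructor
  rw [marchenkoPastur_eq]
  simp only [Measure.coe_add, Pi.add_apply, Measure.smul_apply, measure_univ, smul_eq_mul, mul_one,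
    withDensity_apply _ MeasurableSet.univ, Measure.restrict_univ]
  rw [← ofReal_integral_eq_lintegral_ofReal (mpDens_integrable hc) (ae_of_all _ (mpDens_nonneg c)),
    mpDens_integral hc, ← ENNReal.ofReal_add (le_max_right _ _) (by positivity), ← ENNReal.ofReal_one]
  congr 1
  rcases le_total c 1 with h | h
  · rw [min_eq_left h, max_eq_left (by linarith)]; ring
  · rw [min_eq_right h, max_eq_right (by linarith)]; ring

lemma mp_supp (c : ℝ) (hc : 0 < c) : ∀ᵐ x ∂(marchenkoPastur c), 0 ≤ x := by
  rw [marchenkoPastur_eq, ae_add_measure_iff]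
  constructor
  · refine Measure.ae_smul_measure ?_ _
    rw [ae_dirac_iff (measurableSet_Ici (a := (0:ℝ)))]
  · rw [ae_withDensity_iff (mpDens_meas hc).ennreal_ofReal]
    refine ae_of_all _ fun x hx => ?_
    by_contra h
    apply hx
    have : mpDens c x = 0 := by
      unfold mpDens
      rw [if_neg]
      rintro ⟨h1, -⟩
      exact h (le_of_lt (lt_of_le_of_lt (sq_nonneg _) h1))
    simp [this]

lemma mp_integrable_inv {c : ℝ} (hc : 0 < c) {t : ℝ} (ht : 0 < t) :
    Integrable (fun x => 1 / (x + t)) (marchenkoPastur c) := by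
  have := mp_isProb hc
  refine Integrable.of_bound (C := 1 / t) (by
    exact (measurable_const.div (measurable_id.add_const t)).aestronglyMeasurable) ?_
  filter_upwards [mp_supp c hc] with x hx
  rw [Real.norm_eq_abs, abs_of_nonneg (by positivity)]
  gcongr
  linarith

lemma mp_stieltjes_law {c : ℝ} (hc : 0 < c) {t : ℝ} (ht : 0 < t) (M : ℝ)
    (hM : M = ∫ x, 1 / (x + t) ∂(marchenkoPastur c)) :
    0 ≤ M ∧ 1 - t * M - c * (M / (1 + M)) = 0 := by
  have hs := Real.mul_self_sqrt hc.le
  have hs0 := Real.sqrt_pos.2 hc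
  have hM0 : 0 ≤ M := by
    rw [hM]
    refine integral_nonneg_of_ae ?_
    filter_upwards [mp_supp c hc] with x hx
    simp only [Pi.zero_apply]
    positivity
  refine ⟨hM0, ?_⟩
  obtain ⟨w, h1, h2, h3⟩ := mp_exists_w (r := 2 * Real.sqrt c) (p := 1 + c + t) (by positivity)
    (by nlinarith [sq_nonneg (1 - Real.sqrt c)])
  have hIntg := mp_integrable_inv hc ht
  obtain ⟨w', h1', h2', h3', -⟩ := mp_w0 hc
  have hi1 := mp_J_int (m := 1 + c) (r := 2 * Real.sqrt c) (u := t) (by positivity) h1 h2 h3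
  have hj1 := mp_J (m := 1 + c) (r := 2 * Real.sqrt c) (u := t) (by positivity) h1 h2 h3
  have hkey : M = (1 - Real.sqrt c * w) / t := by
    rw [marchenkoPastur_eq] at hM hIntg
    rw [hM, integral_add_measure hIntg.left_of_add_measure hIntg.right_of_add_measure, integral_smul_measure,
      integral_dirac, integral_withDensity_eq_integral_toReal_smul (mpDens_meas hc).ennreal_ofReal
      (ae_of_all _ fun x => ENNReal.ofReal_lt_top)]
    have e1 : ∀ x, (ENNReal.ofReal (mpDens c x)).toReal • (1 / (x + t)) = 
        (1 / t) * mpDens c x - Set.indicator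
          (Set.Ioo (1 + c - 2 * Real.sqrt c) (1 + c + 2 * Real.sqrt c))
          (fun x => 1 / (2 * Real.pi * t) * (Real.sqrt ((1 + c + 2 * Real.sqrt c - x) *
          (x - (1 + c - 2 * Real.sqrt c))) / (x + t))) x := by
      intro x
      rw [ENNReal.toReal_ofReal (mpDens_nonneg c x), mpDens_eq hc, Set.indicator_apply, Set.indicator_apply]
      split_ifs with h
      · have : 0 < x := by nlinarith [h.1, sq_nonneg (1 - Real.sqrt c)]
        rw [smul_eq_mul, add_zero]
        field_simp
        ring
      · simp
    simp_rw [e1]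
    rw [integral_sub ((mpDens_integrable hc).const_mul _)
      ((integrable_indicator_iff measurableSet_Ioo).2 (hi1.const_mul _)), integral_const_mul,
      mpDens_integral hc, integral_indicator measurableSet_Ioo, integral_const_mul, hj1,
      ENNReal.toReal_ofReal (le_max_right _ _)]
    have e2 : max (1 - c) 0 + min c 1 = 1 := by
      rcases le_total c 1 with h | h
      · rw [min_eq_left h, max_eq_left (by linarith)]; ring
      · rw [min_eq_right h, max_eq_right (by linarith)]; ring
    rw [smul_eq_mul, zero_add]
    field_simp
    linear_combination e2
  set v := Real.sqrt c * w with hv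
  have hv1 : v * v - (1 + c + t) * v + c = 0 := by
    have h5 : (2 * Real.sqrt c / 2 * (w + 1 / w)) * (Real.sqrt c * w) =
        (Real.sqrt c * Real.sqrt c) * (w ^ 2 + 1) := by
      field_simp
    rw [h3, hv, h5]
    linear_combination -hs
  have hMt : t * M = 1 - v := by rw [hkey]; field_simp
  have hM1 : (1 + M) ≠ 0 := by positivity
  have hv2 : v = 1 - t * M := by linarith
  rw [hv2] at hv1
  have : (1 - t * M) * (1 + M) - c * M = 0 := by
    have : t * ((1 - t * M) * (1 + M) - c * M) = 0 := by linear_combination -hv1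
    rcases mul_eq_zero.1 this with h | h
    · exact absurd h ht.ne'
    · exact h
  field_simp
  linarith

end MPLaw

section Weak

/-- convergence of empirical averages together with integrability of the limit -/
def mpGood (μ : Measure ℝ) (lam : ∀ d : ℕ, Fin d → ℝ) (f : ℝ → ℝ) : Prop :=
  Integrable f μ ∧ Tendsto (fun d : ℕ => (1 / d : ℝ) * ∑ i : Fin d, f (lam d i)) atTop
    (nhds (∫ x, f x ∂μ))

variable {μ : Measure ℝ} [IsProbabilityMeasure μ] {lam : ∀ d : ℕ, Fin d → ℝ}

lemma mpGood.add' {f g : ℝ → ℝ} (hf : mpGood μ lam f) (hg : mpGood μ lam g) :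
    mpGood μ lam (fun x => f x + g x) := by
  refine ⟨hf.1.add hg.1, ?_⟩
  rw [integral_add hf.1 hg.1]
  refine (hf.2.add hg.2).congr fun d => ?_
  rw [Finset.sum_add_distrib, mul_add]

lemma mpGood.cmul {f : ℝ → ℝ} (a : ℝ) (hf : mpGood μ lam f) :
    mpGood μ lam (fun x => a * f x) := by
  refine ⟨hf.1.const_mul a, ?_⟩
  rw [integral_const_mul]
  refine (hf.2.const_mul a).congr fun d => ?_
  rw [← Finset.mul_sum]
  ring

lemma mpGood_const (a : ℝ) : mpGood μ lam (fun _ => a) := by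
  refine ⟨integrable_const _, ?_⟩
  refine tendsto_const_nhds.congr' ?_
  filter_upwards [eventually_gt_atTop 0] with d hd
  have hd' : (0:ℝ) < d := by exact_mod_cast hd
  simp
  field_simp

lemma mpGood.congr' {f g : ℝ → ℝ} (hμ : ∀ᵐ x ∂μ, 0 ≤ x) (hlam : ∀ d i, 0 ≤ lam d i)
    (hf : mpGood μ lam f) (h : ∀ x, 0 ≤ x → f x = g x) : mpGood μ lam g := by
  have hae : f =ᵐ[μ] g := by filter_upwards [hμ] with x hx using h x hx
  refine ⟨hf.1.congr hae, ?_⟩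
  rw [← integral_congr_ae hae]
  refine hf.2.congr fun d => ?_
  congr 1
  exact Finset.sum_congr rfl fun i _ => h _ (hlam d i)

lemma mpGood_approx {f : ℝ → ℝ} (hμ : ∀ᵐ x ∂μ, 0 ≤ x) (hlam : ∀ d i, 0 ≤ lam d i)
    (hf : Integrable f μ)
    (h : ∀ ε > 0, ∃ g k : ℝ → ℝ, mpGood μ lam g ∧ mpGood μ lam k ∧
      (∀ x, 0 ≤ x → |f x - g x| ≤ k x) ∧ ∫ x, k x ∂μ < ε) : mpGood μ lam f := by
  refine ⟨hf, ?_⟩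
  rw [Metric.tendsto_atTop]
  intro ε hε
  obtain ⟨g, k, hg, hk, hfg, hIntg⟩ := h (ε / 3) (by positivity)
  have h1 : |∫ x, f x ∂μ - ∫ x, g x ∂μ| ≤ ∫ x, k x ∂μ := by
    rw [← integral_sub hf hg.1]
    refine (abs_integral_le_integral_abs).trans ?_
    refine integral_mono_ae (hf.sub hg.1).abs hk.1 ?_
    filter_upwards [hμ] with x hx using hfg x hx
  have h2 := (Metric.tendsto_atTop.1 hg.2) (ε / 3) (by positivity)
  obtain ⟨N1, hN1⟩ := h2
  obtain ⟨N2, hN2⟩ := eventually_atTop.1 (hk.2.eventually (gt_mem_nhds hIntg))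
  refine ⟨max N1 N2, fun d hd => ?_⟩
  have k1 := hN1 d (le_trans (le_max_left _ _) hd)
  have k2 := hN2 d (le_trans (le_max_right _ _) hd)
  have k3 : |(1 / d : ℝ) * ∑ i : Fin d, f (lam d i) - (1 / d : ℝ) * ∑ i : Fin d, g (lam d i)| ≤
      (1 / d : ℝ) * ∑ i : Fin d, k (lam d i) := by
    rw [← mul_sub, ← Finset.sum_sub_distrib, abs_mul, abs_of_nonneg (by positivity)]
    gcongr
    exact (Finset.abs_sum_le_sum_abs _ _).trans (Finset.sum_le_sum fun i _ => hfg _ (hlam d i))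
  rw [Real.dist_eq] at k1 ⊢
  rw [abs_le] at h1 k3
  rw [abs_lt] at k1 ⊢
  constructor <;> linarith [h1.1, h1.2, k3.1, k3.2, k1.1, k1.2]

lemma mp_phi_meas (t : ℝ) : Measurable (fun x : ℝ => 1 / (x + t)) :=
  measurable_const.div (measurable_id.add_const t)

lemma mpGood_pow (hμ : ∀ᵐ x ∂μ, 0 ≤ x) (hlam : ∀ d i, 0 ≤ lam d i)
    (hφ : ∀ q : ℚ, 0 < q → mpGood μ lam (fun x => 1 / (x + (q : ℝ)))) (k : ℕ) :
    mpGood μ lam (fun x => (1 / (x + 1)) ^ (k + 1)) ∧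
      ∀ q : ℚ, 1 < q → mpGood μ lam (fun x => (1 / (x + 1)) ^ k * (1 / (x + (q : ℝ)))) := by
  induction k with
  | zero =>
    refine ⟨by simpa using hφ 1 one_pos, fun q hq => by simpa using hφ q (by linarith)⟩
  | succ k ih =>
    have hb : ∀ q : ℚ, 1 < q →
        mpGood μ lam (fun x => (1 / (x + 1)) ^ (k + 1) * (1 / (x + (q : ℝ)))) := by
      intro q hq
      have hq' : (1:ℝ) < q := by exact_mod_cast hq
      have := (ih.1.add' ((ih.2 q hq).cmul (-1))).cmul (1 / ((q : ℝ) - 1))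
      refine this.congr' hμ hlam fun x hx => ?_
      have h1 : (q : ℝ) - 1 ≠ 0 := by linarith
      have h2 : x + 1 ≠ 0 := by linarith
      have h3 : x + (q:ℝ) ≠ 0 := by linarith
      rw [pow_succ]
      field_simp
      ring
    refine ⟨?_, hb⟩
    refine mpGood_approx hμ hlam ?_ ?_
    · refine Integrable.of_bound (C := 1) ((mp_phi_meas 1).pow_const _).aestronglyMeasurable ?_
      filter_upwards [hμ] with x hx
      rw [Real.norm_eq_abs, abs_of_nonneg (by positivity)]
      apply pow_le_one₀ (by positivity)
      rw [div_le_one (by positivity)]; linarith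
    · intro ε hε
      obtain ⟨δ, hδ0, hδ⟩ := exists_rat_btwn hε
      have hδ0' : 0 < δ := by exact_mod_cast hδ0
      refine ⟨_, fun _ => (δ : ℝ), hb (1 + δ) (by linarith), mpGood_const _, ?_, by simpa using hδ⟩
      intro x hx
      push_cast
      have e : (1 / (x + 1)) ^ (k + 1 + 1) - (1 / (x + 1)) ^ (k + 1) * (1 / (x + (1 + (δ:ℝ)))) =
        (1 / (x + 1)) ^ (k + 1 + 1) * (1 / (x + (1 + δ))) * δ := by
        rw [pow_succ _ (k + 1)]
        have h2 : x + 1 ≠ 0 := by linarith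
        have h3 : x + (1 + (δ:ℝ)) ≠ 0 := by linarith
        field_simp
        ring
      rw [e, abs_of_nonneg (by positivity)]
      apply mul_le_of_le_one_left hδ0.le
      apply mul_le_one₀ _ (by positivity)
      · rw [div_le_one (by positivity)]; linarith
      · apply pow_le_one₀ (by positivity)
        rw [div_le_one (by positivity)]; linarith

lemma mpGood_poly (hμ : ∀ᵐ x ∂μ, 0 ≤ x) (hlam : ∀ d i, 0 ≤ lam d i)
    (hφ : ∀ q : ℚ, 0 < q → mpGood μ lam (fun x => 1 / (x + (q : ℝ)))) (p : Polynomial ℝ) :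
    mpGood μ lam (fun x => p.eval (1 / (x + 1))) := by
  induction p using Polynomial.induction_on' with
  | add p q hp hq => simpa only [Polynomial.eval_add] using hp.add' hq
  | monomial n a =>
    simp only [Polynomial.eval_monomial]
    cases n with
    | zero => simpa using mpGood_const (μ := μ) (lam := lam) a
    | succ k => exact (mpGood_pow hμ hlam hφ k).1.cmul a

lemma mpGood_cont (hμ : ∀ᵐ x ∂μ, 0 ≤ x) (hlam : ∀ d i, 0 ≤ lam d i)
    (hφ : ∀ q : ℚ, 0 < q → mpGood μ lam (fun x => 1 / (x + (q : ℝ))))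
    (H : ℝ → ℝ) (hH : ContinuousOn H (Set.Icc 0 1)) (hIntg : Integrable (fun x => H (1 / (x + 1))) μ) :
    mpGood μ lam (fun x => H (1 / (x + 1))) := by
  refine mpGood_approx hμ hlam hIntg fun ε hε => ?_
  obtain ⟨p, hp⟩ := exists_polynomial_near_of_continuousOn 0 1 H hH (ε / 2) (by positivity)
  refine ⟨_, fun _ => ε / 2, mpGood_poly hμ hlam hφ p, mpGood_const _, ?_, by simp; linarith⟩
  intro x hx
  rw [abs_sub_comm]
  refine (hp _ ⟨by positivity, ?_⟩).le
  rw [div_le_one (by positivity)]; linarith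

lemma mp_weak (hμ : ∀ᵐ x ∂μ, 0 ≤ x) (hlam : ∀ d i, 0 ≤ lam d i)
    (hφ : ∀ q : ℚ, 0 < q → mpGood μ lam (fun x => 1 / (x + (q : ℝ))))
    (f : BoundedContinuousFunction ℝ ℝ) : mpGood μ lam f := by
  have hy : ∀ x : ℝ, 0 ≤ x → 0 < 1 / (x + 1) ∧ 1 / (x + 1) ≤ 1 := fun x hx =>
    ⟨by positivity, by rw [div_le_one (by positivity)]; linarith⟩
  refine mpGood_approx hμ hlam (f.integrable μ) fun ε hε => ?_
  have hlim : Tendsto (fun n : ℕ => ∫ x, (1 - 1 / (x + 1)) ^ n ∂μ) atTop (nhds (∫ x : ℝ, (0:ℝ) ∂μ)) := by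
    refine tendsto_integral_of_dominated_convergence (fun _ => 1)
      (fun n => ((measurable_const.sub (mp_phi_meas 1)).pow_const n).aestronglyMeasurable)
      (integrable_const _) (fun n => ?_) ?_
    · filter_upwards [hμ] with x hx
      have := hy x hx
      rw [Real.norm_eq_abs, abs_of_nonneg (pow_nonneg (by linarith) n)]
      exact pow_le_one₀ (by linarith) (by linarith)
    · filter_upwards [hμ] with x hx
      have := hy x hx
      exact tendsto_pow_atTop_nhds_zero_of_lt_one (by linarith) (by linarith)
  rw [integral_zero] at hlim
  have hC0 : 0 < ‖f‖ + 1 := by positivity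
  obtain ⟨n, hn⟩ := (hlim.eventually (gt_mem_nhds (show 0 < ε / (‖f‖ + 1) by positivity))).exists
  let H : ℝ → ℝ := fun y => f (1 / y - 1) * (1 - (1 - y) ^ n)
  have hHx : ∀ x, 0 ≤ x → H (1 / (x + 1)) = f x * (1 - (1 - 1 / (x + 1)) ^ n) := by
    intro x hx
    simp only [H]
    rw [one_div_one_div, add_sub_cancel_right]
  have hHc : ContinuousOn H (Set.Icc 0 1) := by
    intro y hy
    rcases hy.1.eq_or_lt with h0 | h0
    · subst h0
      apply ContinuousAt.continuousWithinAt
      have h1 : Tendsto (fun y : ℝ => 1 - (1 - y) ^ n) (nhds 0) (nhds 0) := by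
        have : Continuous (fun y : ℝ => 1 - (1 - y) ^ n) := by fun_prop
        simpa using this.tendsto 0
      have h2 : H 0 = 0 := by simp [H]
      unfold ContinuousAt
      rw [h2]
      exact bdd_le_mul_tendsto_zero' ‖f‖ (Eventually.of_forall fun y => f.norm_coe_le_norm _) h1
    · apply ContinuousAt.continuousWithinAt
      have h1 : ContinuousAt (fun y : ℝ => 1 / y - 1) y :=
        (continuousAt_const.div continuousAt_id h0.ne').sub continuousAt_const
      exact (f.continuous.continuousAt.comp h1).mul (by fun_prop)
  have hHi : Integrable (fun x => H (1 / (x + 1))) μ := by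
    have hm : AEStronglyMeasurable (fun x => H (1 / (x + 1))) μ := by
      have h1 : Measurable (fun x => f x * (1 - (1 - 1 / (x + 1)) ^ n)) :=
        f.continuous.measurable.mul
          (measurable_const.sub ((measurable_const.sub (mp_phi_meas 1)).pow_const n))
      refine h1.aestronglyMeasurable.congr ?_
      filter_upwards [hμ] with x hx using (hHx x hx).symm
    refine Integrable.of_bound (C := ‖f‖ * 1) hm ?_
    filter_upwards [hμ] with x hx
    have h3 := hy x hx
    rw [hHx x hx, norm_mul]
    have h4 : 0 ≤ (1 - 1 / (x + 1)) ^ n := pow_nonneg (by linarith) n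
    have h5 : (1 - 1 / (x + 1)) ^ n ≤ 1 := pow_le_one₀ (by linarith) (by linarith)
    gcongr
    · exact f.norm_coe_le_norm x
    · rw [Real.norm_eq_abs, abs_le]
      constructor <;> linarith
  have hk : mpGood μ lam (fun x => (‖f‖ + 1) * (1 - 1 / (x + 1)) ^ n) := by
    have := mpGood_poly hμ hlam hφ (((1 : Polynomial ℝ) - Polynomial.X) ^ n)
    simp only [Polynomial.eval_pow, Polynomial.eval_sub, Polynomial.eval_one, Polynomial.eval_X] at this
    exact this.cmul _
  refine ⟨_, _, mpGood_cont hμ hlam hφ H hHc hHi, hk, ?_, ?_⟩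
  · intro x hx
    have h3 := hy x hx
    have h4 : 0 ≤ (1 - 1 / (x + 1)) ^ n := pow_nonneg (by linarith) n
    rw [hHx x hx]
    have e : f x - f x * (1 - (1 - 1 / (x + 1)) ^ n) = f x * (1 - 1 / (x + 1)) ^ n := by ring
    rw [e, abs_mul, abs_of_nonneg h4]
    have := f.norm_coe_le_norm x
    rw [Real.norm_eq_abs] at this
    gcongr
    linarith
  · rw [integral_const_mul, mul_comm]
    rwa [lt_div_iff₀ hC0] at hn

end Weak

section Link
open Matrix ComplexOrder

lemma mpR_trace_eigen {n m : Type*} [Fintype n] [DecidableEq n] [Fintype m] [DecidableEq m]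
    {t : ℝ} (ht : 0 < t) (D : ℝ) (hD : 0 < D) (V : Matrix n m ℂ) :
    (mpR t D V).trace.re = ∑ i, 1 / ((isHermitian_mul_conjTranspose_self V).eigenvalues i / D + t) := by
  have htD : 0 < t * D := by positivity
  have hps := posSemidef_self_mul_conjTranspose V
  have hcc : (1 / Real.sqrt D) * (1 / Real.sqrt D) = 1 / D := by
    rw [div_mul_div_comm, one_mul, Real.mul_self_sqrt hD.le]
  have e1 : ((((1 / Real.sqrt D : ℝ) : ℂ) • V) * (((1 / Real.sqrt D : ℝ) : ℂ) • V)ᴴ) =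
      ((1 / D : ℝ) : ℂ) • (V * Vᴴ) := by
    rw [conjTranspose_smul, Matrix.smul_mul, Matrix.mul_smul, smul_smul, ← hcc]
    simp
  have hDC : (D : ℂ) ≠ 0 := by exact_mod_cast hD.ne'
  have e2 : mpR t D V = (D : ℂ) • mpRes (t * D) (V * Vᴴ) := by
    unfold mpR
    rw [e1]
    unfold mpRes
    apply Matrix.inv_eq_right_inv
    have h1 : ((1 / D : ℝ) : ℂ) • (V * Vᴴ) + (t : ℂ) • (1 : Matrix n n ℂ) =
        ((1 / D : ℝ) : ℂ) • (V * Vᴴ + ((t * D : ℝ) : ℂ) • 1) := by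
      rw [smul_add, smul_smul]
      congr 2
      push_cast
      field_simp
    rw [h1, Matrix.smul_mul, Matrix.mul_smul, smul_smul, Matrix.mul_nonsing_inv]
    · push_cast
      rw [one_div_mul_cancel hDC, one_smul]
    · exact (mp_posDef htD hps).det_pos.ne'.isUnit
  rw [e2, trace_smul, smul_eq_mul, Complex.re_ofReal_mul, mpRes_trace htD hps, Finset.mul_sum]
  refine Finset.sum_congr rfl fun i _ => ?_
  have h0 := hps.eigenvalues_nonneg i
  have : (hps.1.eigenvalues i / D + t) = (hps.1.eigenvalues i + t * D) / D := by
    field_simp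
  rw [this, one_div_div, mul_one_div]

lemma mp_eig_nonneg {n m : Type*} [Fintype n] [DecidableEq n] [Fintype m] [DecidableEq m]
    (V : Matrix n m ℂ) (i : n) : 0 ≤ (isHermitian_mul_conjTranspose_self V).eigenvalues i :=
  (posSemidef_self_mul_conjTranspose V).eigenvalues_nonneg i

end Link

/-- **Marčenko–Pastur theorem, almost sure weak convergence.**  Let `s_d ∼ c·d` and let `X_d` be
`d × s_d` random matrices whose entries (over all `d`) form an i.i.d. family of standard complex
Gaussian variables; set `W_d = X_d X_d*`.  Then, almost surely, the empirical eigenvalue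
distribution of `W_d/d` converges weakly to `π_c`: for every bounded continuous `f : ℝ → ℝ`,
`(1/d) Σ_i f(λ_i(W_d)/d) → ∫ f dπ_c`. -/
theorem marchenko_pastur_strong_law
    {Ω : Type*} [MeasurableSpace Ω] (P : Measure Ω) [IsProbabilityMeasure P]
    (c : ℝ) (hc : 0 < c) (s : ℕ → ℕ) (hs : ∀ d, 0 < s d)
    (hsc : Tendsto (fun d : ℕ => (s d : ℝ) / d) atTop (nhds c))
    (X : ∀ d : ℕ, Ω → Matrix (Fin d) (Fin (s d)) ℂ)
    (hindep : iIndepFun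
      (fun (q : Σ d : ℕ, Fin d × Fin (s d)) ω => X q.1 ω q.2.1 q.2.2) P)
    (hgauss : ∀ q : Σ d : ℕ, Fin d × Fin (s d),
      Measure.map (fun ω => X q.1 ω q.2.1 q.2.2) P = stdComplexGaussian) :
    ∀ᵐ ω ∂P, ∀ f : BoundedContinuousFunction ℝ ℝ,
      Tendsto (fun d : ℕ => (1 / d : ℝ) * ∑ i : Fin d,
          f ((Matrix.isHermitian_mul_conjTranspose_self (X d ω)).eigenvalues i / d))
        atTop (nhds (∫ x, f x ∂(marchenkoPastur c))) := by
  have hprob := mp_isProb hc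
  have hae : ∀ᵐ ω ∂P, ∀ q : ℚ, 0 < q →
      Tendsto (fun d : ℕ => (mpR (q : ℝ) d (X d ω)).trace.re / d) atTop
        (nhds (∫ x, 1 / (x + (q : ℝ)) ∂(marchenkoPastur c))) := by
    rw [ae_all_iff]
    intro q
    by_cases hq : 0 < q
    · have hq' : (0:ℝ) < q := by exact_mod_cast hq
      obtain ⟨h1, h2⟩ := mp_stieltjes_law hc hq' _ rfl
      filter_upwards [mp_stieltjes_ae P c hc s hsc X hindep hgauss q hq' _ h1 h2] with ω hω _ using hω
    · exact ae_of_all _ fun ω h => absurd h hq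
  filter_upwards [hae] with ω hω f
  have hlam : ∀ d (i : Fin d), 0 ≤
      (Matrix.isHermitian_mul_conjTranspose_self (X d ω)).eigenvalues i / d := fun d i =>
    div_nonneg (mp_eig_nonneg (X d ω) i) (Nat.cast_nonneg d)
  refine (mp_weak (μ := marchenkoPastur c) (lam := fun d i =>
    (Matrix.isHermitian_mul_conjTranspose_self (X d ω)).eigenvalues i / d)
    (mp_supp c hc) hlam (fun q hq => ?_) f).2
  have hq' : (0:ℝ) < q := by exact_mod_cast hq
  refine ⟨mp_integrable_inv hc hq', ?_⟩
  refine (hω q hq).congr' ?_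
  filter_upwards [eventually_gt_atTop 0] with d hd
  have hd' : (0:ℝ) < d := by exact_mod_cast hd
  rw [mpR_trace_eigen hq' d hd', div_eq_inv_mul, one_div]
end
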